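/- arXiv:1808.04805 — 3 statements merged into one kernel-verified Lean document; each statement's English description precedes it below -/
import Mathlib

section
/- Let k be a field, n > 1 and d > 1 natural numbers, and let I be an ideal of k[x_1,…,x_n] generated by polynomials of total degree at most d. Let r ≤ n and suppose that the only polynomial in I involving only the variables x_1,…,x_r is 0. If I is prime up to (2nd)^(n·2^(4n+8)), then for every irreducible polynomial f involving only the variables x_1,…,x_r and of total degree at most (n−1)·2^(n·2^(2n+6))·d^(n·2^(3n+2)), the quotient ideal satisfies I : (f) = I. -/
/-!
Let `E` bound the degrees of `f` and of the generators of `I`. The colon ideal `I : (f)` is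
generated by polynomials of degree at most `(2E)^(2^n)`, which is at most the bound up to which `I`
is prime. As `f ∉ I` (it is nonzero and involves only `x₁, …, x_r`), each of these generators lies
in `I`, and hence so does `I : (f)`.

The degree bound is an instance of Hermann's theorem (`kerGeneratedIn_totalDegree_add_le`): over
`k[x₁, …, x_n]` the solutions of a homogeneous linear system of `p` equations with coefficients of
degree at most `d` are generated by solutions of degree at most `(2pd)^(2^n)`, whatever the number
of unknowns. It is applied to the single equation `f g + Σ aᵢ sᵢ = 0`, with `sᵢ` among the
generators of `I`.

Over an infinite field Hermann's theorem follows by induction on `n`. Let `Δ` be a nonzero minor of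
maximal size and, for its rows, of maximal degree, so that `deg Δ ≤ q := pd`. Cramer's rule gives
solutions of degree at most `q`, each with `Δ` in one coordinate outside the columns of the minor.
After a linear change of coordinates `Δ` is monic up to a scalar in one variable, so by division
every solution is, modulo the Cramer solutions, of degree less than `deg Δ` in that variable.
Comparing coefficients turns such solutions into the solutions of a system of `p (deg Δ + d)`
equations in one variable fewer, still with coefficients of degree at most `d`: the bound `q`
becomes `2q²`, and `2 (2q²) = (2q)²`. Lifting a solution back adds less than `q` to its degree; the
induction absorbs this by proving the sharper bound `(2q)^(2^n) - q`.

A general field `k` is embedded into its algebraic closure `K`. A `k`-linear functional `K → k` that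
takes `1` to `1`, applied to coefficients, turns generation by solutions of bounded degree over `K`
into the same over `k`: a `K[x]`-combination of solutions is a `k[x]`-combination of their constant
multiples.
-/

open Matrix
open scoped Polynomial

section Minors

variable {R ρ γ κ : Type*} [CommRing R] [Fintype κ] [DecidableEq κ]

theorem det_mul_det_fromBlocks_unit (M : Matrix κ κ R) (u v : κ → R) (a : R) :
    M.det * (fromBlocks M (replicateCol Unit u) (replicateRow Unit v) (of fun _ _ => a)).det =
      M.det * (M.det * a - v ⬝ᵥ M.cramer u) := by
  have elimination :
      fromBlocks M (replicateCol Unit u) (replicateRow Unit v) (of fun _ _ => a) *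
        fromBlocks 1 (-replicateCol Unit (M.cramer u)) 0 (of fun _ _ => M.det) =
      fromBlocks M 0 (replicateRow Unit v) (of fun _ _ => M.det * a - v ⬝ᵥ M.cramer u) := by
    rw [fromBlocks_multiply]
    congr 1
    · simp
    · ext i j
      have := congrFun (M.mulVec_cramer u) i
      simp_all [Matrix.mul_apply, mulVec, dotProduct, mul_comm]
    · simp
    · ext i j
      simp [Matrix.mul_apply, dotProduct, mul_comm, sub_eq_neg_add]
  simpa [mul_comm] using congrArg det elimination

theorem injective_of_det_submatrix_ne_zero {A : Matrix ρ γ R} {e : κ → ρ} {c : κ → γ}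
    (h : (A.submatrix e c).det ≠ 0) : e.Injective := fun i i' hi => by
  by_contra hne
  exact h (det_zero_of_row_eq hne (funext fun l => by simp [hi]))

/-- The minor of `A` with rows `e` and columns `c` is nonzero, and every larger minor vanishes: its
size `s` is the rank of `A` over the fraction field when `R` is a domain. -/
structure IsMaximalMinor {s : ℕ} (A : Matrix ρ γ R) (e : Fin s → ρ) (c : Fin s → γ) : Prop where
  det_ne_zero : (A.submatrix e c).det ≠ 0
  det_succ_eq_zero (e' : Fin (s + 1) → ρ) (c' : Fin (s + 1) → γ) : (A.submatrix e' c').det = 0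

theorem exists_isMaximalMinor [Nontrivial R] [Finite ρ] [Finite γ] (A : Matrix ρ γ R)
    (deg : R → ℕ) :
    ∃ (s : ℕ) (e : Fin s → ρ) (c : Fin s → γ), IsMaximalMinor A e c ∧
      ∀ c', (A.submatrix e c').det ≠ 0 →
        deg (A.submatrix e c').det ≤ deg (A.submatrix e c).det := by
  classical
  have : Fintype ρ := Fintype.ofFinite ρ
  have hvanish : ∃ t, ∀ (e : Fin t → ρ) (c : Fin t → γ), (A.submatrix e c).det = 0 := by
    refine ⟨Fintype.card ρ + 1, fun e c => ?_⟩
    by_contra h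
    have := Fintype.card_le_of_injective e (injective_of_det_submatrix_ne_zero h)
    simp at this
  obtain ⟨s, hs⟩ : ∃ s, Nat.find hvanish = s + 1 :=
    Nat.exists_eq_succ_of_ne_zero fun h => by simpa using (Nat.find_eq_zero hvanish).mp h
  have hsucc := Nat.find_spec hvanish
  rw [hs] at hsucc
  have hnonvanish := Nat.find_min hvanish (m := s) (by omega)
  push Not at hnonvanish
  obtain ⟨e, c₀, hc₀⟩ := hnonvanish
  obtain ⟨c, hc, hmax⟩ := Set.exists_max_image {c : Fin s → γ | (A.submatrix e c).det ≠ 0}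
    (fun c => deg (A.submatrix e c).det) (Set.toFinite _) ⟨c₀, hc₀⟩
  exact ⟨s, e, c, ⟨hc, hsucc⟩, hmax⟩

namespace IsMaximalMinor

variable {s : ℕ} {A : Matrix ρ γ R} {e : Fin s → ρ} {c : Fin s → γ}

theorem map {R' F : Type*} [CommRing R'] [FunLike F R R'] [RingHomClass F R R']
    (h : IsMaximalMinor A e c) {ψ : F} (hψ : Function.Injective ψ) :
    IsMaximalMinor (A.map ψ) e c where
  det_ne_zero hdet :=
    h.det_ne_zero <| hψ <| ((ψ : R →+* R').map_det _).trans (hdet.trans (map_zero ψ).symm)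
  det_succ_eq_zero e' c' :=
    ((ψ : R →+* R').map_det (A.submatrix e' c')).symm.trans <| by
      simp [h.det_succ_eq_zero e' c']

theorem card_le [Fintype ρ] (h : IsMaximalMinor A e c) : s ≤ Fintype.card ρ := by
  simpa using Fintype.card_le_of_injective e (injective_of_det_submatrix_ne_zero h.det_ne_zero)

theorem injective_cols (h : IsMaximalMinor A e c) : c.Injective :=
  injective_of_det_submatrix_ne_zero (A := Aᵀ) (e := c) (c := e) <| by
    rw [← transpose_submatrix, det_transpose]
    exact h.det_ne_zero

theorem det_mul_apply [IsDomain R] (h : IsMaximalMinor A e c) (i : ρ) (j : γ) :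
    (A.submatrix e c).det * A i j =
      (fun l => A i (c l)) ⬝ᵥ (A.submatrix e c).cramer (fun l => A (e l) j) := by
  have blocks : fromBlocks (A.submatrix e c) (replicateCol Unit fun l => A (e l) j)
      (replicateRow Unit fun l => A i (c l)) (of fun _ _ => A i j) =
      A.submatrix (Sum.elim e fun _ => i) (Sum.elim c fun _ => j) := by
    ext (_ | _) (_ | _) <;> rfl
  have hborder : (A.submatrix (Sum.elim e fun _ : Unit => i)
      (Sum.elim c fun _ : Unit => j)).det = 0 := by
    let ε : Fin (s + 1) ≃ Fin s ⊕ Unit := Fintype.equivOfCardEq (by simp)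
    rw [← det_submatrix_equiv_self ε, submatrix_submatrix]
    exact h.det_succ_eq_zero _ _
  have hdet := det_mul_det_fromBlocks_unit (A.submatrix e c) (fun l => A (e l) j)
    (fun l => A i (c l)) (A i j)
  rw [blocks, hborder, mul_zero, eq_comm, mul_eq_zero, or_iff_right h.det_ne_zero] at hdet
  exact sub_eq_zero.mp hdet

end IsMaximalMinor

end Minors

section Cramer

variable {R ρ γ κ : Type*} [CommRing R] [Fintype κ] [DecidableEq κ] [DecidableEq γ]
  {A : Matrix ρ γ R} {e : κ → ρ} {c : κ → γ}

/-- The combination of the standard basis vectors `j` and `c l` that solves the equations `e` of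
`A *ᵥ y = 0` by Cramer's rule. For a maximal minor, it solves all of them. -/
def cramerSolution (A : Matrix ρ γ R) (e : κ → ρ) (c : κ → γ) (j : γ) : γ → R :=
  (A.submatrix e c).det • Pi.single j 1 -
    ∑ l, (A.submatrix e c).cramer (fun i => A (e i) j) l • Pi.single (c l) 1

theorem cramerSolution_apply_of_notMem_range {i : γ} (hi : i ∉ Set.range c) (j : γ) :
    cramerSolution A e c j i = if i = j then (A.submatrix e c).det else 0 := by
  have : ∀ l, i ≠ c l := fun l h => hi ⟨l, h.symm⟩
  simp [cramerSolution, Pi.single_apply, this]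

theorem cramerSolution_apply_col (hc : c.Injective) {j : γ} (hj : j ∉ Set.range c) (l : κ) :
    cramerSolution A e c j (c l) = -(A.submatrix e (Function.update c l j)).det := by
  have hne : c l ≠ j := fun h => hj ⟨l, h⟩
  have hupdate : (A.submatrix e c).updateCol l (fun i => A (e i) j) =
      A.submatrix e (Function.update c l j) := by
    ext i l'
    rcases eq_or_ne l' l with rfl | h
    · simp
    · simp [h]
  simp [cramerSolution, hne, Pi.single_apply, hc.eq_iff, cramer_apply, hupdate]

theorem cramerSolution_col (l : κ) : cramerSolution A e c (c l) = 0 := by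
  have := cramer_row_self (A.submatrix e c) (fun i => A (e i) (c l)) l fun _ => rfl
  simp [cramerSolution, this, Pi.single_apply, ite_smul]

theorem det_smul_eq_sum_smul_cramerSolution [Fintype γ] {y : γ → R} (hy : A *ᵥ y = 0) :
    (A.submatrix e c).det • y = ∑ j, y j • cramerSolution A e c j := by
  have hcols : ∑ j, y j • (fun i => A (e i) j) = 0 := by
    ext i
    simpa [mulVec, dotProduct, mul_comm] using congrFun hy (e i)
  have hcramer (l : κ) : ∑ j, y j * (A.submatrix e c).cramer (fun i => A (e i) j) l = 0 := by
    simpa using congrFun (congrArg (A.submatrix e c).cramer hcols) l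
  have hcorrection : ∑ j, y j • ∑ l,
      (A.submatrix e c).cramer (fun i => A (e i) j) l • (Pi.single (c l) 1 : γ → R) = 0 := by
    simp only [Finset.smul_sum, smul_smul]
    rw [Finset.sum_comm]
    simp [← Finset.sum_smul, hcramer]
  simp only [cramerSolution, smul_sub, Finset.sum_sub_distrib, hcorrection, sub_zero]
  ext i
  simp [mul_comm, Finset.sum_apply, Pi.single_apply]

theorem IsMaximalMinor.mulVec_cramerSolution [IsDomain R] [Fintype γ] {s : ℕ} {e : Fin s → ρ}
    {c : Fin s → γ} (h : IsMaximalMinor A e c) (j : γ) : A *ᵥ cramerSolution A e c j = 0 := by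
  ext i
  simp [cramerSolution, mulVec_sub, mulVec_smul, mulVec_sum, h.det_mul_apply i j, dotProduct,
    mul_comm]

end Cramer

section KerIn

variable {R R' ρ γ : Type*} [CommRing R] [CommRing R'] [Fintype γ]

/-- The solutions of the homogeneous system `A *ᵥ w = 0` with all coordinates in `B`. -/
def kerIn (A : Matrix ρ γ R) (B : Set R) : Set (γ → R) :=
  {w | A *ᵥ w = 0 ∧ ∀ j, w j ∈ B}

/-- The solutions of the homogeneous system `A *ᵥ y = 0` with coordinates in `B` generate the module
of all solutions. -/
def KerGeneratedIn (A : Matrix ρ γ R) (B : Set R) : Prop :=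
  ∀ y, A *ᵥ y = 0 → y ∈ Submodule.span R (kerIn A B)

theorem KerGeneratedIn.mono {A : Matrix ρ γ R} {B B' : Set R} (h : KerGeneratedIn A B)
    (hB : B ⊆ B') : KerGeneratedIn A B' := fun y hy =>
  Submodule.span_mono (show kerIn A B ⊆ kerIn A B' from fun _ hw => ⟨hw.1, fun j => hB (hw.2 j)⟩)
    (h y hy)

theorem map_mulVec_comp_eq_zero {A : Matrix ρ γ R} {y : γ → R} (hy : A *ᵥ y = 0) (f : R →+* R') :
    A.map f *ᵥ (f ∘ y) = 0 :=
  funext fun i => by simp [← RingHom.map_mulVec, hy]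

theorem KerGeneratedIn.of_map_ringEquiv {A : Matrix ρ γ R} {ψ : R ≃+* R'} {B : Set R}
    (h : KerGeneratedIn (A.map ψ) (ψ.symm ⁻¹' B)) : KerGeneratedIn A B := by
  intro y hy
  suffices hspan : ∀ w ∈ Submodule.span R' (kerIn (A.map ψ) (ψ.symm ⁻¹' B)),
      ψ.symm ∘ w ∈ Submodule.span R (kerIn A B) by
    convert hspan _ (h (ψ ∘ y) (map_mulVec_comp_eq_zero hy (ψ : R →+* R')))
    ext; simp
  intro w hw
  induction hw using Submodule.span_induction with
  | mem w hw =>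
    refine Submodule.subset_span ⟨?_, hw.2⟩
    have := map_mulVec_comp_eq_zero hw.1 (ψ.symm : R' →+* R)
    rwa [Matrix.map_map, show ⇑(ψ.symm : R' →+* R) ∘ ψ = id from ψ.symm_comp_self, A.map_id] at this
  | zero => simp [Function.comp_def, ← Pi.zero_def]
  | add w₁ w₂ _ _ h₁ h₂ =>
    convert add_mem h₁ h₂
    ext; simp
  | smul t w _ hw =>
    convert Submodule.smul_mem _ (ψ.symm t) hw
    ext; simp

theorem KerGeneratedIn.of_map_algebraMap [Algebra R R'] {A : Matrix ρ γ R} {l : R' →ₗ[R] R}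
    (hl : l 1 = 1) {G B' : Set R'} {B : Set R} (hG : Submodule.span R G = ⊤)
    (hGB : ∀ g ∈ G, ∀ b ∈ B', g * b ∈ B') (hB : ∀ b ∈ B', l b ∈ B)
    (h : KerGeneratedIn (A.map (algebraMap R R')) B') : KerGeneratedIn A B := by
  intro y hy
  have hspan := h _ (map_mulVec_comp_eq_zero hy (algebraMap R R'))
  rw [← Submodule.restrictScalars_mem R, ← Submodule.span_smul_of_span_eq_top hG] at hspan
  have hmem := Submodule.mem_map_of_mem (f := l.compLeft γ) hspan
  rw [Submodule.map_span] at hmem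
  have hly : l.compLeft γ (algebraMap R R' ∘ y) = y := by
    ext j
    simp [Algebra.algebraMap_eq_smul_one, hl]
  rw [hly] at hmem
  refine Submodule.span_mono ?_ hmem
  rintro _ ⟨_, ⟨g, hg, w, hw, rfl⟩, rfl⟩
  refine ⟨?_, fun j => hB _ (hGB g hg _ (hw.2 j))⟩
  have hgw : A.map (algebraMap R R') *ᵥ (g • w) = 0 := by rw [mulVec_smul, hw.1, smul_zero]
  ext i
  simpa [mulVec, dotProduct, ← Algebra.smul_def] using congrArg l (congrFun hgw i)

end KerIn

section Reduction

open Polynomial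

variable {T ρ γ : Type*} [CommRing T]

theorem exists_degree_sub_mul_lt [Nontrivial T] {Δ : T[X]} (hΔ : IsUnit Δ.leadingCoeff) (p : T[X]) :
    ∃ q, (p - q * Δ).degree < Δ.degree := by
  obtain ⟨u, hu⟩ := hΔ.exists_left_inv
  have hmonic : (C u * Δ).Monic := monic_C_mul_of_mul_leadingCoeff_eq_one hu
  refine ⟨p /ₘ (C u * Δ) * C u, ?_⟩
  rw [mul_assoc, mul_comm (p /ₘ _), ← modByMonic_eq_sub_mul_div]
  exact (degree_modByMonic_lt p hmonic).trans_le (by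
    simpa [smul_eq_C_mul] using degree_smul_le u Δ)

variable [IsDomain T] [Fintype γ] {A : Matrix ρ γ T[X]} {s : ℕ} {e : Fin s → ρ}
  {c : Fin s → γ}

theorem degree_lt_of_forall_notMem_range (hM : IsMaximalMinor A e c)
    (hdeg : ∀ c', (A.submatrix e c').det.degree ≤ (A.submatrix e c).det.degree) {z : γ → T[X]}
    (hz : A *ᵥ z = 0) (hzdeg : ∀ i ∉ Set.range c, (z i).degree < (A.submatrix e c).det.degree)
    (i : γ) : (z i).degree < (A.submatrix e c).det.degree := by
  classical
  set Δ := (A.submatrix e c).det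
  have hΔ : Δ.degree ≠ ⊥ := degree_eq_bot.not.mpr hM.det_ne_zero
  by_cases hi : i ∈ Set.range c
  swap
  · exact hzdeg i hi
  obtain ⟨l, rfl⟩ := hi
  have hterm : ∀ j, (z j * cramerSolution A e c j (c l)).degree < Δ.degree + Δ.degree := by
    intro j
    by_cases hj : j ∈ Set.range c
    · obtain ⟨l', rfl⟩ := hj
      simp [cramerSolution_col, bot_lt_iff_ne_bot, hΔ]
    · rw [degree_mul, cramerSolution_apply_col hM.injective_cols hj, degree_neg]
      exact (add_le_add_right (hdeg _) _).trans_lt (WithBot.add_lt_add_right hΔ (hzdeg j hj))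
  have hsum : Δ * z (c l) = ∑ j, z j * cramerSolution A e c j (c l) := by
    simpa [Finset.sum_apply] using
      congrFun (det_smul_eq_sum_smul_cramerSolution (e := e) (c := c) hz) (c l)
  have hlt : (Δ * z (c l)).degree < Δ.degree + Δ.degree := by
    rw [hsum]
    exact (degree_sum_le _ _).trans_lt
      ((Finset.sup_lt_iff (by simp [bot_lt_iff_ne_bot, hΔ])).mpr fun j _ => hterm j)
  rw [degree_mul] at hlt
  exact lt_of_add_lt_add_left hlt

theorem exists_reduction [DecidableEq γ] (hM : IsMaximalMinor A e c)
    (hlead : IsUnit (A.submatrix e c).det.leadingCoeff)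
    (hdeg : ∀ c', (A.submatrix e c').det.degree ≤ (A.submatrix e c).det.degree) {y : γ → T[X]}
    (hy : A *ᵥ y = 0) :
    ∃ z, A *ᵥ z = 0 ∧ (∀ i, (z i).degree < (A.submatrix e c).det.degree) ∧
      y - z ∈ Submodule.span T[X] (Set.range (cramerSolution A e c)) := by
  choose q hq using fun j => exists_degree_sub_mul_lt hlead (y j)
  have hz : A *ᵥ (y - ∑ j, q j • cramerSolution A e c j) = 0 := by
    simp [mulVec_sub, mulVec_sum, mulVec_smul, hy, hM.mulVec_cramerSolution]
  refine ⟨y - ∑ j, q j • cramerSolution A e c j, hz,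
    degree_lt_of_forall_notMem_range hM hdeg hz fun i hi => ?_, ?_⟩
  · simpa [Finset.sum_apply, cramerSolution_apply_of_notMem_range hi] using hq i
  · rw [sub_sub_cancel]
    exact Submodule.sum_mem _ fun j _ => Submodule.smul_mem _ _ (Submodule.subset_span ⟨j, rfl⟩)

end Reduction

section Elimination

open Polynomial

variable {T ρ γ : Type*} [CommRing T] {δ d : ℕ}

/-- The coefficients of polynomials of degree less than `δ`, turned back into those polynomials. -/
noncomputable def ofCoeffs (δ : ℕ) : (γ × Fin δ → T) →ₗ[T] γ → T[X] :=
  LinearMap.pi fun j => ∑ i : Fin δ, monomial i ∘ₗ LinearMap.proj (j, i)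

theorem ofCoeffs_apply (w : γ × Fin δ → T) (j : γ) :
    ofCoeffs δ w j = ∑ i : Fin δ, monomial i (w (j, i)) := by
  simp [ofCoeffs]

theorem ofCoeffs_coeff {z : γ → T[X]} (hz : ∀ j, (z j).degree < δ) :
    ofCoeffs δ (fun m => (z m.1).coeff m.2) = z := by
  ext1 j
  rw [ofCoeffs_apply, Fin.sum_univ_eq_sum_range (fun i => monomial i ((z j).coeff i)) δ]
  ext i
  simp only [finsetSum_coeff, coeff_monomial, Finset.sum_ite_eq', Finset.mem_range, ite_eq_left_iff]
  exact fun h => (coeff_eq_zero_of_degree_lt ((hz j).trans_le (by exact_mod_cast not_lt.mp h))).symm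

/-- The system satisfied by the coefficients of `y` when `A *ᵥ y = 0`, `A` has entries of degree at
most `d` and `y` has entries of degree less than `δ`: the equation `(r, t)` says that the
coefficient of `X ^ t` in the `r`-th entry of `A *ᵥ y` vanishes. -/
def coeffMatrix (δ d : ℕ) (A : Matrix ρ γ T[X]) : Matrix (ρ × Fin (δ + d)) (γ × Fin δ) T :=
  fun r m => if (m.2 : ℕ) ≤ r.2 then (A r.1 m.1).coeff (r.2 - m.2) else 0

variable [Fintype γ]

theorem coeff_mulVec_ofCoeffs (A : Matrix ρ γ T[X]) (w : γ × Fin δ → T) (r : ρ) (t : ℕ) :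
    ((A *ᵥ ofCoeffs δ w) r).coeff t =
      ∑ m : γ × Fin δ, (if (m.2 : ℕ) ≤ t then (A r m.1).coeff (t - m.2) else 0) * w m := by
  simp only [mulVec, dotProduct, ofCoeffs_apply, Finset.mul_sum, finsetSum_coeff,
    Fintype.sum_prod_type, ← C_mul_X_pow_eq_monomial, ← mul_assoc, coeff_mul_X_pow', coeff_mul_C,
    ite_mul, zero_mul]

theorem mulVec_ofCoeffs_eq_zero_iff {A : Matrix ρ γ T[X]} (hA : ∀ r j, (A r j).natDegree ≤ d)
    (w : γ × Fin δ → T) : A *ᵥ ofCoeffs δ w = 0 ↔ coeffMatrix δ d A *ᵥ w = 0 := by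
  have hcoeff (r : ρ) (t : Fin (δ + d)) :
      ((A *ᵥ ofCoeffs δ w) r).coeff t = (coeffMatrix δ d A *ᵥ w) (r, t) :=
    coeff_mulVec_ofCoeffs A w r t
  constructor
  · intro h
    ext ⟨r, t⟩
    simp [← hcoeff, h]
  · intro h
    ext r t
    by_cases ht : t < δ + d
    · simpa [h] using hcoeff r ⟨t, ht⟩
    · rw [coeff_mulVec_ofCoeffs]
      refine Finset.sum_eq_zero fun m _ => ?_
      have := hA r m.1
      have := m.2.2
      rw [coeff_eq_zero_of_natDegree_lt (by omega), ite_self, zero_mul]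

theorem ofCoeffs_mem_span_kerIn {A : Matrix ρ γ T[X]} (hA : ∀ r j, (A r j).natDegree ≤ d)
    {B : Set T} {B' : Set T[X]}
    (hB : ∀ a : Fin δ → T, (∀ i, a i ∈ B) → ∑ i : Fin δ, monomial (i : ℕ) (a i) ∈ B')
    (hgen : KerGeneratedIn (coeffMatrix δ d A) B) {w : γ × Fin δ → T}
    (hw : A *ᵥ ofCoeffs δ w = 0) : ofCoeffs δ w ∈ Submodule.span T[X] (kerIn A B') := by
  have hmem := Submodule.mem_map_of_mem (f := ofCoeffs δ)
    (hgen w ((mulVec_ofCoeffs_eq_zero_iff hA w).mp hw))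
  rw [Submodule.map_span] at hmem
  refine Submodule.span_le_restrictScalars T T[X] _ (Submodule.span_mono ?_ hmem)
  rintro _ ⟨v, hv, rfl⟩
  refine ⟨(mulVec_ofCoeffs_eq_zero_iff hA v).mpr hv.1, fun j => ?_⟩
  rw [ofCoeffs_apply]
  exact hB _ fun i => hv.2 (j, i)

theorem KerGeneratedIn.of_coeffMatrix [IsDomain T] [DecidableEq γ] {A : Matrix ρ γ T[X]} {s : ℕ}
    {e : Fin s → ρ} {c : Fin s → γ} (hM : IsMaximalMinor A e c)
    (hlead : IsUnit (A.submatrix e c).det.leadingCoeff)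
    (hdeg : ∀ c', (A.submatrix e c').det.degree ≤ (A.submatrix e c).det.degree)
    (hA : ∀ r j, (A r j).natDegree ≤ d) {B : Set T} {B' : Set T[X]}
    (hcramer : ∀ j i, cramerSolution A e c j i ∈ B')
    (hB : ∀ a : Fin (A.submatrix e c).det.natDegree → T, (∀ i, a i ∈ B) →
      ∑ i : Fin (A.submatrix e c).det.natDegree, monomial (i : ℕ) (a i) ∈ B')
    (hgen : KerGeneratedIn (coeffMatrix (A.submatrix e c).det.natDegree d A) B) :
    KerGeneratedIn A B' := by
  intro y hy
  obtain ⟨z, hz, hzdeg, hyz⟩ := exists_reduction hM hlead hdeg hy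
  rw [degree_eq_natDegree hM.det_ne_zero] at hzdeg
  rw [← sub_add_cancel y z]
  refine add_mem (Submodule.span_mono ?_ hyz) ?_
  · rintro _ ⟨j, rfl⟩
    exact ⟨hM.mulVec_cramerSolution j, hcramer j⟩
  · rw [← ofCoeffs_coeff hzdeg] at hz ⊢
    exact ofCoeffs_mem_span_kerIn hA hB hgen hz

end Elimination

open MvPolynomial

section TotalDegree

variable {R σ τ κ : Type*} [CommRing R]

theorem totalDegree_det_le [Fintype κ] [DecidableEq κ] {d : ℕ} {M : Matrix κ κ (MvPolynomial σ R)}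
    (h : ∀ i j, (M i j).totalDegree ≤ d) : M.det.totalDegree ≤ Fintype.card κ * d := by
  rw [det_apply]
  refine totalDegree_finsetSum_le fun π _ => (totalDegree_smul_le _ _).trans ?_
  refine (totalDegree_finsetProd _ _).trans ?_
  simpa using Finset.sum_le_card_nsmul Finset.univ _ d fun i _ => h (π i) i

theorem totalDegree_aeval_le_of_linear {f : σ → MvPolynomial τ R} (hf : ∀ i, (f i).totalDegree ≤ 1)
    (p : MvPolynomial σ R) : (aeval f p).totalDegree ≤ p.totalDegree := by
  rw [aeval_def, eval₂_eq]
  refine totalDegree_finsetSum_le fun m hm => ?_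
  calc (algebraMap R (MvPolynomial τ R) (coeff m p) * ∏ i ∈ m.support, f i ^ m i).totalDegree
      ≤ (∏ i ∈ m.support, f i ^ m i).totalDegree := by
        simpa [algebraMap_eq] using totalDegree_mul (C (coeff m p)) (∏ i ∈ m.support, f i ^ m i)
    _ ≤ ∑ i ∈ m.support, (f i ^ m i).totalDegree := totalDegree_finsetProd _ _
    _ ≤ ∑ i ∈ m.support, m i := Finset.sum_le_sum fun i _ =>
        (totalDegree_pow _ _).trans (by simpa using Nat.mul_le_mul_left (m i) (hf i))
    _ ≤ p.totalDegree := le_totalDegree hm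

theorem homogeneousComponent_totalDegree_ne_zero {p : MvPolynomial σ R} (hp : p ≠ 0) :
    homogeneousComponent p.totalDegree p ≠ 0 := by
  obtain ⟨m, hm, hdeg⟩ := Finset.exists_mem_eq_sup p.support (support_nonempty.mpr hp)
    fun m => m.degree
  replace hdeg : m.degree = p.totalDegree := hdeg.symm
  refine ne_zero_iff.mpr ⟨m, ?_⟩
  rw [coeff_homogeneousComponent, if_pos hdeg]
  exact mem_support_iff.mp hm

theorem coeff_aeval_C_mul_X (a : σ → R) (N : ℕ) (p : MvPolynomial σ R) :
    (aeval (fun i => Polynomial.C (a i) * Polynomial.X) p : R[X]).coeff N =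
      eval a (homogeneousComponent N p) := by
  induction p using MvPolynomial.induction_on' with
  | monomial m c =>
    have hX : (m.prod fun _ t => (Polynomial.X : R[X]) ^ t) = Polynomial.X ^ m.degree :=
      Finset.prod_pow_eq_pow_sum _ _ _
    have hC : (m.prod fun i t => Polynomial.C (a i ^ t)) =
        Polynomial.C (m.prod fun i t => a i ^ t) :=
      (map_prod Polynomial.C _ _).symm
    rw [homogeneousComponent_of_mem (isHomogeneous_monomial (n := m.degree) c rfl), aeval_monomial]
    simp only [mul_pow, Finsupp.prod_mul, ← map_pow, hX, hC, Polynomial.algebraMap_eq, ← mul_assoc,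
      ← map_mul, Polynomial.coeff_C_mul_X_pow]
    split_ifs <;> simp [eval_monomial]
  | add p q hp hq => simp only [map_add, Polynomial.coeff_add, hp, hq]

end TotalDegree

section FinSuccEquiv

variable {R : Type*} [CommRing R] {n : ℕ}

theorem natDegree_finSuccEquiv_le (p : MvPolynomial (Fin (n + 1)) R) :
    (finSuccEquiv R n p).natDegree ≤ p.totalDegree := by
  rw [natDegree_finSuccEquiv]
  exact degreeOf_le_totalDegree p 0

theorem totalDegree_coeff_finSuccEquiv_le (p : MvPolynomial (Fin (n + 1)) R) (i : ℕ) :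
    ((finSuccEquiv R n p).coeff i).totalDegree ≤ p.totalDegree := by
  by_cases h : (finSuccEquiv R n p).coeff i = 0
  · simp [h]
  · exact (Nat.le_add_right _ i).trans (totalDegree_coeff_finSuccEquiv_add_le p i h)

theorem finSuccEquiv_C (c : R) : finSuccEquiv R n (C c) = Polynomial.C (C c) := by
  simp [finSuccEquiv_apply]

theorem finSuccEquiv_rename_succ (p : MvPolynomial (Fin n) R) :
    finSuccEquiv R n (rename Fin.succ p) = Polynomial.C p := by
  induction p using MvPolynomial.induction_on with
  | C c => simp [finSuccEquiv_C]
  | add p q hp hq => simp [hp, hq]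
  | mul_X p i hp => simp [hp, finSuccEquiv_X_succ]

theorem finSuccEquiv_symm_monomial (i : ℕ) (p : MvPolynomial (Fin n) R) :
    (finSuccEquiv R n).symm (Polynomial.monomial i p) = rename Fin.succ p * X 0 ^ i := by
  rw [AlgEquiv.symm_apply_eq]
  simp [finSuccEquiv_X_zero, finSuccEquiv_rename_succ, Polynomial.C_mul_X_pow_eq_monomial]

theorem totalDegree_finSuccEquiv_symm_monomial_le (i : ℕ) (p : MvPolynomial (Fin n) R) :
    ((finSuccEquiv R n).symm (Polynomial.monomial i p)).totalDegree ≤ p.totalDegree + i := by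
  rw [finSuccEquiv_symm_monomial]
  refine (totalDegree_mul _ _).trans (add_le_add (totalDegree_rename_le _ _) ?_)
  simpa using (isHomogeneous_X_pow (R := R) (0 : Fin (n + 1)) i).totalDegree_le

theorem isUnit_leadingCoeff_finSuccEquiv {k : Type*} [Field k] {p : MvPolynomial (Fin (n + 1)) k}
    (h : (finSuccEquiv k n p).coeff p.totalDegree ≠ 0) :
    IsUnit (finSuccEquiv k n p).leadingCoeff := by
  have hdeg : (finSuccEquiv k n p).natDegree = p.totalDegree :=
    (natDegree_finSuccEquiv_le p).antisymm (Polynomial.le_natDegree_of_ne_zero h)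
  have hconst : ((finSuccEquiv k n p).coeff p.totalDegree).totalDegree = 0 := by
    have := totalDegree_coeff_finSuccEquiv_add_le p _ h
    omega
  rw [Polynomial.leadingCoeff, hdeg]
  rw [totalDegree_eq_zero_iff_eq_C] at hconst
  rw [hconst] at h ⊢
  exact (isUnit_iff_ne_zero.mpr fun h0 => h (by rw [h0, C_0])).map C

end FinSuccEquiv

section Shear

variable {R : Type*} [CommRing R] {n : ℕ}

/-- The linear substitution taking the first unit vector to `a` and fixing the other unit vectors:
`x₀ ↦ a₀ x₀` and `xᵢ₊₁ ↦ xᵢ₊₁ + aᵢ₊₁ x₀`. -/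
noncomputable def shear (a : Fin (n + 1) → R) :
    MvPolynomial (Fin (n + 1)) R →ₐ[R] MvPolynomial (Fin (n + 1)) R :=
  aeval (Fin.cons (C (a 0) * X 0) fun i => X i.succ + C (a i.succ) * X 0)

theorem shear_X_zero (a : Fin (n + 1) → R) : shear a (X 0) = C (a 0) * X 0 := by
  simp [shear]

theorem shear_X_succ (a : Fin (n + 1) → R) (i : Fin n) :
    shear a (X i.succ) = X i.succ + C (a i.succ) * X 0 := by
  simp [shear]

theorem totalDegree_shear_le (a : Fin (n + 1) → R) (p : MvPolynomial (Fin (n + 1)) R) :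
    (shear a p).totalDegree ≤ p.totalDegree := by
  have hX (c : R) : (C c * X 0 : MvPolynomial (Fin (n + 1)) R).totalDegree ≤ 1 :=
    (isHomogeneous_C_mul_X c 0).totalDegree_le
  refine totalDegree_aeval_le_of_linear (fun i => ?_) p
  cases i using Fin.cases with
  | zero => exact hX (a 0)
  | succ i =>
    exact (totalDegree_add _ _).trans (max_le (isHomogeneous_X R _).totalDegree_le (hX _))

theorem shear_comp_shear {a b : Fin (n + 1) → R} (h₀ : a 0 * b 0 = 1)
    (h : ∀ i, a (Fin.succ i) + b i.succ * a 0 = 0) : (shear a).comp (shear b) = AlgHom.id R _ := by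
  have hC (c : R) : shear a (C c) = C c := (shear a).commutes c
  ext1 i
  cases i using Fin.cases with
  | zero =>
    have := congrArg C h₀ (β := MvPolynomial (Fin (n + 1)) R)
    simp only [map_mul, map_one] at this
    simp only [AlgHom.comp_apply, AlgHom.id_apply, shear_X_zero, map_mul, hC]
    linear_combination X 0 * this
  | succ i =>
    have := congrArg C (h i) (β := MvPolynomial (Fin (n + 1)) R)
    simp only [map_add, map_mul, map_zero] at this
    simp only [AlgHom.comp_apply, AlgHom.id_apply, shear_X_succ, shear_X_zero, map_add, map_mul, hC]
    linear_combination X 0 * this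

/-- Setting the other variables to zero restricts a polynomial in the new coordinates to the line
through `a`. -/
theorem map_constantCoeff_finSuccEquiv_shear (a : Fin (n + 1) → R)
    (p : MvPolynomial (Fin (n + 1)) R) :
    (finSuccEquiv R n (shear a p)).map constantCoeff =
      aeval (fun i => Polynomial.C (a i) * Polynomial.X) p := by
  induction p using MvPolynomial.induction_on with
  | C c =>
    rw [← algebraMap_eq, AlgHom.commutes]
    simp [algebraMap_eq, finSuccEquiv_C]
  | add p q hp hq => simp [hp, hq]
  | mul_X p i hp =>
    cases i using Fin.cases <;>
      simp [hp, shear_X_zero, shear_X_succ, finSuccEquiv_X_zero, finSuccEquiv_X_succ,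
        finSuccEquiv_C]

theorem constantCoeff_coeff_finSuccEquiv_shear (a : Fin (n + 1) → R) (N : ℕ)
    (p : MvPolynomial (Fin (n + 1)) R) :
    constantCoeff ((finSuccEquiv R n (shear a p)).coeff N) = eval a (homogeneousComponent N p) := by
  rw [← coeff_aeval_C_mul_X, ← map_constantCoeff_finSuccEquiv_shear, Polynomial.coeff_map]

theorem exists_algEquiv_isUnit_leadingCoeff {k : Type*} [Field k] [Infinite k]
    {p : MvPolynomial (Fin (n + 1)) k} (hp : p ≠ 0) :
    ∃ φ : MvPolynomial (Fin (n + 1)) k ≃ₐ[k] MvPolynomial (Fin (n + 1)) k,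
      (∀ q, (φ q).totalDegree = q.totalDegree) ∧
        (finSuccEquiv k n (φ p)).natDegree = p.totalDegree ∧
        IsUnit (finSuccEquiv k n (φ p)).leadingCoeff := by
  -- The factor `X 0` forces `a 0 ≠ 0`, which makes the substitution invertible.
  obtain ⟨a, ha⟩ : ∃ a, eval a (X 0 * homogeneousComponent p.totalDegree p) ≠ 0 := by
    by_contra! h
    exact mul_ne_zero (X_ne_zero 0) (homogeneousComponent_totalDegree_ne_zero hp)
      (MvPolynomial.funext fun x => by simpa using h x)
  rw [map_mul, eval_X] at ha
  have ha₀ : a 0 ≠ 0 := left_ne_zero_of_mul ha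
  let b : Fin (n + 1) → k := Fin.cons (a 0)⁻¹ fun i => -(a i.succ * (a 0)⁻¹)
  let φ : MvPolynomial (Fin (n + 1)) k ≃ₐ[k] MvPolynomial (Fin (n + 1)) k :=
    .ofAlgHom (shear a) (shear b)
      (shear_comp_shear (by simp [b, ha₀]) fun i => by simp [b, ha₀])
      (shear_comp_shear (by simp [b, ha₀]) fun i => by simp [b])
  have hφ (q) : (φ q).totalDegree = q.totalDegree := by
    refine (totalDegree_shear_le a q).antisymm ?_
    have := totalDegree_shear_le b (φ q)
    rwa [show shear b (φ q) = q from φ.symm_apply_apply q] at this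
  have hcoeff : (finSuccEquiv k n (φ p)).coeff p.totalDegree ≠ 0 := fun h => by
    refine right_ne_zero_of_mul ha ?_
    rw [← constantCoeff_coeff_finSuccEquiv_shear]
    exact (congrArg constantCoeff h).trans (map_zero _)
  exact ⟨φ, hφ,
    ((natDegree_finSuccEquiv_le _).trans_eq (hφ p)).antisymm
      (Polynomial.le_natDegree_of_ne_zero hcoeff),
    isUnit_leadingCoeff_finSuccEquiv (by rwa [hφ])⟩

end Shear

section Hermann

theorem cramerSolution_apply_mem {R ρ γ κ : Type*} [CommRing R] [Fintype κ] [DecidableEq κ]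
    [DecidableEq γ] {A : Matrix ρ γ R} {e : κ → ρ} {c : κ → γ} (hc : c.Injective) {B : Set R}
    (h₀ : 0 ∈ B) (hdet : (A.submatrix e c).det ∈ B) (hneg : ∀ c', -(A.submatrix e c').det ∈ B)
    (j i : γ) : cramerSolution A e c j i ∈ B := by
  by_cases hi : i ∈ Set.range c
  · obtain ⟨l, rfl⟩ := hi
    by_cases hj : j ∈ Set.range c
    · obtain ⟨l', rfl⟩ := hj
      rwa [cramerSolution_col]
    · rw [cramerSolution_apply_col hc hj]
      exact hneg _
  · rw [cramerSolution_apply_of_notMem_range hi]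
    split_ifs <;> assumption

theorem totalDegree_coeffMatrix_le {R ρ γ : Type*} [CommRing R] {n δ d D : ℕ}
    {A : Matrix ρ γ (MvPolynomial (Fin (n + 1)) R)} (hA : ∀ i j, (A i j).totalDegree ≤ D)
    (r : ρ × Fin (δ + d)) (m : γ × Fin δ) :
    (coeffMatrix δ d (A.map (finSuccEquiv R n)) r m).totalDegree ≤ D := by
  rw [coeffMatrix]
  split_ifs
  · exact (totalDegree_coeff_finSuccEquiv_le _ _).trans (hA _ _)
  · simp

theorem totalDegree_finSuccEquiv_symm_sum_monomial_le {R : Type*} [CommRing R] {n δ N : ℕ}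
    {a : Fin δ → MvPolynomial (Fin n) R} (ha : ∀ i, (a i).totalDegree + i ≤ N) :
    ((finSuccEquiv R n).symm (∑ i : Fin δ, Polynomial.monomial (i : ℕ) (a i))).totalDegree ≤ N := by
  rw [map_sum]
  exact totalDegree_finsetSum_le fun i _ =>
    (totalDegree_finSuccEquiv_symm_monomial_le _ _).trans (ha i)

theorem IsMaximalMinor.kerGeneratedIn_of_coeffMatrix {R ρ γ : Type*} [CommRing R] [IsDomain R]
    [Fintype γ] {n d q N s : ℕ} {A : Matrix ρ γ (MvPolynomial (Fin (n + 1)) R)} {e : Fin s → ρ}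
    {c : Fin s → γ} (hM : IsMaximalMinor A e c)
    (hmax : ∀ c', (A.submatrix e c').det.totalDegree ≤ (A.submatrix e c).det.totalDegree)
    (hnat : (finSuccEquiv R n (A.submatrix e c).det).natDegree = (A.submatrix e c).det.totalDegree)
    (hlead : IsUnit (finSuccEquiv R n (A.submatrix e c).det).leadingCoeff)
    (hq : (A.submatrix e c).det.totalDegree ≤ q) (hN : 2 * q ≤ N)
    (hA : ∀ i j, (A i j).totalDegree ≤ d)
    (hcoeff : ∀ δ ≤ q, KerGeneratedIn (coeffMatrix δ d (A.map (finSuccEquiv R n)))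
      {p | p.totalDegree + 2 * q ≤ N}) :
    KerGeneratedIn A {p | p.totalDegree + q ≤ N} := by
  classical
  let ψ : MvPolynomial (Fin (n + 1)) R ≃+* (MvPolynomial (Fin n) R)[X] :=
    (finSuccEquiv R n).toRingEquiv
  have hdet (c') : ((A.map ψ).submatrix e c').det = ψ (A.submatrix e c').det :=
    (ψ.map_det _).symm
  have hM' : IsMaximalMinor (A.map ψ) e c := hM.map ψ.injective
  have hnat' : ((A.map ψ).submatrix e c).det.natDegree = (A.submatrix e c).det.totalDegree := by
    rwa [hdet]
  have hdegree (c') : ((A.map ψ).submatrix e c').det.degree ≤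
      ((A.map ψ).submatrix e c).det.degree := by
    rw [Polynomial.degree_eq_natDegree hM'.det_ne_zero, hnat', hdet]
    exact Polynomial.degree_le_of_natDegree_le ((natDegree_finSuccEquiv_le _).trans (hmax c'))
  refine .of_map_ringEquiv (ψ := ψ) <| .of_coeffMatrix (B := {p | p.totalDegree + 2 * q ≤ N})
    hM' (by rwa [hdet]) hdegree (fun r j => (natDegree_finSuccEquiv_le _).trans (hA r j))
    (fun j i => cramerSolution_apply_mem hM'.injective_cols ?_ ?_ (fun c' => ?_) j i)
    (fun a ha => ?_) (hcoeff _ (hnat'.trans_le hq))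
  · simp only [Set.mem_preimage, map_zero, Set.mem_ofPred_eq, totalDegree_zero]
    omega
  · simp only [Set.mem_preimage, hdet, RingEquiv.symm_apply_apply, Set.mem_ofPred_eq]
    omega
  · have := hmax c'
    simp only [Set.mem_preimage, hdet, map_neg, RingEquiv.symm_apply_apply, Set.mem_ofPred_eq,
      totalDegree_neg]
    omega
  · simp only [Set.mem_ofPred_eq] at ha
    refine Nat.add_le_of_le_sub (by omega)
      (totalDegree_finSuccEquiv_symm_sum_monomial_le fun i => ?_)
    have := ha i
    omega

theorem kerGeneratedIn_of_coeffMatrix {k ρ γ : Type*} [Field k] [Infinite k] [Fintype ρ]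
    [Fintype γ] {n d q N : ℕ} {A : Matrix ρ γ (MvPolynomial (Fin (n + 1)) k)}
    (hq : Fintype.card ρ * d ≤ q) (hN : 2 * q ≤ N) (hA : ∀ i j, (A i j).totalDegree ≤ d)
    (hcoeff : ∀ δ ≤ q, ∀ A' : Matrix (ρ × Fin (δ + d)) (γ × Fin δ) (MvPolynomial (Fin n) k),
      (∀ i j, (A' i j).totalDegree ≤ d) → KerGeneratedIn A' {p | p.totalDegree + 2 * q ≤ N}) :
    KerGeneratedIn A {p | p.totalDegree + q ≤ N} := by
  obtain ⟨s, e, c, hM, hmax⟩ := exists_isMaximalMinor A totalDegree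
  obtain ⟨φ, hφ, hnat, hlead⟩ := exists_algEquiv_isUnit_leadingCoeff hM.det_ne_zero
  have hφsymm (p) : (φ.symm p).totalDegree = p.totalDegree := by
    rw [← hφ, φ.apply_symm_apply]
  have hdet (c') : ((A.map φ).submatrix e c').det = φ (A.submatrix e c').det :=
    (φ.map_det _).symm
  have hAφ (i j) : (A.map φ i j).totalDegree ≤ d := (hφ _).trans_le (hA i j)
  have hgen : KerGeneratedIn (A.map φ) {p | p.totalDegree + q ≤ N} := by
    refine IsMaximalMinor.kerGeneratedIn_of_coeffMatrix (hM.map φ.injective) (fun c' => ?_)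
      ?_ ?_ ?_ hN hAφ fun δ hδ => ?_
    · rw [hdet, hdet, hφ, hφ]
      by_cases h : (A.submatrix e c').det = 0
      · simp [h]
      · exact hmax c' h
    · rwa [hdet, hφ]
    · rwa [hdet]
    · rw [hdet, hφ]
      refine (totalDegree_det_le fun i j => hA _ _).trans ?_
      simpa using (Nat.mul_le_mul_right d hM.card_le).trans hq
    · exact hcoeff δ hδ _ (totalDegree_coeffMatrix_le hAφ)
  refine .of_map_ringEquiv (ψ := φ.toRingEquiv) ?_
  have hset : φ.toRingEquiv.symm ⁻¹' {p | p.totalDegree + q ≤ N} = {p | p.totalDegree + q ≤ N} :=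
    Set.ext fun p => iff_of_eq (congrArg (· + q ≤ N) (hφsymm p))
  rwa [hset]

theorem kerGeneratedIn_of_infinite {k : Type*} [Field k] [Infinite k] (n : ℕ) {ρ γ : Type*}
    [Fintype ρ] [Fintype γ] {d q : ℕ} {A : Matrix ρ γ (MvPolynomial (Fin n) k)}
    (hq : Fintype.card ρ * d ≤ q) (hA : ∀ i j, (A i j).totalDegree ≤ d) :
    KerGeneratedIn A {p | p.totalDegree + q ≤ (2 * q) ^ 2 ^ n} := by
  induction n generalizing ρ γ q with
  | zero =>
    intro y hy
    refine Submodule.subset_span ⟨hy, fun j => ?_⟩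
    rw [eq_C_of_isEmpty (y j)]
    simp only [Set.mem_ofPred_eq, totalDegree_C, pow_zero, pow_one]
    omega
  | succ n ih =>
    have hpow : (2 * q) ^ 2 ^ (n + 1) = (2 * (2 * q ^ 2)) ^ 2 ^ n := by
      rw [pow_succ' 2 n, pow_mul]
      ring
    have hqsq : q ≤ q ^ 2 := Nat.le_self_pow two_ne_zero q
    refine kerGeneratedIn_of_coeffMatrix hq (Nat.le_self_pow (by positivity) _) hA
      fun δ hδ A' hA' => (ih (q := 2 * q ^ 2) ?_ hA').mono fun p hp => ?_
    · rw [Fintype.card_prod, Fintype.card_fin]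
      rcases Nat.eq_zero_or_pos (Fintype.card ρ) with hρ | hρ
      · simp [hρ]
      · have hd : d ≤ q := (Nat.le_mul_of_pos_left d hρ).trans hq
        calc Fintype.card ρ * (δ + d) * d = (Fintype.card ρ * d) * (δ + d) := by ring
          _ ≤ q * (q + q) := by gcongr
          _ = 2 * q ^ 2 := by ring
    · simp only [Set.mem_ofPred_eq, hpow] at hp ⊢
      omega

end Hermann

section Descent

attribute [local instance] MvPolynomial.algebraMvPolynomial

variable {k K σ : Type*} [CommRing k] [CommRing K] [Algebra k K]

/-- Application of a `k`-linear functional on `K` to the coefficients of a polynomial over `K`. -/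
noncomputable def mapCoeffs (l : K →ₗ[k] k) :
    MvPolynomial σ K →ₗ[MvPolynomial σ k] MvPolynomial σ k where
  toFun P := AddMonoidAlgebra.map l.toAddMonoidHom P
  map_add' P Q := by
    ext m
    simp
  map_smul' p P := by
    classical
    ext m
    simp only [Algebra.smul_def, algebraMap_def, coeff_addMonoidAlgebraMap, coeff_mul, coeff_map,
      map_sum]
    simp [← Algebra.smul_def]

theorem coeff_mapCoeffs (l : K →ₗ[k] k) (P : MvPolynomial σ K) (m : σ →₀ ℕ) :
    coeff m (mapCoeffs l P) = l (coeff m P) :=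
  rfl

theorem totalDegree_mapCoeffs_le (l : K →ₗ[k] k) (P : MvPolynomial σ K) :
    (mapCoeffs l P).totalDegree ≤ P.totalDegree := by
  refine Finset.sup_mono fun m hm => ?_
  rw [mem_support_iff] at hm ⊢
  exact fun h => hm (by rw [coeff_mapCoeffs, h, map_zero])

theorem mapCoeffs_one {l : K →ₗ[k] k} (hl : l 1 = 1) :
    mapCoeffs l (1 : MvPolynomial σ K) = 1 := by
  classical
  ext m
  rw [coeff_mapCoeffs, coeff_one, coeff_one, apply_ite l, hl, map_zero]

theorem span_range_C_eq_top :
    Submodule.span (MvPolynomial σ k) (Set.range (C : K → MvPolynomial σ K)) = ⊤ := by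
  refine eq_top_iff.mpr fun P _ => ?_
  induction P using MvPolynomial.induction_on with
  | C c => exact Submodule.subset_span ⟨c, rfl⟩
  | add P Q hP hQ => exact add_mem (hP trivial) (hQ trivial)
  | mul_X P i hP =>
    have hX : P * X i = (X i : MvPolynomial σ k) • P := by
      rw [Algebra.smul_def, algebraMap_def, map_X, mul_comm]
    rw [hX]
    exact Submodule.smul_mem _ _ (hP trivial)

theorem KerGeneratedIn.of_map_algebraMap_mvPolynomial {l : K →ₗ[k] k} (hl : l 1 = 1)
    {ρ γ : Type*} [Fintype γ] {A : Matrix ρ γ (MvPolynomial σ k)} {q N : ℕ}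
    (h : KerGeneratedIn (A.map (MvPolynomial.map (algebraMap k K))) {p | p.totalDegree + q ≤ N}) :
    KerGeneratedIn A {p | p.totalDegree + q ≤ N} := by
  refine .of_map_algebraMap (mapCoeffs_one hl) span_range_C_eq_top ?_ (fun P hP => ?_) h
  · rintro _ ⟨c, rfl⟩ P hP
    refine (add_le_add_left ((totalDegree_mul _ _).trans ?_) q).trans hP
    rw [totalDegree_C, zero_add]
  · exact (add_le_add_left (totalDegree_mapCoeffs_le l P) q).trans hP

end Descent

theorem kerGeneratedIn_totalDegree_add_le {k ρ γ : Type*} [Field k] [Fintype ρ] [Fintype γ]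
    {n d q : ℕ} {A : Matrix ρ γ (MvPolynomial (Fin n) k)} (hq : Fintype.card ρ * d ≤ q)
    (hA : ∀ i j, (A i j).totalDegree ≤ d) :
    KerGeneratedIn A {p | p.totalDegree + q ≤ (2 * q) ^ 2 ^ n} := by
  obtain ⟨l, hl⟩ := (Algebra.linearMap k (AlgebraicClosure k)).exists_leftInverse_of_injective
    (LinearMap.ker_eq_bot.mpr (algebraMap k (AlgebraicClosure k)).injective)
  have hl₁ : l 1 = 1 := by simpa using LinearMap.congr_fun hl 1
  refine .of_map_algebraMap_mvPolynomial hl₁ ?_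
  exact kerGeneratedIn_of_infinite n hq fun i j =>
    (Finset.sup_mono (support_map_subset _ _)).trans (hA i j)

section Colon

theorem mem_span_of_mul_mem_span {k : Type*} [Field k] {n E : ℕ}
    {S : Set (MvPolynomial (Fin n) k)} (hS : ∀ s ∈ S, s.totalDegree ≤ E)
    {f g : MvPolynomial (Fin n) k} (hf : f.totalDegree ≤ E) (hfg : f * g ∈ Ideal.span S) :
    g ∈ Ideal.span {h | f * h ∈ Ideal.span S ∧ h.totalDegree + E ≤ (2 * E) ^ 2 ^ n} := by
  obtain ⟨m, a, s, hs⟩ := Submodule.mem_span_set'.mp hfg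
  let A : Matrix (Fin 1) (Fin (m + 1)) (MvPolynomial (Fin n) k) :=
    fun _ => Fin.cons f fun i => (s i : MvPolynomial (Fin n) k)
  have hA (w : Fin (m + 1) → MvPolynomial (Fin n) k) :
      A *ᵥ w = 0 ↔ f * w 0 + ∑ i : Fin m, s i * w i.succ = 0 := by
    simp [funext_iff, mulVec, dotProduct, A, Fin.sum_univ_succ]
  have hdeg (i j) : (A i j).totalDegree ≤ E :=
    Fin.cases hf (fun j => hS _ (s j).2) j
  have hsyzygy : A *ᵥ Fin.cons g (-a) = 0 := by
    simp [hA, ← hs, mul_comm]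
  have hmem := Submodule.mem_map_of_mem (f := LinearMap.proj 0)
    (kerGeneratedIn_totalDegree_add_le (q := E) (by simp) hdeg _ hsyzygy)
  rw [Submodule.map_span] at hmem
  refine Submodule.span_mono ?_ hmem
  rintro _ ⟨w, ⟨hw, hwdeg⟩, rfl⟩
  refine ⟨?_, hwdeg 0⟩
  rw [LinearMap.proj_apply, eq_neg_of_add_eq_zero_left ((hA w).mp hw)]
  exact neg_mem <| Ideal.sum_mem _ fun i _ =>
    Ideal.mul_mem_right _ _ (Ideal.subset_span (s i).2)

/-- The primality condition on an ideal, tested on polynomials of total degree at most `b` only. As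
in the paper, `I` need not be proper. -/
def IsPrimeUpTo {σ R : Type*} [CommRing R] (b : ℕ) (I : Ideal (MvPolynomial σ R)) : Prop :=
  ∀ f g : MvPolynomial σ R, f.totalDegree ≤ b → g.totalDegree ≤ b → f * g ∈ I → f ∈ I ∨ g ∈ I

theorem IsPrimeUpTo.mem_of_mul_mem {k : Type*} [Field k] {n E b : ℕ}
    {S : Set (MvPolynomial (Fin n) k)} (hprime : IsPrimeUpTo b (Ideal.span S))
    (hS : ∀ s ∈ S, s.totalDegree ≤ E) (hb : (2 * E) ^ 2 ^ n ≤ b) {f g : MvPolynomial (Fin n) k}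
    (hf : f ∉ Ideal.span S) (hfdeg : f.totalDegree ≤ E) (hfg : f * g ∈ Ideal.span S) :
    g ∈ Ideal.span S := by
  refine Ideal.span_le.mpr ?_ (mem_span_of_mul_mem_span hS hfdeg hfg)
  rintro h ⟨hfh, hdeg⟩
  exact (hprime f h (by omega) (by omega) hfh).resolve_left hf

theorem two_mul_le_two_mul_mul_pow {n : ℕ} (hn : n ≠ 0) (d : ℕ) :
    2 * ((n - 1) * (2 ^ (n * 2 ^ (2 * n + 6)) * d ^ (n * 2 ^ (3 * n + 2)))) ≤
      (2 * n * d) ^ (n * 2 ^ (3 * n + 8)) := by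
  rcases d.eq_zero_or_pos with rfl | hd
  · simp [hn]
  set m := n * 2 ^ (3 * n + 8) with hm
  have hexp : n * 2 ^ (2 * n + 6) + 1 ≤ m := by
    have : n * 2 ^ (2 * n + 6) ≤ n * 2 ^ (3 * n + 6) := by gcongr <;> omega
    have : 0 < n * 2 ^ (3 * n + 6) := by positivity
    have : m = 4 * (n * 2 ^ (3 * n + 6)) := by rw [hm]; ring
    omega
  have htwo : 2 ^ (n * 2 ^ (2 * n + 6) + 1) ≤ 2 ^ m := by gcongr; norm_num
  have hpred : n - 1 ≤ n ^ m := (Nat.sub_le n 1).trans (Nat.le_self_pow (by omega) n)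
  have hpow : d ^ (n * 2 ^ (3 * n + 2)) ≤ d ^ m := by
    refine Nat.pow_le_pow_right hd ?_
    rw [hm]
    gcongr <;> omega
  calc 2 * ((n - 1) * (2 ^ (n * 2 ^ (2 * n + 6)) * d ^ (n * 2 ^ (3 * n + 2))))
      = 2 ^ (n * 2 ^ (2 * n + 6) + 1) * (n - 1) * d ^ (n * 2 ^ (3 * n + 2)) := by ring
    _ ≤ 2 ^ m * n ^ m * d ^ m := by gcongr
    _ = (2 * n * d) ^ m := by rw [mul_pow, mul_pow]

theorem bounded_prime_implies_quotient_by_small_irreducibles_general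
    {k : Type*} [Field k] {n d : ℕ} (hn : 1 < n) {I : Ideal (MvPolynomial (Fin n) k)}
    {S : Set (MvPolynomial (Fin n) k)} (hgen : I = Ideal.span S)
    (hdeg : ∀ g ∈ S, g.totalDegree ≤ d)
    (hprime : IsPrimeUpTo ((2 * n * d) ^ (n * 2 ^ (4 * n + 8))) I) {f : MvPolynomial (Fin n) k}
    (hf : f ∉ I) (hfdeg : f.totalDegree ≤
      (n - 1) * (2 ^ (n * 2 ^ (2 * n + 6)) * d ^ (n * 2 ^ (3 * n + 2))))
    {g : MvPolynomial (Fin n) k} (hfg : f * g ∈ I) : g ∈ I := by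
  subst hgen
  have hd : d ≤ (n - 1) * (2 ^ (n * 2 ^ (2 * n + 6)) * d ^ (n * 2 ^ (3 * n + 2))) :=
    calc d ≤ d ^ (n * 2 ^ (3 * n + 2)) := Nat.le_self_pow (by positivity) d
      _ ≤ 2 ^ (n * 2 ^ (2 * n + 6)) * d ^ (n * 2 ^ (3 * n + 2)) :=
        Nat.le_mul_of_pos_left _ (by positivity)
      _ ≤ _ := Nat.le_mul_of_pos_left _ (by omega)
  refine hprime.mem_of_mul_mem (fun s hs => (hdeg s hs).trans hd) ?_ hf hfdeg hfg
  calc (2 * ((n - 1) * (2 ^ (n * 2 ^ (2 * n + 6)) * d ^ (n * 2 ^ (3 * n + 2))))) ^ 2 ^ n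
      ≤ ((2 * n * d) ^ (n * 2 ^ (3 * n + 8))) ^ 2 ^ n := by
        gcongr
        exact two_mul_le_two_mul_mul_pow (by omega) d
    _ = (2 * n * d) ^ (n * 2 ^ (4 * n + 8)) := by
        rw [← pow_mul]
        congr 1
        ring

end Colon

/-- Suppose no nonzero element of `I` involves only `x₁,…,x_r`, and `I`
is prime up to `(2nd)^(n·2^(4n+8))`.  Then `I : (f) = I` (elementwise: `f·g ∈ I → g ∈ I`)
for every irreducible `f` involving only `x₁,…,x_r` of total degree at most
`(n−1)·2^(n·2^(2n+6))·d^(n·2^(3n+2))`. -/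
theorem bounded_prime_implies_quotient_by_small_irreducibles
    (k : Type*) [Field k] (n d r : ℕ) (hn : 1 < n) (hd : 1 < d) (hr : r ≤ n)
    (I : Ideal (MvPolynomial (Fin n) k))
    (S : Set (MvPolynomial (Fin n) k)) (hgen : I = Ideal.span S)
    (hdeg : ∀ g ∈ S, g.totalDegree ≤ d)
    (hind : ∀ f ∈ I, (∀ i ∈ MvPolynomial.vars f, (i : ℕ) < r) → f = 0)
    (hprime : ∀ f g : MvPolynomial (Fin n) k,
      f.totalDegree ≤ (2 * n * d) ^ (n * 2 ^ (4 * n + 8)) →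
      g.totalDegree ≤ (2 * n * d) ^ (n * 2 ^ (4 * n + 8)) →
      f * g ∈ I → f ∈ I ∨ g ∈ I) :
    ∀ f : MvPolynomial (Fin n) k,
      (∀ i ∈ f.vars, (i : ℕ) < r) → Irreducible f →
      f.totalDegree ≤ (n - 1) * (2 ^ (n * 2 ^ (2 * n + 6)) * d ^ (n * 2 ^ (3 * n + 2))) →
      ∀ g : MvPolynomial (Fin n) k, f * g ∈ I → g ∈ I :=
  fun _ hvars hirr hfdeg _ => bounded_prime_implies_quotient_by_small_irreducibles_general hn hgen
    hdeg hprime (fun hfI => hirr.ne_zero (hind _ hfI hvars)) hfdeg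
end

section
/- Let k be a field, n > 1 and d > 1 natural numbers, and let I be an ideal of k[x_1,…,x_n] generated by polynomials of total degree at most d. Let r ≤ n and suppose that the only polynomial in I involving only the variables x_1,…,x_r is 0, while for each j with r < j ≤ n there is a nonzero element of I involving only the variables x_1,…,x_r,x_j. If I is prime up to (2nd)^(n·2^(4n+8)), then for every nonzero polynomial h involving only the variables x_1,…,x_r and every g ∈ k[x_1,…,x_n] with h·g ∈ I, it follows that g ∈ I (that is, the extension of I to k(x_1,…,x_r)[x_{r+1},…,x_n] contracts back to I). -/
/-!
Write `A = k[x_1, …, x_r]` and `y_1, …, y_s` for the remaining variables, so that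
`I = (f_1, …, f_l)` is an ideal of `A[y_1, …, y_s]`. If `h g ∈ I` with `0 ≠ h ∈ A`, the equation
`∑ f_i b_i = g` is solvable over `Frac A [y_1, …, y_s]`, and Hermann's elimination of the `y_i`
solves it with a denominator that is a product of nonzero elements `c ∈ A` whose degree is bounded
in terms of `d` and `s` alone. Each such `c` is outside `I` and is a nonzerodivisor modulo `I`: the
colon ideal `I : c` is generated by `I` and first components of syzygies of `c, f_1, …, f_l`, and
these are generated in bounded degree, again by Hermann's method, so that primality up to that
degree applies. Hence `g ∈ I`.

The elimination step: a matrix with independent rows has a right inverse up to a maximal minor `Δ`.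
After a linear change of variables the leading coefficient of `Δ` in one variable `y_0` is constant,
so solutions can be reduced modulo `Δ`, and comparing coefficients of the powers of `y_0` gives a
larger linear system in one variable fewer.
-/

namespace HermannBounds

open Matrix

section Graded

variable {A ι S n : Type*} [CommRing A] [AddCommMonoid ι] [SetLike S A] [AddSubgroupClass S A]
  [Fintype n] [DecidableEq n] (V : ι → S) [SetLike.GradedMonoid V] {M : Matrix n n A}

theorem det_mem_graded {w : n → ι} (hM : ∀ i j, M i j ∈ V (w i)) : M.det ∈ V (∑ i, w i) := by
  rw [det_apply]
  refine sum_mem fun σ _ => ?_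
  have hprod : ∏ i, M (σ i) i ∈ V (∑ i, w i) := by
    rw [← Equiv.sum_comp σ]
    exact SetLike.prod_mem_graded V _ _ fun i _ => hM (σ i) i
  rw [Units.smul_def]
  exact zsmul_mem hprod _

theorem adjugate_mem_graded {w : ι} (hM : ∀ i j, M i j ∈ V w) (i j : n) :
    M.adjugate i j ∈ V ((Fintype.card n - 1) • w) := by
  have hw : ∑ a, Function.update (fun _ => w) j 0 a = (Fintype.card n - 1) • w := by
    rw [Finset.sum_update_of_mem (Finset.mem_univ j)]
    simp [Finset.card_sdiff]
  rw [adjugate_apply, ← hw]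
  refine det_mem_graded V fun a b => ?_
  rcases eq_or_ne a j with rfl | ha
  · simp only [updateRow_self, Function.update_self, Pi.single_apply]
    split_ifs
    · exact SetLike.one_mem_graded V
    · exact zero_mem _
  · rw [updateRow_ne ha, Function.update_of_ne ha]
    exact hM a b

end Graded

section Minors

variable {R ι κ ρ : Type*} [CommRing R]

theorem exists_linearIndependent_rows [Fintype κ] [IsDomain R] (F : Matrix ι κ R) :
    ∃ s : Finset ι, LinearIndependent R (F.submatrix ((↑) : s → ι) id).row ∧
      ∀ v, F.submatrix ((↑) : s → ι) id *ᵥ v = 0 → F *ᵥ v = 0 := by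
  obtain ⟨s, hs, hmax⟩ := exists_maximal_linearIndepOn R F.row
  lift s to Finset ι using hs.finite
  refine ⟨s, hs, fun v hv => ?_⟩
  have hspan : ∀ x ∈ Submodule.span R (F.row '' s), x ⬝ᵥ v = 0 := fun x hx => by
    induction hx using Submodule.span_induction with
    | mem x hx =>
      obtain ⟨i, hi, rfl⟩ := hx
      exact congrFun hv ⟨i, hi⟩
    | zero => exact zero_dotProduct v
    | add x y _ _ hx hy => rw [add_dotProduct, hx, hy, add_zero]
    | smul c x _ hx => rw [smul_dotProduct, hx, smul_zero]
  funext i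
  by_cases hi : i ∈ s
  · exact congrFun hv ⟨i, hi⟩
  · obtain ⟨c, hc, hci⟩ := hmax i hi
    have hzero := hspan _ hci
    rw [smul_dotProduct, smul_eq_mul] at hzero
    exact (mul_eq_zero.1 hzero).resolve_left hc

theorem exists_det_submatrix_ne_zero [Finite κ] [Fintype ρ] [DecidableEq ρ] [IsDomain R]
    {G : Matrix ρ κ R} (hG : LinearIndependent R G.row) :
    ∃ c : ρ → κ, (G.submatrix id c).det ≠ 0 := by
  have := Fintype.ofFinite κ
  obtain ⟨s, hs, hker⟩ := exists_linearIndependent_rows Gᵀ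
  have hrows : ∀ v, v ᵥ* G.submatrix id ((↑) : s → κ) = 0 → v = 0 := fun v hv => by
    have hvG : v ᵥ* G = 0 := by
      rw [← mulVec_transpose]
      exact hker v (by rwa [← transpose_submatrix, mulVec_transpose])
    exact vecMul_injective_iff.2 hG (hvG.trans (zero_vecMul G).symm)
  have hcard : Fintype.card ρ = Fintype.card s := by
    apply le_antisymm
    · have hind : LinearIndependent R (G.submatrix id ((↑) : s → κ)).row :=
        vecMul_injective_iff.1 ((injective_iff_map_eq_zero
          (G.submatrix id ((↑) : s → κ)).vecMulLinear).2 hrows)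
      simpa only [Module.finrank_fintype_fun_eq_card] using hind.fintype_card_le_finrank
    · simpa only [Module.finrank_fintype_fun_eq_card] using hs.fintype_card_le_finrank
  obtain ⟨e⟩ := Fintype.card_eq.1 hcard
  refine ⟨(↑) ∘ e, fun h0 => ?_⟩
  obtain ⟨v, hv, hv0⟩ := exists_vecMul_eq_zero_iff.2 h0
  refine hv (hrows v (funext fun j => ?_))
  obtain ⟨i, rfl⟩ := e.surjective j
  exact congrFun hv0 i

theorem exists_maximal_minor [Finite ι] [DecidableEq ι] [Fintype κ] [IsDomain R]
    (F : Matrix ι κ R) :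
    ∃ (r : Finset ι) (c : r → κ), r.card ≤ Nat.card ι ∧
      ((F.submatrix (↑) id).submatrix id c).det ≠ 0 ∧
      ∀ v, F.submatrix ((↑) : r → ι) id *ᵥ v = 0 → F *ᵥ v = 0 := by
  obtain ⟨r, hr, hker⟩ := exists_linearIndependent_rows F
  obtain ⟨c, hc⟩ := exists_det_submatrix_ne_zero hr
  refine ⟨r, c, ?_, hc, hker⟩
  rw [← Nat.card_eq_finsetCard]
  exact Finite.card_subtype_le _

/-- A right inverse of `G` up to the factor `det (G.submatrix id c)`: the adjugate of the block
formed by the columns `c`, its rows placed at the indices `c`. -/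
def minorInverse [DecidableEq κ] [Fintype ρ] [DecidableEq ρ] (G : Matrix ρ κ R) (c : ρ → κ) :
    Matrix κ ρ R :=
  (1 : Matrix κ κ R).submatrix id c * (G.submatrix id c).adjugate

variable [DecidableEq κ] [Fintype ρ] [DecidableEq ρ] (G : Matrix ρ κ R) (c : ρ → κ)

theorem mul_minorInverse [Fintype κ] : G * minorInverse G c = (G.submatrix id c).det • 1 := by
  have hcols : G * (1 : Matrix κ κ R).submatrix id c = G.submatrix id c :=
    mul_submatrix_one (Equiv.refl κ) c G
  rw [minorInverse, ← Matrix.mul_assoc, hcols, mul_adjugate]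

theorem minorInverse_mem_graded {S γ : Type*} [AddCommMonoid γ] [SetLike S R]
    [AddSubgroupClass S R] (V : γ → S) [SetLike.GradedMonoid V] {G : Matrix ρ κ R} {w : γ}
    (hG : ∀ i j, G i j ∈ V w) (j : κ) (i : ρ) :
    minorInverse G c j i ∈ V ((Fintype.card ρ - 1) • w) := by
  rw [minorInverse, mul_apply]
  refine sum_mem fun x _ => ?_
  rw [submatrix_apply, one_apply, ite_mul, one_mul, zero_mul]
  split_ifs
  · exact adjugate_mem_graded V (fun i j => hG i (c j)) x i
  · exact zero_mem _

end Minors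

section Transport

variable {R R' ι κ ρ : Type*} [CommRing R] [CommRing R'] [Fintype κ]

theorem map_mulVec_comp {𝓕 : Type*} [FunLike 𝓕 R R']
    [RingHomClass 𝓕 R R'] (f : 𝓕) (F : Matrix ι κ R) (a : κ → R) :
    F.map f *ᵥ (f ∘ a) = f ∘ (F *ᵥ a) :=
  funext fun i => ((f : R →+* R').map_mulVec F a i).symm

theorem mulVec_symm_comp_eq_zero (φ : R ≃+* R') {F : Matrix ρ κ R} {u : κ → R'}
    (h : F.map φ *ᵥ u = 0) : F *ᵥ (φ.symm ∘ u) = 0 := by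
  have hu : φ ∘ φ.symm ∘ u = u := funext fun j => φ.apply_symm_apply (u j)
  have hφ : φ ∘ (F *ᵥ (φ.symm ∘ u)) = 0 := by
    rw [← map_mulVec_comp, hu, h]
  exact funext fun i => (map_eq_zero_iff φ φ.injective).1 (congrFun hφ i)

theorem smul_eq_add_symm_comp_of_map {A : Type*} [CommRing A] [Algebra A R] [Algebra A R']
    [Fintype ρ] (φ : R ≃ₐ[A] R') {c : A} {Δ : R} {F : Matrix ρ κ R} {N : Matrix κ ρ R}
    {a q : κ → R} {u : κ → R'}
    (h : c • (φ ∘ a) = φ Δ • (φ ∘ q) - N.map φ *ᵥ (F.map φ *ᵥ (φ ∘ q)) + u) :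
    c • a = Δ • q - N *ᵥ (F *ᵥ q) + φ.symm ∘ u := by
  rw [map_mulVec_comp, map_mulVec_comp] at h
  refine funext fun j => φ.injective ?_
  have hj := congrFun h j
  simp only [Pi.smul_apply, Pi.add_apply, Pi.sub_apply, Function.comp_apply, smul_eq_mul] at hj
  simp only [Pi.smul_apply, Pi.add_apply, Pi.sub_apply, Function.comp_apply, smul_eq_mul, map_smul,
    map_add, map_sub, map_mul, AlgEquiv.apply_symm_apply, hj]

end Transport

section Solvability

variable {A R R' ι κ ρ : Type*} [CommRing A] [CommRing R] [Algebra A R] [CommRing R']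
  [Algebra A R'] [Fintype κ]

/-- Solvability of the linear system `F b = g` with a denominator from `T`. -/
def SolvableUpTo (T : Submonoid A) (F : Matrix ι κ R) (g : ι → R) : Prop :=
  ∃ t ∈ T, ∃ b, F *ᵥ b = t • g

variable {T : Submonoid A} {F : Matrix ι κ R} {g : ι → R}

theorem SolvableUpTo.submatrix (h : SolvableUpTo T F g) (e : ρ → ι) :
    SolvableUpTo T (F.submatrix e id) (g ∘ e) := by
  obtain ⟨t, ht, b, hb⟩ := h
  exact ⟨t, ht, b, funext fun i => congrFun hb (e i)⟩

open nonZeroDivisors in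
theorem SolvableUpTo.of_submatrix [Module.IsTorsionFree A R] [IsDomain A] {e : ρ → ι}
    (hker : ∀ v, F.submatrix e id *ᵥ v = 0 → F *ᵥ v = 0) (hF : SolvableUpTo A⁰ F g)
    (h : SolvableUpTo T (F.submatrix e id) (g ∘ e)) : SolvableUpTo T F g := by
  obtain ⟨σ, hσ, a, ha⟩ := hF
  obtain ⟨t, ht, b, hb⟩ := h
  have hrows : F.submatrix e id *ᵥ (σ • b - t • a) = 0 := by
    have haρ : F.submatrix e id *ᵥ a = σ • (g ∘ e) := funext fun i => congrFun ha (e i)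
    rw [mulVec_sub, mulVec_smul, mulVec_smul, hb, haρ, smul_comm, sub_self]
  have hzero := hker _ hrows
  rw [mulVec_sub, mulVec_smul, mulVec_smul, ha, smul_comm t σ, ← smul_sub] at hzero
  exact ⟨t, ht, b, sub_eq_zero.1 ((smul_eq_zero_iff_right (nonZeroDivisors.ne_zero hσ)).1 hzero)⟩

theorem solvableUpTo_map_iff (φ : R ≃ₐ[A] R') :
    SolvableUpTo T (F.map φ) (φ ∘ g) ↔ SolvableUpTo T F g := by
  have key : ∀ (t : A) (b : κ → R), F.map φ *ᵥ (φ ∘ b) = t • (φ ∘ g) ↔ F *ᵥ b = t • g := by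
    intro t b
    have hg : t • (φ ∘ g) = φ ∘ (t • g) := funext fun i => (map_smul φ t (g i)).symm
    rw [map_mulVec_comp, hg, φ.injective.comp_left.eq_iff]
  refine exists_congr fun t => and_congr_right fun _ => ⟨?_, ?_⟩
  · rintro ⟨b, hb⟩
    have hφ : φ ∘ φ.symm ∘ b = b := funext fun j => φ.apply_symm_apply (b j)
    exact ⟨φ.symm ∘ b, (key t _).1 (by rwa [hφ])⟩
  · rintro ⟨b, hb⟩
    exact ⟨φ ∘ b, (key t b).2 hb⟩

theorem solvableUpTo_iff_of_smul_eq_mulVec_add {c : A} (hc : c ∈ T) {q : κ → R} {g' : ι → R}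
    (h : c • g = F *ᵥ q + g') : SolvableUpTo T F g ↔ SolvableUpTo T F g' := by
  constructor
  · rintro ⟨t, ht, b, hb⟩
    refine ⟨t, ht, c • b - t • q, ?_⟩
    rw [mulVec_sub, mulVec_smul, mulVec_smul, hb, smul_comm, h, smul_add, add_sub_cancel_left]
  · rintro ⟨t, ht, b, hb⟩
    refine ⟨t * c, mul_mem ht hc, b + t • q, ?_⟩
    rw [mulVec_add, mulVec_smul, hb, mul_smul, h, smul_add, add_comm]

end Solvability

section Elimination

open Polynomial

variable {B ρ κ : Type*} [CommRing B] {D d : ℕ}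

theorem mul_mem_degreeLT {p f : B[X]} (hp : p.natDegree ≤ d) (hf : f ∈ degreeLT B D) :
    p * f ∈ degreeLT B (D + d) := by
  rcases eq_or_ne f 0 with rfl | hf0
  · rw [mul_zero]
    exact zero_mem _
  · rw [mem_degreeLT, degree_eq_natDegree hf0, Nat.cast_lt] at hf
    exact mem_degreeLT.2 (degree_le_natDegree.trans_lt
      (Nat.cast_lt.2 (natDegree_mul_le.trans_lt (by omega))))

theorem mem_degreeLT_of_mul_mem [IsDomain B] {p f : B[X]} (hp : p ≠ 0)
    (h : p * f ∈ degreeLT B (p.natDegree + d)) : f ∈ degreeLT B d := by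
  rw [mem_degreeLT] at h ⊢
  rw [degree_mul, degree_eq_natDegree hp] at h
  push_cast at h
  exact lt_of_add_lt_add_left h

theorem mulVec_mem_degreeLT [Fintype κ] {M : Matrix ρ κ B[X]} (hM : ∀ i j, (M i j).natDegree ≤ d)
    {v : κ → B[X]} (hv : ∀ j, v j ∈ degreeLT B D) (i : ρ) : (M *ᵥ v) i ∈ degreeLT B (D + d) :=
  sum_mem fun j _ => mul_mem_degreeLT (hM i j) (hv j)

theorem exists_pseudo_div (Δ f : B[X]) :
    ∃ (n : ℕ) (q : B[X]), ∃ r ∈ degreeLT B Δ.natDegree,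
      Δ.leadingCoeff ^ n • f = Δ * q + r := by
  suffices H : ∀ (e : ℕ), ∀ f ∈ degreeLT B (Δ.natDegree + e), ∃ (n : ℕ) (q : B[X]),
      ∃ r ∈ degreeLT B Δ.natDegree, Δ.leadingCoeff ^ n • f = Δ * q + r from
    H (f.natDegree + 1) f (degreeLT_mono (Nat.le_add_left _ _) (mem_degreeLT.2
      (degree_le_natDegree.trans_lt (WithBot.coe_lt_coe.2 f.natDegree.lt_succ_self))))
  intro e
  induction e with
  | zero => exact fun f hf => ⟨0, 0, f, hf, by simp⟩
  | succ e ih =>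
    intro f hf
    set c := f.coeff (Δ.natDegree + e)
    obtain ⟨n, q, r, hr, h⟩ := ih (Δ.leadingCoeff • f - Δ * monomial e c) (by
      rw [mem_degreeLT, degree_lt_iff_coeff_zero] at hf ⊢
      intro p hp
      obtain ⟨p, rfl⟩ := Nat.exists_eq_add_of_le' ((Nat.le_add_left _ _).trans hp)
      rw [coeff_sub, coeff_smul, smul_eq_mul, coeff_mul_monomial]
      rcases (Nat.add_le_add_iff_right.1 hp).eq_or_lt with rfl | hlt
      · exact sub_self _
      · rw [hf _ (by omega), coeff_eq_zero_of_natDegree_lt hlt]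
        simp)
    refine ⟨n + 1, q + Δ.leadingCoeff ^ n • monomial e c, r, hr, ?_⟩
    rw [smul_sub, smul_smul, ← pow_succ, sub_eq_iff_eq_add] at h
    rw [h, mul_add, mul_smul_comm]
    abel

theorem exists_pseudo_div_vec [Finite κ] (Δ : B[X]) (f : κ → B[X]) :
    ∃ (n : ℕ) (q r : κ → B[X]), (∀ j, r j ∈ degreeLT B Δ.natDegree) ∧
      Δ.leadingCoeff ^ n • f = Δ • q + r := by
  have := Fintype.ofFinite κ
  choose n q r hr h using fun j => exists_pseudo_div Δ (f j)
  set m : κ → ℕ := fun j => ∑ i, n i - n j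
  refine ⟨∑ j, n j, fun j => Δ.leadingCoeff ^ m j • q j, fun j => Δ.leadingCoeff ^ m j • r j,
    fun j => Submodule.smul_mem _ _ (hr j), funext fun j => ?_⟩
  have hj : ∑ i, n i = m j + n j :=
    (Nat.sub_add_cancel (Finset.single_le_sum_of_canonicallyOrdered (Finset.mem_univ j))).symm
  rw [Pi.smul_apply, Pi.add_apply, Pi.smul_apply, hj, pow_add, mul_smul, h, smul_add,
    smul_eq_mul, mul_smul_comm]

/-- The matrix over the coefficient ring `B` expressing `G` on vectors of polynomials of degree
less than `D`, in terms of the coefficients of degree less than `D'` of the result. -/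
noncomputable def flat (G : Matrix ρ κ B[X]) (D D' : ℕ) : Matrix (ρ × Fin D') (κ × Fin D) B :=
  of fun x y => (G x.1 y.1 * X ^ (y.2 : ℕ)).coeff x.2

/-- The vector of polynomials of degree less than `D` with prescribed coefficients. -/
noncomputable def unflat (B κ : Type*) [CommRing B] (D : ℕ) :
    (κ × Fin D → B) →ₗ[B] (κ → B[X]) :=
  LinearMap.pi fun j => ∑ q : Fin D, monomial (q : ℕ) ∘ₗ LinearMap.proj (j, q)

/-- The coefficients of degree less than `D` of a vector of polynomials, as a single vector. -/
def coeffVec (D : ℕ) (g : ρ → B[X]) : ρ × Fin D → B :=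
  fun x => (g x.1).coeff x.2

theorem unflat_apply (b : κ × Fin D → B) (j : κ) :
    unflat B κ D b j = ∑ q : Fin D, C (b (j, q)) * X ^ (q : ℕ) := by
  simp only [unflat, LinearMap.pi_apply, LinearMap.sum_apply, LinearMap.comp_apply,
    LinearMap.proj_apply, C_mul_X_pow_eq_monomial]

theorem unflat_mem_degreeLT (b : κ × Fin D → B) (j : κ) : unflat B κ D b j ∈ degreeLT B D := by
  rw [unflat_apply]
  refine sum_mem fun q _ => mem_degreeLT.2 ?_
  exact (degree_C_mul_X_pow_le _ _).trans_lt (Nat.cast_lt.2 q.isLt)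

theorem coeffVec_unflat (b : κ × Fin D → B) : coeffVec D (unflat B κ D b) = b := by
  funext ⟨j, p⟩
  simp only [coeffVec, unflat_apply, finsetSum_coeff, coeff_C_mul_X_pow, Fin.val_inj]
  rw [Finset.sum_ite_eq, if_pos (Finset.mem_univ p)]

theorem unflat_coeffVec {g : ρ → B[X]} (hg : ∀ i, g i ∈ degreeLT B D) :
    unflat B ρ D (coeffVec D g) = g := by
  funext i
  ext p
  rw [unflat_apply]
  simp only [coeffVec, finsetSum_coeff, coeff_C_mul_X_pow]
  rw [Fin.sum_univ_eq_sum_range fun q => if p = q then (g i).coeff q else 0, Finset.sum_ite_eq]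
  split_ifs with hp
  · rfl
  · rw [Finset.mem_range, not_lt] at hp
    exact (degree_lt_iff_coeff_zero _ _).1 (mem_degreeLT.1 (hg i)) p hp |>.symm

theorem symm_comp_unflat_mem_of_mem_span {R : Type*} [CommRing R] (φ : R ≃+* B[X])
    {P : Submodule R (κ → R)} {S : Set (κ × Fin D → B)}
    (hS : ∀ b ∈ S, φ.symm ∘ unflat B κ D b ∈ P) {b : κ × Fin D → B}
    (hb : b ∈ Submodule.span B S) : φ.symm ∘ unflat B κ D b ∈ P := by
  induction hb using Submodule.span_induction with
  | mem b hb => exact hS b hb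
  | zero =>
    rw [map_zero]
    convert zero_mem P using 1
    exact funext fun _ => map_zero φ.symm
  | add x y _ _ hx hy =>
    rw [map_add]
    convert add_mem hx hy using 1
    exact funext fun j => map_add φ.symm _ _
  | smul t x _ hx =>
    rw [map_smul]
    convert P.smul_mem (φ.symm (C t)) hx using 1
    refine funext fun j => ?_
    rw [Function.comp_apply, Pi.smul_apply, Pi.smul_apply, smul_eq_C_mul, map_mul, smul_eq_mul,
      Function.comp_apply]

variable [Fintype κ] {G : Matrix ρ κ B[X]}

theorem coeffVec_mulVec_unflat (G : Matrix ρ κ B[X]) (D' : ℕ) (b : κ × Fin D → B) :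
    coeffVec D' (G *ᵥ unflat B κ D b) = flat G D D' *ᵥ b := by
  funext x
  simp only [coeffVec, mulVec, dotProduct, flat, of_apply, unflat_apply, finsetSum_coeff,
    Fintype.sum_prod_type, Finset.mul_sum]
  refine Finset.sum_congr rfl fun j _ => Finset.sum_congr rfl fun q _ => ?_
  rw [mul_left_comm, coeff_C_mul, mul_comm]

theorem flat_mulVec_eq_coeffVec_iff (hG : ∀ i j, (G i j).natDegree ≤ d) {g : ρ → B[X]}
    (hg : ∀ i, g i ∈ degreeLT B (D + d)) (b : κ × Fin D → B) :
    flat G D (D + d) *ᵥ b = coeffVec (D + d) g ↔ G *ᵥ unflat B κ D b = g := by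
  rw [← coeffVec_mulVec_unflat]
  refine ⟨fun h => ?_, congrArg _⟩
  rw [← unflat_coeffVec hg, ← h,
    unflat_coeffVec (mulVec_mem_degreeLT hG (unflat_mem_degreeLT b))]

theorem flat_mulVec_eq_zero_iff (hG : ∀ i j, (G i j).natDegree ≤ d) (b : κ × Fin D → B) :
    flat G D (D + d) *ᵥ b = 0 ↔ G *ᵥ unflat B κ D b = 0 := by
  rw [← flat_mulVec_eq_coeffVec_iff hG (g := 0) (fun _ => zero_mem _)]
  exact Iff.rfl

variable {N : Matrix κ ρ B[X]} {Δ : B[X]}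

section RightInverse

variable [Fintype ρ]

/-- Writing `a = Δ q + r`, the vector `G q` has small degree because `Δ • G q = g - G r`, and
`r + N (G q)` is the reduced solution. -/
theorem exists_reduced_solution [IsDomain B] (hΔ : Δ ≠ 0) (hN : ∀ i j, (N i j).natDegree ≤ D)
    (hΔD : Δ.natDegree ≤ D) (hG : ∀ i j, (G i j).natDegree ≤ d) {a : κ → B[X]}
    (ha : ∀ i, (G *ᵥ a) i ∈ degreeLT B (Δ.natDegree + d)) :
    ∃ (n : ℕ) (q r : κ → B[X]), (∀ j, r j ∈ degreeLT B (D + d)) ∧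
      Δ.leadingCoeff ^ n • a = Δ • q - N *ᵥ (G *ᵥ q) + r := by
  obtain ⟨n, q, r, hr, h⟩ := exists_pseudo_div_vec Δ a
  have hGq : ∀ i, (G *ᵥ q) i ∈ degreeLT B d := fun i => by
    refine mem_degreeLT_of_mul_mem hΔ ?_
    have hi : Δ * (G *ᵥ q) i = Δ.leadingCoeff ^ n • (G *ᵥ a) i - (G *ᵥ r) i := by
      rw [← Pi.smul_apply, ← mulVec_smul, h, mulVec_add, mulVec_smul, Pi.add_apply,
        add_sub_cancel_right, Pi.smul_apply, smul_eq_mul]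
    rw [hi]
    exact sub_mem (Submodule.smul_mem _ _ (ha i)) (mulVec_mem_degreeLT hG hr i)
  refine ⟨n, q, r + N *ᵥ (G *ᵥ q), fun j => add_mem (degreeLT_mono (by omega) (hr j)) ?_, ?_⟩
  · rw [add_comm D]
    exact mulVec_mem_degreeLT hN hGq j
  · rw [h]
    abel

theorem mul_mulVec_of_mul_eq_smul_one [DecidableEq ρ] (h : G * N = Δ • 1) (v : ρ → B[X]) :
    G *ᵥ (N *ᵥ v) = Δ • v := by
  rw [mulVec_mulVec, h, smul_mulVec, one_mulVec]

theorem exists_flat_syzygy [IsDomain B] [DecidableEq ρ] (hGN : G * N = Δ • 1) (hΔ : Δ ≠ 0)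
    (hN : ∀ i j, (N i j).natDegree ≤ D) (hΔD : Δ.natDegree ≤ D)
    (hG : ∀ i j, (G i j).natDegree ≤ d) {a : κ → B[X]} (ha : G *ᵥ a = 0) :
    ∃ (n : ℕ) (q : κ → B[X]) (b : κ × Fin (D + d) → B),
      flat G (D + d) (D + d + d) *ᵥ b = 0 ∧
        Δ.leadingCoeff ^ n • a = Δ • q - N *ᵥ (G *ᵥ q) + unflat B κ (D + d) b := by
  obtain ⟨n, q, r, hr, h⟩ := exists_reduced_solution hΔ hN hΔD hG (a := a) fun i => by
    rw [ha]
    exact zero_mem _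
  have hGr : G *ᵥ r = 0 := by
    have hGa := congrArg (G *ᵥ ·) h
    simp only [mulVec_add, mulVec_sub, mulVec_smul, mul_mulVec_of_mul_eq_smul_one hGN, sub_self,
      zero_add, ha, smul_zero] at hGa
    exact hGa.symm
  refine ⟨n, q, coeffVec (D + d) r, ?_, by rw [unflat_coeffVec hr, h]⟩
  rw [flat_mulVec_eq_zero_iff hG, unflat_coeffVec hr, hGr]

end RightInverse

theorem solvableUpTo_flat_iff {A : Type*} [CommRing A] [Algebra A B] [IsDomain B] [Finite ρ]
    [DecidableEq ρ] {T : Submonoid A} {γ : A} (hγ : γ ∈ T) (hlc : Δ.leadingCoeff = algebraMap A B γ)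
    (hGN : G * N = Δ • 1) (hΔ : Δ ≠ 0) (hN : ∀ i j, (N i j).natDegree ≤ D)
    (hΔD : Δ.natDegree ≤ D) (hG : ∀ i j, (G i j).natDegree ≤ d) {g : ρ → B[X]}
    (hg : ∀ i, g i ∈ degreeLT B Δ.natDegree) :
    SolvableUpTo T (flat G (D + d) (D + d + d)) (coeffVec (D + d + d) g) ↔
      SolvableUpTo T G g := by
  have := Fintype.ofFinite ρ
  have hcoeff (t : A) : t • coeffVec (D + d + d) g = coeffVec (D + d + d) (t • g) :=
    funext fun x => (coeff_smul t (g x.1) x.2).symm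
  have hsmul (t : A) (i : ρ) : (t • g) i ∈ degreeLT B Δ.natDegree := by
    rw [Pi.smul_apply, ← algebraMap_smul B t (g i)]
    exact Submodule.smul_mem _ _ (hg i)
  have hflat (t : A) (b) := flat_mulVec_eq_coeffVec_iff hG (D := D + d) (g := t • g)
    (fun i => degreeLT_mono (by omega) (hsmul t i)) b
  constructor
  · rintro ⟨t, ht, b, hb⟩
    exact ⟨t, ht, unflat B κ (D + d) b, (hflat t b).1 (by rw [hb, hcoeff])⟩
  · rintro ⟨t, ht, a, ha⟩
    obtain ⟨n, q, r, hr, h⟩ := exists_reduced_solution hΔ hN hΔD hG (a := a) fun i => by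
      rw [ha]
      exact degreeLT_mono (Nat.le_add_right _ _) (hsmul t i)
    have hGr : G *ᵥ r = (γ ^ n * t) • g := by
      have hGa := congrArg (G *ᵥ ·) h
      simp only [mulVec_add, mulVec_sub, mulVec_smul, mul_mulVec_of_mul_eq_smul_one hGN, sub_self,
        zero_add] at hGa
      rw [← hGa, ha, hlc, ← map_pow, algebraMap_smul, mul_smul]
    refine ⟨γ ^ n * t, mul_mem (pow_mem hγ n) ht, coeffVec (D + d) r, ?_⟩
    rw [hcoeff]
    exact (hflat _ _).2 (by rw [unflat_coeffVec hr, hGr])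

end Elimination

section Filtered

open MvPolynomial

instance gradedMonoid_restrictTotalDegree (σ R : Type*) [CommSemiring R] :
    SetLike.GradedMonoid (restrictTotalDegree σ R) where
  one_mem := (mem_restrictTotalDegree _ _ _).2 totalDegree_one.le
  mul_mem i j f g hf hg := by
    rw [mem_restrictTotalDegree] at hf hg ⊢
    exact (totalDegree_mul f g).trans (add_le_add hf hg)

theorem monotone_restrictTotalDegree (σ R : Type*) [CommSemiring R] :
    Monotone (restrictTotalDegree σ R) := fun i j hij f hf => by
  rw [mem_restrictTotalDegree] at hf ⊢
  exact hf.trans hij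

theorem X_mem_restrictTotalDegree {σ R : Type*} [CommSemiring R] (i : σ) :
    (X i : MvPolynomial σ R) ∈ restrictTotalDegree σ R 1 :=
  (mem_restrictTotalDegree _ _ _).2 ((totalDegree_monomial_le _ _).trans (by simp))

variable {k A : Type*} [CommRing k] [CommRing A] [Algebra k A] {V : ℕ → Submodule k A}

instance gradedMonoid_coeffsIn (σ : Type*) [hV : SetLike.GradedMonoid V] :
    SetLike.GradedMonoid fun i => coeffsIn σ (V i) where
  one_mem := C_mem_coeffsIn.2 hV.one_mem
  mul_mem i j f g hf hg := by
    classical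
    rw [mem_coeffsIn] at hf hg ⊢
    intro m
    rw [coeff_mul]
    exact sum_mem fun x _ => hV.mul_mem (hf x.1) (hg x.2)

theorem aeval_mem_graded {σ R : Type*} [CommRing R] [Algebra R A] [SetLike.GradedMonoid V]
    (hV : Monotone V) {f : σ → A} {p : MvPolynomial σ R} {c d w : ℕ} (hf : ∀ i, f i ∈ V w)
    (hp : p.totalDegree ≤ d) (hc : ∀ m, algebraMap R A (p.coeff m) ∈ V c) :
    aeval f p ∈ V (c + d * w) := by
  rw [aeval_def, eval₂_eq]
  refine sum_mem fun m hm => ?_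
  have hprod : ∏ i ∈ m.support, f i ^ m i ∈ V ((∑ i ∈ m.support, m i) * w) := by
    rw [Finset.sum_mul]
    exact SetLike.prod_mem_graded _ _ _ fun i _ => SetLike.pow_mem_graded (m i) (hf i)
  have hdeg : ∑ i ∈ m.support, m i ≤ d := (le_totalDegree hm).trans hp
  exact hV (by gcongr) (SetLike.mul_mem_graded (hc m) hprod)

theorem exists_card_gt_forall_mem_restrictTotalDegree {τ R : Type*} [CommRing R] [Nontrivial R]
    [Nonempty τ] (N : ℕ) :
    ∃ L : Finset (MvPolynomial τ R), N < L.card ∧ ∀ x ∈ L, x ∈ restrictTotalDegree τ R N := by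
  classical
  obtain ⟨i⟩ := ‹Nonempty τ›
  have hinj : Function.Injective fun j => (X i : MvPolynomial τ R) ^ j := fun a b hab => by
    simpa using congrArg totalDegree hab
  refine ⟨(Finset.range (N + 1)).image fun j => X i ^ j, ?_, ?_⟩
  · rw [Finset.card_image_of_injective _ hinj, Finset.card_range]
    exact N.lt_succ_self
  · simp only [Finset.forall_mem_image, Finset.mem_range, mem_restrictTotalDegree,
      totalDegree_X_pow]
    omega

end Filtered

section Shear

open MvPolynomial

variable {A : Type*} [CommRing A] {s : ℕ}

/-- The images of the variables under the substitution `y_0 ↦ y_0`, `y_i ↦ y_i + l_i y_0` for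
`i > 0`. -/
noncomputable def shearVar (l : Fin s → A) : Fin (s + 1) → MvPolynomial (Fin (s + 1)) A :=
  Fin.cons (X 0) fun i => X i.succ + C (l i) * X 0

/-- The substitution `y_0 ↦ y_0`, `y_i ↦ y_i + l_i y_0` for `i > 0`. -/
noncomputable def shear (l : Fin s → A) :
    MvPolynomial (Fin (s + 1)) A →ₐ[A] MvPolynomial (Fin (s + 1)) A :=
  aeval (shearVar l)

theorem shear_comp_shear_neg (l : Fin s → A) :
    (shear l).comp (shear (-l)) = AlgHom.id A _ := by
  refine MvPolynomial.algHom_ext fun i => ?_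
  refine Fin.cases ?_ (fun i => ?_) i
  · simp [shear, shearVar]
  · simp [shear, shearVar, algHom_C, MvPolynomial.algebraMap_eq]

theorem totalDegree_shear_le (l : Fin s → A) (p : MvPolynomial (Fin (s + 1)) A) :
    (shear l p).totalDegree ≤ p.totalDegree := by
  have hvar (i) : shearVar l i ∈
      restrictTotalDegree (Fin (s + 1)) A 1 := by
    refine Fin.cases (X_mem_restrictTotalDegree 0) (fun i => ?_) i
    refine add_mem (X_mem_restrictTotalDegree i.succ) ?_
    rw [← smul_eq_C_mul]
    exact Submodule.smul_mem _ _ (X_mem_restrictTotalDegree 0)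
  have hmem := aeval_mem_graded (c := 0) (monotone_restrictTotalDegree (Fin (s + 1)) A) hvar
    (le_refl p.totalDegree) fun m =>
      (mem_restrictTotalDegree _ _ _).2 (totalDegree_C (coeff m p)).le
  rw [mem_restrictTotalDegree, zero_add, mul_one] at hmem
  exact hmem

theorem shear_mem_coeffsIn {k : Type*} [CommRing k] [Algebra k A] {V : ℕ → Submodule k A}
    [SetLike.GradedMonoid V] (hV : Monotone V) {N d e : ℕ} {l : Fin s → A} (hl : ∀ i, l i ∈ V N)
    {p : MvPolynomial (Fin (s + 1)) A} (hp : p.totalDegree ≤ d) (hpe : p ∈ coeffsIn _ (V e)) :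
    shear l p ∈ coeffsIn _ (V (e + d * N)) := by
  have hone : (1 : A) ∈ V N := hV (Nat.zero_le N) (SetLike.one_mem_graded V)
  have hvar (i) : shearVar l i ∈
      coeffsIn (Fin (s + 1)) (V N) := by
    refine Fin.cases (monomial_mem_coeffsIn.2 hone) (fun i => ?_) i
    exact add_mem (monomial_mem_coeffsIn.2 hone) (mul_X_mem_coeffsIn.2 (C_mem_coeffsIn.2 (hl i)))
  exact aeval_mem_graded (V := fun i => coeffsIn (Fin (s + 1)) (V i))
    (fun i j hij f hf m => hV hij (hf m)) hvar hp fun m => C_mem_coeffsIn.2 (hpe m)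

/-- A shear followed by singling out the variable `y_0`. -/
noncomputable def split (l : Fin s → A) :
    MvPolynomial (Fin (s + 1)) A ≃ₐ[A] Polynomial (MvPolynomial (Fin s) A) :=
  (AlgEquiv.ofAlgHom (shear l) (shear (-l)) (shear_comp_shear_neg l)
    (by simpa only [neg_neg] using shear_comp_shear_neg (-l))).trans (finSuccEquiv A s)

theorem split_apply (l : Fin s → A) (p : MvPolynomial (Fin (s + 1)) A) :
    split l p = finSuccEquiv A s (shear l p) := rfl

theorem natDegree_split_le (l : Fin s → A) (p : MvPolynomial (Fin (s + 1)) A) :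
    (split l p).natDegree ≤ p.totalDegree := by
  rw [split_apply, natDegree_finSuccEquiv]
  exact (degreeOf_le_totalDegree _ _).trans (totalDegree_shear_le l p)

theorem totalDegree_coeff_split_add_le (l : Fin s → A) (p : MvPolynomial (Fin (s + 1)) A) {i : ℕ}
    (hi : (split l p).coeff i ≠ 0) : ((split l p).coeff i).totalDegree + i ≤ p.totalDegree := by
  rw [split_apply] at hi ⊢
  exact (totalDegree_coeff_finSuccEquiv_add_le _ i hi).trans (totalDegree_shear_le l p)

theorem coeff_split_mem_coeffsIn {k : Type*} [CommRing k] [Algebra k A] {V : ℕ → Submodule k A}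
    [SetLike.GradedMonoid V] (hV : Monotone V) {N d e : ℕ} {l : Fin s → A} (hl : ∀ i, l i ∈ V N)
    {p : MvPolynomial (Fin (s + 1)) A} (hp : p.totalDegree ≤ d) (hpe : p ∈ coeffsIn _ (V e))
    (i : ℕ) : (split l p).coeff i ∈ coeffsIn _ (V (e + d * N)) := fun m => by
  rw [split_apply, finSuccEquiv_coeff_coeff]
  exact shear_mem_coeffsIn hV hl hp hpe _

theorem split_symm_apply (l : Fin s → A) (f : Polynomial (MvPolynomial (Fin s) A)) :
    (split l).symm f = shear (-l) ((finSuccEquiv A s).symm f) := rfl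

theorem finSuccEquiv_rename_succ (p : MvPolynomial (Fin s) A) :
    finSuccEquiv A s (rename Fin.succ p) = Polynomial.C p := by
  induction p using MvPolynomial.induction_on with
  | C a => rw [rename_C, ← MvPolynomial.algebraMap_eq, AlgEquiv.commutes]; rfl
  | add p q hp hq => rw [map_add, map_add, map_add, hp, hq]
  | mul_X p i hp => rw [map_mul, map_mul, map_mul, hp, rename_X, finSuccEquiv_X_succ]

theorem totalDegree_split_symm_le (l : Fin s → A) {D β : ℕ}
    {f : Polynomial (MvPolynomial (Fin s) A)} (hf : f ∈ Polynomial.degreeLT _ D)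
    (hb : ∀ i < D, (f.coeff i).totalDegree ≤ β) :
    ((split l).symm f).totalDegree ≤ β + D := by
  rw [split_symm_apply]
  refine (totalDegree_shear_le (-l) _).trans ?_
  have hsum : (finSuccEquiv A s).symm f =
      ∑ i ∈ f.support, rename Fin.succ (f.coeff i) * X 0 ^ i := by
    rw [AlgEquiv.symm_apply_eq, map_sum]
    simp only [map_mul, map_pow, finSuccEquiv_X_zero, finSuccEquiv_rename_succ]
    exact f.as_sum_support_C_mul_X_pow
  have hX := X_mem_restrictTotalDegree (R := A) (0 : Fin (s + 1))
  rw [hsum, ← mem_restrictTotalDegree]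
  refine sum_mem fun i hi => ?_
  have hiD : i < D := by
    by_contra! hDi
    exact Polynomial.mem_support_iff.1 hi
      ((Polynomial.degree_lt_iff_coeff_zero _ _).1 (Polynomial.mem_degreeLT.1 hf) i hDi)
  refine monotone_restrictTotalDegree _ _ ?_ (SetLike.mul_mem_graded
    ((mem_restrictTotalDegree _ _ _).2 ((totalDegree_rename_le _ _).trans (hb i hiD)))
    (SetLike.pow_mem_graded i hX))
  rw [smul_eq_mul, mul_one]
  omega

theorem coeff_aeval_C_mul_X {σ : Type*} (v : σ → A) (p : MvPolynomial σ A) (D : ℕ) :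
    (aeval (fun i => Polynomial.C (v i) * Polynomial.X) p).coeff D =
      eval v (homogeneousComponent D p) := by
  rw [homogeneousComponent_apply, aeval_def, eval₂_eq, map_sum, Polynomial.finsetSum_coeff,
    Finset.sum_filter]
  refine Finset.sum_congr rfl fun m _ => ?_
  have hprod : ∏ i ∈ m.support, (Polynomial.C (v i) * Polynomial.X) ^ m i =
      Polynomial.C (∏ i ∈ m.support, v i ^ m i) * Polynomial.X ^ m.degree := by
    simp only [mul_pow, Finset.prod_mul_distrib, Finset.prod_pow_eq_pow_sum, map_prod, map_pow]
    rfl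
  rw [hprod, Polynomial.algebraMap_eq, ← mul_assoc, ← Polynomial.C_mul,
    Polynomial.coeff_C_mul_X_pow, eval_monomial]
  exact if_congr eq_comm rfl rfl

theorem map_eval_zero_split (l : Fin s → A) (p : MvPolynomial (Fin (s + 1)) A) :
    (split l p).map (eval 0) =
      aeval (fun i => Polynomial.C ((Fin.cons 1 l : Fin (s + 1) → A) i) * Polynomial.X) p := by
  have hcomp : (Polynomial.mapAlgHom (aeval 0 : MvPolynomial (Fin s) A →ₐ[A] A)).comp
      (split l : _ →ₐ[A] _) = aeval fun i =>
        Polynomial.C ((Fin.cons 1 l : Fin (s + 1) → A) i) * Polynomial.X := by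
    refine MvPolynomial.algHom_ext fun i => ?_
    refine Fin.cases ?_ (fun i => ?_) i
    · simp [split_apply, shear, shearVar, finSuccEquiv_X_zero]
    · simp [split_apply, shear, shearVar, finSuccEquiv_apply]
  exact DFunLike.congr_fun hcomp p

theorem coeff_zero_coeff_split (l : Fin s → A) (p : MvPolynomial (Fin (s + 1)) A) (D : ℕ) :
    coeff 0 ((split l p).coeff D) =
      eval (Fin.cons 1 l : Fin (s + 1) → A) (homogeneousComponent D p) := by
  rw [← coeff_aeval_C_mul_X, ← map_eval_zero_split, Polynomial.coeff_map, eval_zero,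
    constantCoeff_eq]

theorem eval_one_finSuccEquiv_ne_zero {D : ℕ} {p : MvPolynomial (Fin (s + 1)) A}
    (hp : p.IsHomogeneous D) (hp0 : p ≠ 0) : Polynomial.eval 1 (finSuccEquiv A s p) ≠ 0 := by
  obtain ⟨m, hm⟩ := MvPolynomial.ne_zero_iff.1 hp0
  have hother : ∀ i, i ≠ m 0 → coeff m.tail ((finSuccEquiv A s p).coeff i) = 0 := fun i hi => by
    by_contra hne
    rw [finSuccEquiv_coeff_coeff] at hne
    have h1 := hp hne
    have h2 := hp hm
    rw [← Finsupp.cons_tail m] at h2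
    simp only [Finsupp.weight_apply, Pi.one_apply, smul_eq_mul, mul_one, Finsupp.sum_cons] at h1 h2
    omega
  refine MvPolynomial.ne_zero_iff.2 ⟨m.tail, ?_⟩
  simp only [Polynomial.eval_eq_sum, Polynomial.sum_def, one_pow, mul_one, coeff_sum]
  rw [Finset.sum_eq_single (m 0) (fun i _ => hother i), finSuccEquiv_coeff_coeff,
    Finsupp.cons_tail]
  · exact hm
  · intro h0
    rw [Polynomial.notMem_support_iff.1 h0, coeff_zero]

theorem totalDegree_eval_one_finSuccEquiv_le (p : MvPolynomial (Fin (s + 1)) A) :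
    (Polynomial.eval 1 (finSuccEquiv A s p)).totalDegree ≤ p.totalDegree := by
  simp only [Polynomial.eval_eq_sum, Polynomial.sum_def, one_pow, mul_one]
  refine totalDegree_finsetSum_le fun i hi => ?_
  exact (Nat.le_add_right _ _).trans
    (totalDegree_coeff_finSuccEquiv_add_le p i (Polynomial.mem_support_iff.1 hi))

theorem exists_eval_cons_one_ne_zero [IsDomain A] {D : ℕ} {p : MvPolynomial (Fin (s + 1)) A}
    (hp : p.IsHomogeneous D) (hp0 : p ≠ 0) {L : Finset A} (hL : D < L.card) :
    ∃ l : Fin s → A, (∀ i, l i ∈ L) ∧ eval (Fin.cons 1 l : Fin (s + 1) → A) p ≠ 0 := by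
  by_contra! hzero
  refine eval_one_finSuccEquiv_ne_zero hp hp0
    (eq_zero_of_eval_zero_at_prod_finset _ (fun _ => L) (fun i => ?_) fun l hl => ?_)
  · exact ((degreeOf_le_totalDegree _ _).trans ((totalDegree_eval_one_finSuccEquiv_le p).trans
      hp.totalDegree_le)).trans_lt hL
  · rw [← hzero l hl, eval_eq_eval_mv_eval', Polynomial.eval_one_map]

theorem homogeneousComponent_totalDegree_ne_zero {σ : Type*} {p : MvPolynomial σ A} (hp : p ≠ 0) :
    homogeneousComponent p.totalDegree p ≠ 0 := by
  obtain ⟨m, hm, hmD⟩ := Finset.exists_mem_eq_sup p.support (support_nonempty.2 hp)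
    fun m => m.sum fun _ e => e
  refine MvPolynomial.ne_zero_iff.2 ⟨m, ?_⟩
  rw [coeff_homogeneousComponent, if_pos]
  · exact mem_support_iff.1 hm
  · exact hmD.symm

/-- Over an infinite field this is the coordinate change of Noether normalization. -/
theorem exists_leadingCoeff_split_eq_C [IsDomain A] {p : MvPolynomial (Fin (s + 1)) A}
    (hp0 : p ≠ 0) {L : Finset A} (hL : p.totalDegree < L.card) :
    ∃ l : Fin s → A, (∀ i, l i ∈ L) ∧ ∃ γ : A, γ ≠ 0 ∧ (split l p).leadingCoeff = C γ := by
  obtain ⟨l, hl, hne⟩ := exists_eval_cons_one_ne_zero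
    (homogeneousComponent_isHomogeneous _ p) (homogeneousComponent_totalDegree_ne_zero hp0) hL
  refine ⟨l, hl, _, hne, ?_⟩
  rw [← coeff_zero_coeff_split] at hne ⊢
  have htop : (split l p).coeff p.totalDegree ≠ 0 := fun h => hne (by rw [h, coeff_zero])
  have hdeg : (split l p).natDegree = p.totalDegree :=
    le_antisymm (natDegree_split_le l p) (Polynomial.le_natDegree_of_ne_zero htop)
  have hconst := totalDegree_coeff_split_add_le l p htop
  rw [Polynomial.leadingCoeff, hdeg]
  exact totalDegree_eq_zero_iff_eq_C.1 (by omega)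

end Shear

section Syzygies

open MvPolynomial

theorem totalDegree_det_le {σ R n : Type*} [CommRing R] [Fintype n] [DecidableEq n] {d : ℕ}
    {M : Matrix n n (MvPolynomial σ R)} (hM : ∀ i j, (M i j).totalDegree ≤ d) :
    M.det.totalDegree ≤ Fintype.card n * d := by
  have hdet := det_mem_graded (restrictTotalDegree σ R) (w := fun _ => d) fun i j =>
    (mem_restrictTotalDegree _ _ _).2 (hM i j)
  simpa only [mem_restrictTotalDegree, Finset.sum_const, Finset.card_univ, smul_eq_mul] using hdet

theorem totalDegree_minorInverse_le {σ R ρ κ : Type*} [CommRing R] [Fintype ρ] [DecidableEq ρ]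
    [DecidableEq κ] {d : ℕ} {G : Matrix ρ κ (MvPolynomial σ R)}
    (hG : ∀ i j, (G i j).totalDegree ≤ d) (c : ρ → κ) (j : κ) (i : ρ) :
    (minorInverse G c j i).totalDegree ≤ (Fintype.card ρ - 1) * d := by
  have hmem := minorInverse_mem_graded c (restrictTotalDegree σ R) (w := d)
    (fun i j => (mem_restrictTotalDegree _ _ _).2 (hG i j)) j i
  simpa only [mem_restrictTotalDegree, smul_eq_mul] using hmem

/-- The module of syzygies `F b = 0` generated by those with entries of total degree at most
`D`. -/
noncomputable def syzygiesOfDegreeLE {σ R ι κ : Type*} [CommRing R] [Fintype κ]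
    (F : Matrix ι κ (MvPolynomial σ R)) (D : ℕ) :
    Submodule (MvPolynomial σ R) (κ → MvPolynomial σ R) :=
  Submodule.span _ {b | F *ᵥ b = 0 ∧ ∀ j, (b j).totalDegree ≤ D}

theorem syzygiesOfDegreeLE_submatrix {σ R ι κ ρ : Type*} [CommRing R] [Fintype κ]
    {F : Matrix ι κ (MvPolynomial σ R)} {e : ρ → ι}
    (hker : ∀ v, F.submatrix e id *ᵥ v = 0 → F *ᵥ v = 0) (D : ℕ) :
    syzygiesOfDegreeLE (F.submatrix e id) D = syzygiesOfDegreeLE F D := by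
  have hiff : ∀ v, F.submatrix e id *ᵥ v = 0 ↔ F *ᵥ v = 0 := fun v =>
    ⟨hker v, fun h => funext fun i => congrFun h (e i)⟩
  simp only [syzygiesOfDegreeLE, hiff]

theorem smul_sub_mulVec_mem_syzygiesOfDegreeLE {σ R ρ κ : Type*} [CommRing R] [Fintype ρ]
    [DecidableEq ρ] [Fintype κ] {F : Matrix ρ κ (MvPolynomial σ R)}
    {N : Matrix κ ρ (MvPolynomial σ R)} {Δ : MvPolynomial σ R} (hFN : F * N = Δ • 1) {D d E : ℕ}
    (hN : ∀ i j, (N i j).totalDegree ≤ D) (hΔ : Δ.totalDegree ≤ D)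
    (hF : ∀ i j, (F i j).totalDegree ≤ d) (hE : D + d ≤ E) (q : κ → MvPolynomial σ R) :
    Δ • q - N *ᵥ (F *ᵥ q) ∈ syzygiesOfDegreeLE F E := by
  classical
  set M : Matrix κ κ (MvPolynomial σ R) := Δ • 1 - N * F
  have hM : Δ • q - N *ᵥ (F *ᵥ q) = ∑ j, q j • M.col j := by
    rw [mulVec_mulVec, ← one_mulVec (Δ • q), mulVec_smul, ← smul_mulVec, ← sub_mulVec]
    exact (mulVec_eq_sum q M).trans (Finset.sum_congr rfl fun j _ => op_smul_eq_smul _ _)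
  have hFM : F * M = 0 := by
    rw [Matrix.mul_sub, ← Matrix.mul_assoc, hFN, Matrix.mul_smul, Matrix.mul_one, Matrix.smul_mul,
      Matrix.one_mul, sub_self]
  have hdeg (i j) : (M i j).totalDegree ≤ E := by
    refine (totalDegree_sub _ _).trans (max_le ?_ (totalDegree_finsetSum_le fun x _ => ?_))
    · rw [Matrix.smul_apply, one_apply, smul_eq_mul, mul_ite, mul_one, mul_zero]
      split_ifs
      · omega
      · rw [totalDegree_zero]
        exact Nat.zero_le E
    · exact (totalDegree_mul _ _).trans ((add_le_add (hN i x) (hF x j)).trans hE)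
  rw [hM]
  refine sum_mem fun j _ => Submodule.smul_mem _ _ (Submodule.subset_span ⟨?_, fun i => hdeg i j⟩)
  exact funext fun i => congrFun (congrFun hFM i) j

section Split

variable {A ρ κ : Type*} [CommRing A] {s d D : ℕ} {F : Matrix ρ κ (MvPolynomial (Fin (s + 1)) A)}

theorem natDegree_map_split_le (hF : ∀ i j, (F i j).totalDegree ≤ d) (l : Fin s → A) (i j) :
    (F.map (split l) i j).natDegree ≤ d :=
  (natDegree_split_le l _).trans (hF i j)

variable [Fintype κ]

theorem map_split_mul_map_split [DecidableEq ρ]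
    {N : Matrix κ ρ (MvPolynomial (Fin (s + 1)) A)} {Δ : MvPolynomial (Fin (s + 1)) A}
    (hFN : F * N = Δ • 1) (l : Fin s → A) :
    F.map (split l) * N.map (split l) = split l Δ • 1 := by
  rw [← Matrix.map_mul, hFN]
  ext i j
  simp [one_apply, apply_ite]

theorem exists_pow_smul_eq_add_unflat_syzygy [IsDomain A] [Fintype ρ] [DecidableEq ρ]
    {N : Matrix κ ρ (MvPolynomial (Fin (s + 1)) A)} {Δ : MvPolynomial (Fin (s + 1)) A}
    (hFN : F * N = Δ • 1) {l : Fin s → A} {γ : A} (hγ : γ ≠ 0)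
    (hlc : (split l Δ).leadingCoeff = C γ) (hN : ∀ i j, (N i j).totalDegree ≤ D)
    (hΔ : Δ.totalDegree ≤ D) (hF : ∀ i j, (F i j).totalDegree ≤ d)
    {a : κ → MvPolynomial (Fin (s + 1)) A} (ha : F *ᵥ a = 0) :
    ∃ (n : ℕ) (q : κ → MvPolynomial (Fin (s + 1)) A)
      (b : κ × Fin (D + d) → MvPolynomial (Fin s) A),
      flat (F.map (split l)) (D + d) (D + d + d) *ᵥ b = 0 ∧
        γ ^ n • a = Δ • q - N *ᵥ (F *ᵥ q) + (split l).symm ∘ unflat _ κ (D + d) b := by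
  obtain ⟨n, q, b, hb, h⟩ := exists_flat_syzygy (a := split l ∘ a) (map_split_mul_map_split hFN l)
    (fun h0 => hγ (by simpa [h0] using hlc.symm)) (natDegree_map_split_le hN l)
    ((natDegree_split_le l Δ).trans hΔ) (natDegree_map_split_le hF l)
    (by rw [map_mulVec_comp, ha]; exact funext fun _ => map_zero (split l))
  obtain ⟨q, rfl⟩ := (split l).surjective.comp_left q
  refine ⟨n, q, b, hb, smul_eq_add_symm_comp_of_map (split l) ?_⟩
  rw [hlc, ← C_pow, ← MvPolynomial.algebraMap_eq, algebraMap_smul] at h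
  exact h

theorem split_symm_unflat_mem_syzygiesOfDegreeLE (hF : ∀ i j, (F i j).totalDegree ≤ d)
    (l : Fin s → A) {β E : ℕ} (hE : β + D ≤ E) {b : κ × Fin D → MvPolynomial (Fin s) A}
    (hb : b ∈ syzygiesOfDegreeLE (flat (F.map (split l)) D (D + d)) β) :
    (split l).symm ∘ unflat _ κ D b ∈ syzygiesOfDegreeLE F E := by
  refine symm_comp_unflat_mem_of_mem_span (split l).toRingEquiv (fun b hb => ?_) hb
  refine Submodule.subset_span ⟨?_, fun j => ?_⟩
  · exact mulVec_symm_comp_eq_zero (split l).toRingEquiv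
      ((flat_mulVec_eq_zero_iff (natDegree_map_split_le hF l) b).1 hb.1)
  · refine (totalDegree_split_symm_le l (unflat_mem_degreeLT b j) fun i hi => ?_).trans hE
    have hij := congrFun (coeffVec_unflat b) (j, ⟨i, hi⟩)
    exact (congrArg totalDegree hij).trans_le (hb.2 _)

theorem totalDegree_flat_map_split_le {κ : Type*} {F : Matrix ρ κ (MvPolynomial (Fin (s + 1)) A)}
    (hF : ∀ i j, (F i j).totalDegree ≤ d) (l : Fin s → A) {D D' : ℕ} (x y) :
    (flat (F.map (split l)) D D' x y).totalDegree ≤ d := by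
  rw [flat, of_apply, Polynomial.coeff_mul_X_pow', Matrix.map_apply]
  split_ifs
  · by_cases h0 : (split l (F x.1 y.1)).coeff (x.2 - y.2) = 0
    · simp [h0]
    · exact (Nat.le_add_right _ _).trans
        ((totalDegree_coeff_split_add_le l _ h0).trans (hF x.1 y.1))
  · simp

end Split

theorem hermann_bound_succ (m s : ℕ) {d : ℕ} (hd : 0 < d) :
    (2 * ((m * ((m + 2) * d) + 1) * d)) ^ 2 ^ s + (m * d + d) ≤
      (2 * ((m + 1) * d)) ^ 2 ^ (s + 1) := by
  obtain ⟨u, hu⟩ : ∃ u, u = (m + 1) * d := ⟨_, rfl⟩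
  have hu1 : 1 ≤ u := hu ▸ Nat.mul_pos m.succ_pos hd
  have hbase : (m * ((m + 2) * d) + 1) * d ≤ u ^ 2 := by
    rw [hu]
    nlinarith [Nat.mul_le_mul_left d hd]
  have hmono : (2 * ((m * ((m + 2) * d) + 1) * d)) ^ 2 ^ s ≤ (2 * u ^ 2) ^ 2 ^ s := by gcongr
  have hself : u ≤ (2 * u ^ 2) ^ 2 ^ s :=
    (by nlinarith : u ≤ 2 * u ^ 2).trans (Nat.le_self_pow (by positivity) _)
  have htwo : 2 ≤ 2 ^ 2 ^ s := Nat.le_self_pow (by positivity) 2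
  have hfactor : (2 * u) ^ 2 ^ (s + 1) = 2 ^ 2 ^ s * (2 * u ^ 2) ^ 2 ^ s := by
    rw [pow_succ 2 s, mul_comm (2 ^ s) 2, pow_mul, ← mul_pow]
    ring_nf
  rw [← Nat.succ_mul, Nat.succ_eq_add_one, ← hu, hfactor]
  nlinarith

theorem mem_syzygiesOfDegreeLE_of_infinite {k : Type*} [Field k] [Infinite k] {d : ℕ} (hd : 0 < d)
    {s m : ℕ} {ι κ : Type*} [Finite ι] [Fintype κ] (hm : Nat.card ι ≤ m)
    {F : Matrix ι κ (MvPolynomial (Fin s) k)} (hF : ∀ i j, (F i j).totalDegree ≤ d)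
    {a : κ → MvPolynomial (Fin s) k} (ha : F *ᵥ a = 0) :
    a ∈ syzygiesOfDegreeLE F ((2 * ((m + 1) * d)) ^ 2 ^ s) := by
  classical
  induction s generalizing m ι κ with
  | zero =>
    refine Submodule.subset_span ⟨ha, fun j => ?_⟩
    rw [eq_C_of_isEmpty (a j), totalDegree_C]
    exact Nat.zero_le _
  | succ s ih =>
    obtain ⟨r, c, hr, hc, hker⟩ := exists_maximal_minor F
    set G := F.submatrix ((↑) : r → ι) id
    have hG : ∀ i j, (G i j).totalDegree ≤ d := fun i j => hF i j
    have hrm : Fintype.card r ≤ m := (Fintype.card_coe r).trans_le (hr.trans hm)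
    have hN : ∀ j i, (minorInverse G c j i).totalDegree ≤ m * d := fun j i =>
      (totalDegree_minorInverse_le hG c j i).trans (by gcongr; omega)
    have hΔ : (G.submatrix id c).det.totalDegree ≤ m * d :=
      (totalDegree_det_le fun i j => hG i (c j)).trans (by gcongr)
    obtain ⟨L, hL⟩ := Infinite.exists_subset_card_eq k ((G.submatrix id c).det.totalDegree + 1)
    obtain ⟨l, -, γ, hγ, hlc⟩ := exists_leadingCoeff_split_eq_C hc (L := L) (by omega)
    obtain ⟨n, q, b, hb, h⟩ := exists_pow_smul_eq_add_unflat_syzygy (mul_minorInverse G c) hγ hlc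
      hN hΔ hG (a := a) (funext fun i => congrFun ha i)
    have hcard : Nat.card (r × Fin (m * d + d + d)) ≤ m * ((m + 2) * d) := by
      rw [Nat.card_eq_fintype_card, Fintype.card_prod, Fintype.card_fin]
      exact Nat.mul_le_mul hrm (by linarith)
    have hbound := hermann_bound_succ m s hd
    rw [← syzygiesOfDegreeLE_submatrix hker]
    suffices hγa : γ ^ n • a ∈ (syzygiesOfDegreeLE G _).restrictScalars k from
      (Submodule.smul_mem_iff _ (pow_ne_zero n hγ)).1 hγa
    rw [h]
    exact add_mem
      (smul_sub_mulVec_mem_syzygiesOfDegreeLE (mul_minorInverse G c) hN hΔ hG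
        ((Nat.le_add_left _ _).trans hbound) q)
      (split_symm_unflat_mem_syzygiesOfDegreeLE hG l hbound
        (ih hcard (totalDegree_flat_map_split_le hG l) hb))

end Syzygies

section Descent

open MvPolynomial

attribute [local instance] MvPolynomial.algebraMvPolynomial

variable {k K σ ι κ : Type*} [CommRing k] [CommRing K] [Algebra k K] (φ : K →ₗ[k] k)

/-- The coefficientwise application of a `k`-linear map `K → k` to a polynomial. -/
noncomputable def coeffMap : MvPolynomial σ K →ₗ[MvPolynomial σ k] MvPolynomial σ k where
  toFun := AddMonoidAlgebra.map φ.toAddMonoidHom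
  map_add' := AddMonoidAlgebra.map_add _
  map_smul' p q := by
    classical
    ext m
    change φ ((p • q).coeff m) =
      coeff m (p * AddMonoidAlgebra.map φ.toAddMonoidHom q : MvPolynomial σ k)
    rw [Algebra.smul_def, coeff_mul, coeff_mul, map_sum]
    refine Finset.sum_congr rfl fun x _ => ?_
    rw [algebraMap_def, coeff_map, ← Algebra.smul_def, map_smul]
    rfl

theorem coeff_coeffMap (p : MvPolynomial σ K) (m : σ →₀ ℕ) :
    (coeffMap φ p).coeff m = φ (p.coeff m) := rfl

theorem coeffMap_map (hφ : φ 1 = 1) (p : MvPolynomial σ k) :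
    coeffMap φ (map (algebraMap k K) p) = p := by
  ext m
  rw [coeff_coeffMap, coeff_map, Algebra.algebraMap_eq_smul_one, map_smul, hφ, smul_eq_mul, mul_one]

theorem totalDegree_coeffMap_le (p : MvPolynomial σ K) :
    (coeffMap φ p).totalDegree ≤ p.totalDegree := by
  refine Finset.sup_mono fun m hm => ?_
  rw [mem_support_iff, coeff_coeffMap] at hm
  exact mem_support_iff.2 fun h => hm (by rw [h, map_zero])

theorem span_range_C (K : Type*) [CommRing K] [Algebra k K] :
    Submodule.span (MvPolynomial σ k) (Set.range (C : K → MvPolynomial σ K)) = ⊤ := by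
  refine eq_top_iff.2 fun p _ => ?_
  induction p using MvPolynomial.induction_on' with
  | monomial m c =>
    have hm : monomial m c = (monomial m 1 : MvPolynomial σ k) • (C c : MvPolynomial σ K) := by
      rw [Algebra.smul_def, algebraMap_def, map_monomial, map_one, mul_comm, C_mul_monomial,
        mul_one]
    rw [hm]
    exact Submodule.smul_mem _ _ (Submodule.subset_span ⟨c, rfl⟩)
  | add p q hp hq => exact add_mem (hp trivial) (hq trivial)

variable [Fintype κ] {F : Matrix ι κ (MvPolynomial σ k)}

theorem mulVec_coeffMap (b : κ → MvPolynomial σ K) :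
    F *ᵥ (coeffMap φ ∘ b) = coeffMap φ ∘ (F.map (map (algebraMap k K)) *ᵥ b) := by
  funext i
  simp only [mulVec, dotProduct, Function.comp_apply, map_sum, Matrix.map_apply]
  exact Finset.sum_congr rfl fun j _ => ((coeffMap φ).map_smul (F i j) (b j)).symm

theorem coeffMap_mem_syzygiesOfDegreeLE {D : ℕ} {b : κ → MvPolynomial σ K}
    (hb : b ∈ syzygiesOfDegreeLE (F.map (map (algebraMap k K))) D) :
    coeffMap φ ∘ b ∈ syzygiesOfDegreeLE F D := by
  rw [syzygiesOfDegreeLE, ← Submodule.restrictScalars_mem (MvPolynomial σ k),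
    ← Submodule.span_smul_of_span_eq_top (span_range_C K)] at hb
  suffices hle : Submodule.span (MvPolynomial σ k) _ ≤
      (syzygiesOfDegreeLE F D).comap ((coeffMap φ).compLeft κ) from hle hb
  refine Submodule.span_le.2 ?_
  rintro _ ⟨_, ⟨c, rfl⟩, b, ⟨hb, hdeg⟩, rfl⟩
  refine Submodule.subset_span ⟨?_, fun j => (totalDegree_coeffMap_le φ _).trans ?_⟩
  · refine (mulVec_coeffMap φ _).trans ?_
    rw [mulVec_smul, hb, smul_zero]
    exact funext fun _ => map_zero (coeffMap φ)
  · change (C c * b j).totalDegree ≤ D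
    rw [C_mul']
    exact (totalDegree_smul_le c (b j)).trans (hdeg j)

theorem mem_syzygiesOfDegreeLE {k : Type*} [Field k] {d : ℕ} (hd : 0 < d) {s m : ℕ}
    {ι κ : Type*} [Finite ι] [Fintype κ] (hm : Nat.card ι ≤ m)
    {F : Matrix ι κ (MvPolynomial (Fin s) k)} (hF : ∀ i j, (F i j).totalDegree ≤ d)
    {a : κ → MvPolynomial (Fin s) k} (ha : F *ᵥ a = 0) :
    a ∈ syzygiesOfDegreeLE F ((2 * ((m + 1) * d)) ^ 2 ^ s) := by
  let K := AlgebraicClosure k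
  obtain ⟨φ, hφ⟩ := LinearMap.exists_leftInverse_of_injective (Algebra.linearMap k K)
    (LinearMap.ker_eq_bot.2 (algebraMap k K).injective)
  have hφ1 : φ 1 = 1 := by
    simpa using LinearMap.congr_fun hφ 1
  have hK := coeffMap_mem_syzygiesOfDegreeLE φ (mem_syzygiesOfDegreeLE_of_infinite (k := K) hd hm
    (F := F.map (map (algebraMap k K))) (a := map (algebraMap k K) ∘ a)
    (fun i j => (Finset.sup_mono (support_map_subset _ _)).trans (hF i j))
    (by rw [map_mulVec_comp, ha]; exact funext fun _ => map_zero _))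
  rwa [← Function.comp_assoc, Function.comp_def (coeffMap φ), funext (coeffMap_map φ hφ1)] at hK

theorem mem_span_of_mul_mem_span_fin {k : Type*} [Field k] {n D : ℕ} (hD : 0 < D)
    {S : Set (MvPolynomial (Fin n) k)} (hS : ∀ f ∈ S, f.totalDegree ≤ D)
    {c : MvPolynomial (Fin n) k} (hc : c.totalDegree ≤ D)
    (h : ∀ g : MvPolynomial (Fin n) k, g.totalDegree ≤ (4 * D) ^ 2 ^ n →
      c * g ∈ Ideal.span S → g ∈ Ideal.span S)
    {g : MvPolynomial (Fin n) k} (hg : c * g ∈ Ideal.span S) : g ∈ Ideal.span S := by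
  obtain ⟨T, hTS, hgT⟩ := Submodule.mem_span_finite_of_mem_span hg
  obtain ⟨a, ha⟩ := Submodule.mem_span_finset'.1 hgT
  let F : Matrix Unit (Option T) (MvPolynomial (Fin n) k) := of fun _ j => j.elim c (↑)
  have hmv (b) : (F *ᵥ b) () = c * b none + ∑ f : T, f * b (some f) := by
    simp [mulVec, dotProduct, F, Fintype.sum_option]
  have hsyz := mem_syzygiesOfDegreeLE hD (m := 1) (F := F) Nat.card_unique.le
    (fun i j => by cases j; exacts [hc, hS _ (hTS (Subtype.coe_prop _))])
    (a := fun j => j.elim g (-a))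
    (funext fun _ => by simp [hmv, ← ha, mul_comm])
  suffices hle : syzygiesOfDegreeLE F ((2 * ((1 + 1) * D)) ^ 2 ^ n) ≤
      Submodule.comap (LinearMap.proj (φ := fun _ : Option T => MvPolynomial (Fin n) k) none)
        (Ideal.span S) from
    hle hsyz
  refine Submodule.span_le.2 fun b hb => h _ ((hb.2 none).trans_eq (by ring_nf)) ?_
  change c * b none ∈ _
  rw [eq_neg_of_add_eq_zero_left ((hmv b).symm.trans (congrFun hb.1 ()))]
  exact neg_mem (sum_mem fun f _ => Ideal.mul_mem_right _ _ (Ideal.subset_span (hTS f.2)))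

theorem apply_mem_span_image_iff {k R R' : Type*} [CommRing k] [CommRing R] [CommRing R']
    [Algebra k R] [Algebra k R'] (φ : R ≃ₐ[k] R') {S : Set R} {p : R} :
    φ p ∈ Ideal.span (φ '' S) ↔ p ∈ Ideal.span S := by
  rw [show φ '' S = φ.toRingEquiv '' S from rfl, ← Ideal.map_span]
  exact Ideal.apply_mem_of_equiv_iff (f := φ.toRingEquiv)

/-- The colon ideal `(S) : c` is generated by `S` and by the first components of bounded syzygies of
`c` and elements of `S`. -/
theorem mem_span_of_mul_mem_span {k σ : Type*} [Field k] [Finite σ] {D : ℕ} (hD : 0 < D)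
    {S : Set (MvPolynomial σ k)} (hS : ∀ f ∈ S, f.totalDegree ≤ D)
    {c : MvPolynomial σ k} (hc : c.totalDegree ≤ D)
    (h : ∀ g : MvPolynomial σ k, g.totalDegree ≤ (4 * D) ^ 2 ^ Nat.card σ →
      c * g ∈ Ideal.span S → g ∈ Ideal.span S)
    {g : MvPolynomial σ k} (hg : c * g ∈ Ideal.span S) : g ∈ Ideal.span S := by
  let φ := renameEquiv k (Finite.equivFin σ)
  have hφ (p) : (φ p).totalDegree = p.totalDegree := totalDegree_renameEquiv _ _
  rw [← apply_mem_span_image_iff φ]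
  rw [← apply_mem_span_image_iff φ, map_mul] at hg
  refine mem_span_of_mul_mem_span_fin hD ?_ ((hφ c).trans_le hc) (fun p hp hcp => ?_) hg
  · rintro _ ⟨f, hf, rfl⟩
    exact (hφ f).trans_le (hS f hf)
  · obtain ⟨p, rfl⟩ := φ.surjective p
    rw [hφ] at hp
    rw [← map_mul, apply_mem_span_image_iff] at hcp
    exact (apply_mem_span_image_iff φ).2 (h p hp hcp)

end Descent

section Denominators

open MvPolynomial
open scoped nonZeroDivisors

theorem denominator_bound_succ (m s : ℕ) {d e : ℕ} (hd : 0 < d) (hde : d ≤ e) :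
    ((m * ((m + 2) * d) + 1) * d + (e + d * (m * d))) ^ (3 * 2 ^ s) ≤
      ((m + 1) * d + e) ^ (3 * 2 ^ (s + 1)) := by
  have hbase : (m * ((m + 2) * d) + 1) * d + (e + d * (m * d)) ≤ ((m + 1) * d + e) ^ 2 := by
    obtain ⟨f, rfl⟩ := Nat.exists_eq_add_of_le hde
    obtain ⟨c, rfl⟩ := Nat.exists_eq_add_of_le hd
    ring_nf
    nlinarith [Nat.zero_le (m * c), Nat.zero_le (m * c ^ 2), Nat.zero_le (c * f),
      Nat.zero_le (m * f), Nat.zero_le (m * c * f), Nat.zero_le (f ^ 2), Nat.zero_le (c ^ 2)]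
  calc
    _ ≤ (((m + 1) * d + e) ^ 2) ^ (3 * 2 ^ s) := by gcongr
    _ = _ := by rw [← pow_mul]; ring_nf

theorem leadingCoeff_bound (m s : ℕ) {d e : ℕ} (hd : 0 < d) :
    m * e + m * d * (m * d) ≤ ((m + 1) * d + e) ^ (3 * 2 ^ s) := by
  calc
    _ ≤ ((m + 1) * d + e) ^ 2 := by
      have hme : m * e ≤ m * e * d := Nat.le_mul_of_pos_right _ hd
      ring_nf
      nlinarith [Nat.zero_le (m * d ^ 2), Nat.zero_le (d * e), Nat.zero_le (m * e * d)]
    _ ≤ _ := by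
      refine Nat.pow_le_pow_right (by nlinarith) ?_
      have hs : 0 < 2 ^ s := by positivity
      omega

variable {A ρ κ : Type*} [CommRing A] {T : Submonoid A}

theorem solvableUpTo_of_det_eq_C [Fintype ρ] [DecidableEq ρ] [Fintype κ] {σ : Type*}
    {G : Matrix ρ κ (MvPolynomial σ A)} {c : ρ → κ} {δ : A} (hδ : δ ∈ T)
    (hdet : (G.submatrix id c).det = C δ) (g : ρ → MvPolynomial σ A) : SolvableUpTo T G g := by
  classical
  refine ⟨δ, hδ, minorInverse G c *ᵥ g, ?_⟩
  rw [mulVec_mulVec, mul_minorInverse, smul_mulVec, one_mulVec, hdet,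
    ← MvPolynomial.algebraMap_eq, algebraMap_smul]

variable {k : Type*} [CommRing k] [Algebra k A] {V : ℕ → Submodule k A} [SetLike.GradedMonoid V]

theorem flat_map_split_mem_coeffsIn (hV : Monotone V) {s d e N D D' : ℕ}
    {G : Matrix ρ κ (MvPolynomial (Fin (s + 1)) A)} (hG : ∀ i j, (G i j).totalDegree ≤ d)
    (hGe : ∀ i j, G i j ∈ coeffsIn _ (V e)) {l : Fin s → A} (hl : ∀ i, l i ∈ V N) (x y) :
    flat (G.map (split l)) D D' x y ∈ coeffsIn _ (V (e + d * N)) := by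
  rw [flat, of_apply, Polynomial.coeff_mul_X_pow', Matrix.map_apply]
  split_ifs
  · exact coeff_split_mem_coeffsIn hV hl (hG _ _) (hGe _ _) _
  · exact zero_mem _

theorem det_mem_coeffsIn (hV : Monotone V) [Fintype ρ] [DecidableEq ρ] {σ : Type*} {m e : ℕ}
    {M : Matrix ρ ρ (MvPolynomial σ A)} (hm : Fintype.card ρ ≤ m)
    (hM : ∀ i j, M i j ∈ coeffsIn _ (V e)) : M.det ∈ coeffsIn _ (V (m * e)) := by
  have hdet := det_mem_graded (fun i => coeffsIn σ (V i)) (w := fun _ => e) hM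
  simp only [Finset.sum_const, Finset.card_univ, smul_eq_mul] at hdet
  exact fun i => hV (Nat.mul_le_mul_right e hm) (hdet i)

variable [IsDomain A] [Fintype κ]

theorem solvableUpTo_of_flat_map_split [Finite ρ] [DecidableEq ρ] {s d D : ℕ}
    {G : Matrix ρ κ (MvPolynomial (Fin (s + 1)) A)}
    {N : Matrix κ ρ (MvPolynomial (Fin (s + 1)) A)} {Δ : MvPolynomial (Fin (s + 1)) A}
    (hGN : G * N = Δ • 1) {l : Fin s → A} {γ : A} (hγ : γ ≠ 0) (hγT : γ ∈ T)
    (hlc : (split l Δ).leadingCoeff = C γ) (hN : ∀ i j, (N i j).totalDegree ≤ D)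
    (hΔ : Δ.totalDegree ≤ D) (hG : ∀ i j, (G i j).totalDegree ≤ d)
    (hflat : ∀ v, SolvableUpTo A⁰ (flat (G.map (split l)) (D + d) (D + d + d)) v →
      SolvableUpTo T (flat (G.map (split l)) (D + d) (D + d + d)) v)
    {g : ρ → MvPolynomial (Fin (s + 1)) A} (hg : SolvableUpTo A⁰ G g) : SolvableUpTo T G g := by
  have := Fintype.ofFinite ρ
  obtain ⟨n, q, g', hg', h⟩ := exists_pseudo_div_vec (split l Δ) (split l ∘ g)
  rw [hlc, ← C_pow, ← MvPolynomial.algebraMap_eq, algebraMap_smul,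
    ← mul_mulVec_of_mul_eq_smul_one (map_split_mul_map_split hGN l)] at h
  have hreduce {T : Submonoid A} (hγT : γ ∈ T) :
      SolvableUpTo T (flat (G.map (split l)) (D + d) (D + d + d)) (coeffVec (D + d + d) g') ↔
        SolvableUpTo T G g := by
    rw [← solvableUpTo_map_iff (split l),
      solvableUpTo_iff_of_smul_eq_mulVec_add (pow_mem hγT n) h]
    exact solvableUpTo_flat_iff hγT hlc (map_split_mul_map_split hGN l)
      (fun h0 => hγ (by simpa [h0] using hlc.symm)) (natDegree_map_split_le hN l)
      ((natDegree_split_le l Δ).trans hΔ) (natDegree_map_split_le hG l) hg'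
  exact (hreduce hγT).1 (hflat _ ((hreduce (mem_nonZeroDivisors_of_ne_zero hγ)).2 hg))

/-- The bound on the denominators does not depend on the right-hand side. The changes of variables
take their coefficients from `A`, since `k` may be finite. -/
theorem solvableUpTo_of_bounded_mem (hV : Monotone V)
    (hcard : ∀ N, ∃ L : Finset A, N < L.card ∧ ∀ x ∈ L, x ∈ V N) {s m d e : ℕ} (hd : 0 < d)
    (hde : d ≤ e) (hT : ∀ x ≠ 0, x ∈ V (((m + 1) * d + e) ^ (3 * 2 ^ s)) → x ∈ T)
    {ι κ : Type*} [Finite ι] [Fintype κ] (hm : Nat.card ι ≤ m)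
    {F : Matrix ι κ (MvPolynomial (Fin s) A)} (hF : ∀ i j, (F i j).totalDegree ≤ d)
    (hFe : ∀ i j, F i j ∈ coeffsIn _ (V e)) {g : ι → MvPolynomial (Fin s) A}
    (hg : SolvableUpTo A⁰ F g) : SolvableUpTo T F g := by
  classical
  induction s generalizing m e ι κ with
  | zero =>
    obtain ⟨r, c, hr, hc, hker⟩ := exists_maximal_minor F
    have hrm : Fintype.card r ≤ m := (Fintype.card_coe r).trans_le (hr.trans hm)
    have hdet := eq_C_of_isEmpty ((F.submatrix ((↑) : r → ι) id).submatrix id c).det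
    refine hg.of_submatrix hker (solvableUpTo_of_det_eq_C (c := c) (hT _ ?_ ?_) hdet _)
    · exact fun h0 => hc (by rw [hdet, h0, C_0])
    · exact hV ((Nat.le_add_right _ _).trans (leadingCoeff_bound m 0 hd))
        (det_mem_coeffsIn hV hrm (fun _ _ => hFe _ _) 0)
  | succ s ih =>
    obtain ⟨r, c, hr, hc, hker⟩ := exists_maximal_minor F
    set G := F.submatrix ((↑) : r → ι) id
    have hG : ∀ i j, (G i j).totalDegree ≤ d := fun i j => hF i j
    have hrm : Fintype.card r ≤ m := (Fintype.card_coe r).trans_le (hr.trans hm)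
    have hN : ∀ j i, (minorInverse G c j i).totalDegree ≤ m * d := fun j i =>
      (totalDegree_minorInverse_le hG c j i).trans (by gcongr; omega)
    have hΔ : (G.submatrix id c).det.totalDegree ≤ m * d :=
      (totalDegree_det_le fun i j => hG i (c j)).trans (by gcongr)
    obtain ⟨L, hL, hLV⟩ := hcard (m * d)
    obtain ⟨l, hl, γ, hγ, hlc⟩ := exists_leadingCoeff_split_eq_C hc (hΔ.trans_lt hL)
    replace hl : ∀ i, l i ∈ V (m * d) := fun i => hLV _ (hl i)
    have hγV : γ ∈ V (m * e + m * d * (m * d)) := by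
      have hmem := coeff_split_mem_coeffsIn hV hl hΔ
        (det_mem_coeffsIn hV hrm fun _ _ => hFe _ _) (split l (G.submatrix id c).det).natDegree
      rw [← Polynomial.leadingCoeff] at hmem
      exact C_mem_coeffsIn.1 (hlc ▸ hmem)
    have hcard' : Nat.card (r × Fin (m * d + d + d)) ≤ m * ((m + 2) * d) := by
      rw [Nat.card_eq_fintype_card, Fintype.card_prod, Fintype.card_fin]
      exact Nat.mul_le_mul hrm (by linarith)
    refine hg.of_submatrix hker (solvableUpTo_of_flat_map_split (mul_minorInverse G c) hγ
      (hT γ hγ (hV (leadingCoeff_bound m _ hd) hγV)) hlc hN hΔ hG (fun v hv => ?_)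
      (hg.submatrix _))
    exact ih (hde.trans (Nat.le_add_right _ _))
      (fun x hx hxV => hT x hx (hV (denominator_bound_succ m s hd hde) hxV)) hcard'
      (totalDegree_flat_map_split_le hG l)
      (flat_map_split_mem_coeffsIn hV hG (fun _ _ => hFe _ _) hl) hv

end Denominators

section Contraction

open MvPolynomial
open scoped nonZeroDivisors

theorem solvableUpTo_row_iff {A R : Type*} [CommRing A] [CommRing R] [Algebra A R]
    {T : Submonoid A} {S : Finset R} {g : R} :
    SolvableUpTo T (of fun (_ : Unit) (f : S) => (f : R)) (fun _ => g) ↔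
      ∃ t ∈ T, t • g ∈ Ideal.span (S : Set R) := by
  refine exists_congr fun t => and_congr_right fun _ => ?_
  rw [Ideal.span, Submodule.mem_span_finset']
  simp only [funext_iff, mulVec, dotProduct, of_apply, Pi.smul_apply, smul_eq_mul, mul_comm,
    forall_const]

theorem exists_smul_mem_span {k A : Type*} [CommRing k] [CommRing A] [IsDomain A] [Algebra k A]
    {V : ℕ → Submodule k A} [SetLike.GradedMonoid V] (hV : Monotone V)
    (hcard : ∀ N, ∃ L : Finset A, N < L.card ∧ ∀ x ∈ L, x ∈ V N) {s d : ℕ} (hd : 0 < d)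
    {T : Submonoid A} (hT : ∀ x ≠ 0, x ∈ V ((3 * d) ^ (3 * 2 ^ s)) → x ∈ T)
    {S : Set (MvPolynomial (Fin s) A)} (hS : ∀ f ∈ S, f.totalDegree ≤ d)
    (hSV : ∀ f ∈ S, f ∈ coeffsIn _ (V d)) {h : A} (hh : h ≠ 0) {g : MvPolynomial (Fin s) A}
    (hg : h • g ∈ Ideal.span S) : ∃ t ∈ T, t • g ∈ Ideal.span S := by
  obtain ⟨S', hS', hg'⟩ := Submodule.mem_span_finite_of_mem_span hg
  have hsolv := solvableUpTo_of_bounded_mem (m := 1) (T := T) hV hcard hd le_rfl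
    (by convert hT using 6; ring) Nat.card_unique.le (fun _ f => hS _ (hS' f.2))
    (fun _ f => hSV _ (hS' f.2))
    (solvableUpTo_row_iff.2 ⟨h, mem_nonZeroDivisors_of_ne_zero hh, hg'⟩)
  obtain ⟨t, ht, htg⟩ := solvableUpTo_row_iff.1 hsolv
  exact ⟨t, ht, Ideal.span_mono hS' htg⟩

section Separation

variable (k : Type*) {σ ν : Type*} [CommRing k] {Y : Set σ} (e : ↥Yᶜ ≃ ν)

open Classical in
/-- The polynomials in the variables `σ` as polynomials in the variables outside `Y`, reindexed by
`e`, whose coefficients are polynomials in the variables in `Y`. -/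
noncomputable def separate : MvPolynomial σ k ≃ₐ[k] MvPolynomial ν (MvPolynomial Y k) :=
  (renameEquiv k ((Equiv.Set.sumCompl Y).symm.trans ((Equiv.sumComm _ _).trans
    (e.sumCongr (Equiv.refl Y))))).trans (sumAlgEquiv k ν Y)

variable {k}

theorem separate_X_of_mem (i : Y) : separate k e (X i) = C (X i) := by
  simp [separate]

theorem separate_X_of_notMem (i : ↥Yᶜ) : separate k e (X i) = X (e i) := by
  simp [separate]

theorem separate_rename (c : MvPolynomial Y k) : separate k e (rename (↑) c) = C c := by
  have hcomp : (separate k e).toAlgHom.comp (rename ((↑) : Y → σ)) =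
      IsScalarTower.toAlgHom k (MvPolynomial Y k) (MvPolynomial ν (MvPolynomial Y k)) :=
    MvPolynomial.algHom_ext fun i => by simp [separate_X_of_mem, MvPolynomial.algebraMap_eq]
  exact DFunLike.congr_fun hcomp c

theorem separate_eq_aeval (p : MvPolynomial σ k) :
    separate k e p = aeval (fun i => separate k e (X i)) p :=
  DFunLike.congr_fun (aeval_unique (separate k e).toAlgHom) p

variable {d : ℕ} {p : MvPolynomial σ k}

theorem totalDegree_separate_le (hp : p.totalDegree ≤ d) : (separate k e p).totalDegree ≤ d := by
  rw [separate_eq_aeval, ← mem_restrictTotalDegree]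
  have hX (i) : separate k e (X i) ∈ restrictTotalDegree ν (MvPolynomial Y k) 1 := by
    by_cases hi : i ∈ Y
    · rw [separate_X_of_mem e ⟨i, hi⟩, mem_restrictTotalDegree, totalDegree_C]
      exact zero_le_one
    · rw [separate_X_of_notMem e ⟨i, hi⟩]
      exact X_mem_restrictTotalDegree _
  simpa using aeval_mem_graded (c := 0) (monotone_restrictTotalDegree _ _) hX hp fun m => by
    rw [MvPolynomial.algebraMap_apply, mem_restrictTotalDegree, totalDegree_C]

theorem separate_mem_coeffsIn (hp : p.totalDegree ≤ d) :
    separate k e p ∈ coeffsIn ν (restrictTotalDegree Y k d) := by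
  rw [separate_eq_aeval]
  have hX (i) : separate k e (X i) ∈ coeffsIn ν (restrictTotalDegree Y k 1) := by
    by_cases hi : i ∈ Y
    · rw [separate_X_of_mem e ⟨i, hi⟩, C_mem_coeffsIn]
      exact X_mem_restrictTotalDegree _
    · rw [separate_X_of_notMem e ⟨i, hi⟩]
      exact monomial_mem_coeffsIn.2 (monotone_restrictTotalDegree _ _ zero_le_one
        (SetLike.one_mem_graded (restrictTotalDegree Y k)))
  simpa using aeval_mem_graded (c := 0) (V := fun i => coeffsIn ν (restrictTotalDegree Y k i))
    (fun i j hij f hf m => monotone_restrictTotalDegree _ _ hij (hf m)) hX hp fun m => by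
    rw [MvPolynomial.algebraMap_apply, C_mem_coeffsIn, mem_restrictTotalDegree,
      MvPolynomial.algebraMap_eq, totalDegree_C]

end Separation

variable {k σ : Type*} [Field k] {S : Set (MvPolynomial σ k)}

theorem exists_rename_mul_mem_span [Finite σ] {Y : Set σ} {d : ℕ} (hd : 0 < d)
    (hS : ∀ f ∈ S, f.totalDegree ≤ d) {T : Submonoid (MvPolynomial Y k)}
    (hT : ∀ c ≠ 0, c.totalDegree ≤ (3 * d) ^ (3 * 2 ^ Yᶜ.ncard) → c ∈ T)
    {h : MvPolynomial Y k} (hh : h ≠ 0) {g : MvPolynomial σ k}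
    (hg : rename (↑) h * g ∈ Ideal.span S) : ∃ t ∈ T, rename (↑) t * g ∈ Ideal.span S := by
  cases isEmpty_or_nonempty Y with
  | inl hY =>
    refine ⟨h, hT h hh ?_, hg⟩
    rw [eq_C_of_isEmpty h, totalDegree_C]
    exact Nat.zero_le _
  | inr hY =>
    let φ := separate k (Finite.equivFin ↥Yᶜ)
    have hφ (c : MvPolynomial Y k) :
        rename (↑) c * g ∈ Ideal.span S ↔ c • φ g ∈ Ideal.span (φ '' S) := by
      rw [← apply_mem_span_image_iff φ, map_mul, separate_rename, smul_eq_C_mul]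
    simp only [hφ] at hg ⊢
    refine exists_smul_mem_span (monotone_restrictTotalDegree Y k)
      exists_card_gt_forall_mem_restrictTotalDegree hd
      (fun c hc hcV => hT c hc ((mem_restrictTotalDegree _ _ _).1 hcV)) ?_ ?_ hh hg
    · exact Set.forall_mem_image.2 fun f hf => totalDegree_separate_le _ (hS f hf)
    · exact Set.forall_mem_image.2 fun f hf => separate_mem_coeffsIn _ (hS f hf)

/-- Primality of an ideal tested on polynomials of total degree at most `b`. -/
def IsPrimeUpTo (I : Ideal (MvPolynomial σ k)) (b : ℕ) : Prop :=
  ∀ f g : MvPolynomial σ k, f.totalDegree ≤ b → g.totalDegree ≤ b → f * g ∈ I → f ∈ I ∨ g ∈ I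

theorem IsPrimeUpTo.mem_of_mul_mem [Finite σ] {B : ℕ} (hB : 0 < B)
    (hS : ∀ f ∈ S, f.totalDegree ≤ B)
    (hprime : IsPrimeUpTo (Ideal.span S) ((4 * B) ^ 2 ^ Nat.card σ)) {c : MvPolynomial σ k}
    (hc : c.totalDegree ≤ B) (hcS : c ∉ Ideal.span S) {g : MvPolynomial σ k}
    (hg : c * g ∈ Ideal.span S) : g ∈ Ideal.span S := by
  refine mem_span_of_mul_mem_span hB hS hc (fun g hgB hg => ?_) hg
  have hB4 : B ≤ (4 * B) ^ 2 ^ Nat.card σ :=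
    (Nat.le_mul_of_pos_left B four_pos).trans (Nat.le_self_pow (by positivity) _)
  exact (hprime c g (hc.trans hB4) hgB hg).resolve_left hcS

theorem prime_bound_le {n d s : ℕ} (hn : 1 < n) (hd : 1 < d) (hs : s ≤ n) :
    (4 * (3 * d) ^ (3 * 2 ^ s)) ^ 2 ^ n ≤ (2 * n * d) ^ (n * 2 ^ (4 * n + 8)) := by
  have hfour : 4 ≤ 2 * n * d := by nlinarith
  have hthree : 3 * d ≤ 2 * n * d := by nlinarith
  have hpow : 2 ^ s ≤ 2 ^ n := Nat.pow_le_pow_right two_pos hs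
  have hone : 1 ≤ 2 ^ n := Nat.one_le_two_pow
  calc
    _ ≤ (2 * n * d * (2 * n * d) ^ (3 * 2 ^ s)) ^ 2 ^ n := by gcongr
    _ = (2 * n * d) ^ ((3 * 2 ^ s + 1) * 2 ^ n) := by rw [← pow_succ', ← pow_mul]
    _ ≤ _ := by
      refine Nat.pow_le_pow_right (by omega) ?_
      calc
        (3 * 2 ^ s + 1) * 2 ^ n ≤ 2 ^ (n + 2) * 2 ^ n := by
          gcongr
          rw [pow_add]
          omega
        _ = 2 ^ (2 * n + 2) := by rw [← pow_add]; ring_nf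
        _ ≤ 2 ^ (4 * n + 8) := Nat.pow_le_pow_right two_pos (by omega)
        _ ≤ n * 2 ^ (4 * n + 8) := Nat.le_mul_of_pos_left _ (by omega)

end Contraction

end HermannBounds

open HermannBounds MvPolynomial

theorem localization_contracts_to_ideal_general {k σ : Type*} [Field k] [Finite σ]
    {S : Set (MvPolynomial σ k)} {Y : Set σ} {d : ℕ} (hd : 0 < d)
    (hS : ∀ f ∈ S, f.totalDegree ≤ d) (hY : ∀ f ∈ Ideal.span S, f ∈ supported k Y → f = 0)
    (hprime : IsPrimeUpTo (Ideal.span S)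
      ((4 * (3 * d) ^ (3 * 2 ^ Yᶜ.ncard)) ^ 2 ^ Nat.card σ))
    {h : MvPolynomial σ k} (hh : h ∈ supported k Y) (hh0 : h ≠ 0) {g : MvPolynomial σ k}
    (hg : h * g ∈ Ideal.span S) : g ∈ Ideal.span S := by
  have hdB : d ≤ (3 * d) ^ (3 * 2 ^ Yᶜ.ncard) :=
    (Nat.le_mul_of_pos_left d three_pos).trans (Nat.le_self_pow (by positivity) _)
  have hinj : Function.Injective (rename ((↑) : Y → σ) : MvPolynomial Y k → MvPolynomial σ k) :=
    rename_injective _ Subtype.val_injective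
  let T : Submonoid (MvPolynomial Y k) :=
    { carrier := {c | ∀ g, rename (↑) c * g ∈ Ideal.span S → g ∈ Ideal.span S}
      one_mem' := fun g hg => by rwa [map_one, one_mul] at hg
      mul_mem' := fun {a b} ha hb g hg => hb g (ha _ (by rwa [map_mul, mul_assoc] at hg)) }
  rw [supported_eq_range_rename] at hh hY
  obtain ⟨h, rfl⟩ := hh
  obtain ⟨t, ht, htg⟩ := exists_rename_mul_mem_span (T := T) hd hS
    (fun c hc hcB g => hprime.mem_of_mul_mem (hd.trans_le hdB) (fun f hf => (hS f hf).trans hdB)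
      ((totalDegree_rename_le _ c).trans hcB)
      fun hcS => hc (hinj ((hY _ hcS ⟨c, rfl⟩).trans (map_zero _).symm)))
    (fun h0 => hh0 (by rw [h0]; exact map_zero _)) hg
  exact ht g htg

/-- Suppose `x₁,…,x_r` is a maximal algebraically independent set of
variables modulo `I` (no nonzero element of `I` involves only `x₁,…,x_r`, while for each
`j > r` some nonzero element of `I` involves only `x₁,…,x_r,x_j`).  If `I` is prime up to
`(2nd)^(n·2^(4n+8))`, then for every nonzero `h` involving only `x₁,…,x_r` and every `g`
with `h·g ∈ I`, we have `g ∈ I`. -/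
theorem localization_contracts_to_ideal
    (k : Type*) [Field k] (n d r : ℕ) (hn : 1 < n) (hd : 1 < d) (hr : r ≤ n)
    (I : Ideal (MvPolynomial (Fin n) k))
    (S : Set (MvPolynomial (Fin n) k)) (hgen : I = Ideal.span S)
    (hdeg : ∀ g ∈ S, g.totalDegree ≤ d)
    (hind : ∀ f ∈ I, (∀ i ∈ MvPolynomial.vars f, (i : ℕ) < r) → f = 0)
    (hmaxind : ∀ j : Fin n, r ≤ (j : ℕ) →
      ∃ f ∈ I, f ≠ 0 ∧ ∀ i ∈ MvPolynomial.vars f, (i : ℕ) < r ∨ i = j)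
    (hprime : ∀ f g : MvPolynomial (Fin n) k,
      f.totalDegree ≤ (2 * n * d) ^ (n * 2 ^ (4 * n + 8)) →
      g.totalDegree ≤ (2 * n * d) ^ (n * 2 ^ (4 * n + 8)) →
      f * g ∈ I → f ∈ I ∨ g ∈ I) :
    ∀ h : MvPolynomial (Fin n) k,
      (∀ i ∈ h.vars, (i : ℕ) < r) → h ≠ 0 →
      ∀ g : MvPolynomial (Fin n) k, h * g ∈ I → g ∈ I := by
  subst hgen
  intro h hh hh0 g hg
  let Y : Set (Fin n) := {i | (i : ℕ) < r}
  have hb : (4 * (3 * d) ^ (3 * 2 ^ Yᶜ.ncard)) ^ 2 ^ Nat.card (Fin n) ≤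
      (2 * n * d) ^ (n * 2 ^ (4 * n + 8)) := by
    rw [Nat.card_fin]
    exact prime_bound_le hn hd ((Set.ncard_le_card Yᶜ).trans_eq (Nat.card_fin n))
  exact localization_contracts_to_ideal_general (Y := Y) (zero_lt_one.trans hd) hdeg
    (fun f hf hsupp => hind f hf (mem_supported.1 hsupp))
    (fun f g hf hg => hprime f g (hf.trans hb) (hg.trans hb))
    (mem_supported.2 hh) hh0 hg
end

section
/- Let k be a field, n > 1 and d > 1 natural numbers, and let I be an ideal of k[x_1,…,x_n] generated by polynomials of total degree at most d. Suppose the only polynomial in I involving only the variables x_1,…,x_r is 0, while for each j with r < j ≤ n there is a nonzero element of I involving only the variables x_1,…,x_r,x_j. If I is prime up to 2·d^(2^n), then for each j with r < j ≤ n there exists a polynomial w_j ∈ I which involves only the variables x_1,…,x_r,x_j, has positive degree in x_j, has total degree at most 2·d^(2^n), and is irreducible in k[x_1,…,x_n]. -/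
/-!
For a direction `a` the resultant of `f(x + ta)` and `g(x + ta)` with respect to `t` lies in every
ideal containing `f` and `g` (put `t = 0`), has degree at most `2 deg f deg g`, and is invariant
under translation by multiples of `a`. Suppose that `I`, generated in degree at most `d`, contains
no nonzero polynomial of degree at most `b` that is invariant under a space `E` of directions.
Eliminating the directions of `E` one after another, a generic point can be moved along `E` to a
common zero of the generators, and hence of `I`; as the values of `E`-invariant polynomials do not
change, no nonzero element of `I` is `E`-invariant. Directions that are not coordinate vectors are
needed to make the leading coefficient of `f(x + ta)` in `t` invariant under `E`: this holds when
`a ∈ E` maximises the degree in `t`.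

The argument requires an infinite field; a linear functional on the algebraic closure, applied to
the coefficients, brings the resulting polynomial back to the original field. Primality up to `b`
then passes from a polynomial in `I` of degree at most `b` to one of its irreducible factors.
-/

namespace EffectiveElimination

open MvPolynomial
open scoped Submodule

variable {σ : Type*}

section Translation

variable {R : Type*} [CommRing R]

/-- The translation `f(x) ↦ f(x + a)` of polynomials in the direction `a`. -/
noncomputable def translate (a : σ →₀ R) : MvPolynomial σ R →ₐ[R] MvPolynomial σ R :=
  aeval fun i => X i + C (a i)

/-- The restriction `f(x + t a)` of a polynomial `f` to the lines of direction `a`, as a polynomial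
in the line parameter `t` (the univariate variable) with coefficients in the ring of `f`. -/
noncomputable def alongLine (a : σ →₀ R) :
    MvPolynomial σ R →ₐ[R] Polynomial (MvPolynomial σ R) :=
  aeval fun i => Polynomial.C (X i) + Polynomial.C (C (a i)) * Polynomial.X

lemma translate_X (a : σ →₀ R) (i : σ) : translate a (X i) = X i + C (a i) :=
  aeval_X _ i

lemma translate_C (a : σ →₀ R) (c : R) : translate a (C c) = C c :=
  (translate a).commutes c

lemma alongLine_X (a : σ →₀ R) (i : σ) : alongLine a (X i) =
    Polynomial.C (X i) + Polynomial.C (C (a i)) * Polynomial.X :=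
  aeval_X _ i

lemma alongLine_C (a : σ →₀ R) (c : R) : alongLine a (C c) = Polynomial.C (C c) :=
  (alongLine a).commutes c

lemma translate_add (a b : σ →₀ R) (f : MvPolynomial σ R) :
    translate (a + b) f = translate a (translate b f) := by
  suffices translate (a + b) = (translate a).comp (translate b) from DFunLike.congr_fun this f
  ext1 i
  simp [translate, add_assoc]

lemma translate_zero (f : MvPolynomial σ R) : translate 0 f = f := by
  simp [translate]

lemma eval₂_alongLine {A : Type*} [CommRing A] [Algebra R A] (a : σ →₀ R)
    (φ : MvPolynomial σ R →ₐ[R] A) (t : A) (f : MvPolynomial σ R) :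
    (alongLine a f).eval₂ (φ : MvPolynomial σ R →+* A) t =
      aeval (fun i => φ (X i) + algebraMap R A (a i) * t) f := by
  suffices (Polynomial.eval₂AlgHom φ t (fun _ => Commute.all _ _)).comp (alongLine a) =
      aeval (fun i => φ (X i) + algebraMap R A (a i) * t) from DFunLike.congr_fun this f
  ext1 i
  simp only [AlgHom.coe_comp, Function.comp_apply, alongLine_X, Polynomial.eval₂AlgHom_apply,
    Polynomial.eval₂_add, Polynomial.eval₂_C, RingHom.coe_coe, Polynomial.eval₂_mul, algHom_C,
    Polynomial.eval₂_X, aeval_X]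

lemma eval_C_alongLine (a : σ →₀ R) (c : R) (f : MvPolynomial σ R) :
    (alongLine a f).eval (C c) = translate (c • a) f := by
  simpa [translate, mul_comm] using eval₂_alongLine a (AlgHom.id R _) (C c) f

lemma eval_zero_alongLine (a : σ →₀ R) (f : MvPolynomial σ R) : (alongLine a f).eval 0 = f := by
  simpa [translate_zero] using eval_C_alongLine a 0 f

lemma alongLine_ne_zero (a : σ →₀ R) {f : MvPolynomial σ R} (hf : f ≠ 0) : alongLine a f ≠ 0 :=
  fun h => hf (by rw [← eval_zero_alongLine a f, h, Polynomial.eval_zero])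

lemma alongLine_add (a b : σ →₀ R) (f : MvPolynomial σ R) :
    alongLine (a + b) f =
      (alongLine a f).eval₂ (alongLine b : MvPolynomial σ R →+* _) Polynomial.X := by
  suffices alongLine (a + b) = (Polynomial.eval₂AlgHom (alongLine b) Polynomial.X
      (fun _ => Commute.all _ _)).comp (alongLine a) from DFunLike.congr_fun this f
  ext1 i
  simp only [alongLine_X, Finsupp.coe_add, Pi.add_apply, map_add, AlgHom.coe_comp,
    Function.comp_apply, Polynomial.eval₂AlgHom_apply, Polynomial.eval₂_C,
    RingHom.coe_coe, Polynomial.eval₂_mul, alongLine_C, Polynomial.eval₂_X]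
  ring

lemma coeff_alongLine_smul (c : R) (a : σ →₀ R) (f : MvPolynomial σ R) (n : ℕ) :
    (alongLine (c • a) f).coeff n = (alongLine a f).coeff n * C c ^ n := by
  rw [← Polynomial.comp_C_mul_X_coeff]
  congr 1
  suffices alongLine (c • a) = (Polynomial.eval₂AlgHom Polynomial.CAlgHom
      (Polynomial.C (C c) * Polynomial.X) (fun _ => Commute.all _ _)).comp (alongLine a) from
    DFunLike.congr_fun this f
  ext1 i
  simp only [alongLine_X, Finsupp.coe_smul, Pi.smul_apply, smul_eq_mul, map_mul, AlgHom.coe_comp,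
    Function.comp_apply, Polynomial.eval₂AlgHom_apply, Polynomial.eval₂_add, Polynomial.eval₂_C,
    RingHom.coe_coe, Polynomial.CAlgHom_apply, Polynomial.eval₂_mul, Polynomial.eval₂_X]
  ring

lemma map_translate_alongLine (a b : σ →₀ R) (f : MvPolynomial σ R) :
    (alongLine a f).map (translate b : MvPolynomial σ R →+* _) = alongLine a (translate b f) := by
  suffices (Polynomial.mapAlgHom (translate b)).comp (alongLine a) =
      (alongLine a).comp (translate b) from DFunLike.congr_fun this f
  ext1 i
  simp only [AlgHom.coe_comp, Polynomial.coe_mapAlgHom, Function.comp_apply, alongLine_X,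
    Polynomial.map_add, Polynomial.map_C, RingHom.coe_coe, translate_X, map_add,
    Polynomial.map_mul, translate_C, alongLine_C, Polynomial.map_X]
  ring

lemma taylor_alongLine (a : σ →₀ R) (c : R) (f : MvPolynomial σ R) :
    (alongLine a f).taylor (C c) =
      (alongLine a f).map (translate (c • a) : MvPolynomial σ R →+* _) := by
  suffices ((Polynomial.taylorAlgHom (C c : MvPolynomial σ R)).restrictScalars R).comp
      (alongLine a) = (Polynomial.mapAlgHom (translate (c • a))).comp (alongLine a) from
    DFunLike.congr_fun this f
  ext1 i
  simp only [AlgHom.coe_comp, AlgHom.coe_restrictScalars', Function.comp_apply, alongLine_X,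
    Polynomial.taylorAlgHom_apply, map_add, Polynomial.taylor_C,
    Polynomial.taylor_X, Polynomial.coe_mapAlgHom, Polynomial.map_add, Polynomial.map_C,
    RingHom.coe_coe, translate_X, translate_C, Finsupp.coe_smul, Pi.smul_apply, smul_eq_mul,
    map_mul, Polynomial.map_mul, Polynomial.map_X]
  ring

end Translation

section Degree

variable {R : Type*} [CommRing R]

lemma totalDegree_coeff_mul_le {p q : Polynomial (MvPolynomial σ R)} {m n : ℕ}
    (hp : ∀ i, (p.coeff i).totalDegree ≤ m) (hq : ∀ i, (q.coeff i).totalDegree ≤ n) (i : ℕ) :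
    ((p * q).coeff i).totalDegree ≤ m + n := by
  rw [Polynomial.coeff_mul]
  exact totalDegree_finsetSum_le fun x _ =>
    (totalDegree_mul _ _).trans (add_le_add (hp x.1) (hq x.2))

lemma totalDegree_coeff_pow_le {p : Polynomial (MvPolynomial σ R)} {m : ℕ}
    (hp : ∀ i, (p.coeff i).totalDegree ≤ m) (n i : ℕ) :
    ((p ^ n).coeff i).totalDegree ≤ n * m := by
  induction n generalizing i with
  | zero =>
    rw [pow_zero, Polynomial.coeff_one]
    split_ifs <;> simp
  | succ n ih =>
    rw [pow_succ, Nat.succ_mul]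
    exact totalDegree_coeff_mul_le ih hp i

lemma totalDegree_coeff_alongLine_X_le (a : σ →₀ R) (i : σ) (j : ℕ) :
    ((alongLine a (X i)).coeff j).totalDegree ≤ 1 := by
  rw [alongLine_X, Polynomial.coeff_add, Polynomial.coeff_C_mul, Polynomial.coeff_C,
    Polynomial.coeff_X]
  refine (totalDegree_add _ _).trans (max_le ?_ ?_)
  · split_ifs
    · exact (totalDegree_monomial_le _ _).trans (by simp)
    · simp
  · split_ifs <;> simp

lemma totalDegree_coeff_alongLine_monomial_le (a : σ →₀ R) (m : σ →₀ ℕ) (c : R) (j : ℕ) :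
    ((alongLine a (monomial m c)).coeff j).totalDegree ≤ m.degree := by
  induction m using Finsupp.induction_linear generalizing c j with
  | zero =>
    rw [← C_apply, alongLine_C, Polynomial.coeff_C]
    split_ifs <;> simp
  | add m m' h h' =>
    rw [← mul_one c, ← monomial_mul, map_mul, map_add]
    exact totalDegree_coeff_mul_le (h c) (h' 1) j
  | single i t =>
    rw [← C_mul_X_pow_eq_monomial, map_mul, map_pow, alongLine_C, Polynomial.coeff_C_mul,
      ← smul_eq_C_mul, Finsupp.degree_single]
    simpa using (totalDegree_smul_le _ _).trans
      (totalDegree_coeff_pow_le (totalDegree_coeff_alongLine_X_le a i) t j)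

lemma totalDegree_coeff_alongLine_le (a : σ →₀ R) (f : MvPolynomial σ R) (j : ℕ) :
    ((alongLine a f).coeff j).totalDegree ≤ f.totalDegree := by
  conv_lhs => rw [f.as_sum, map_sum, Polynomial.finsetSum_coeff]
  exact totalDegree_finsetSum_le fun m hm =>
    (totalDegree_coeff_alongLine_monomial_le a m _ j).trans (le_totalDegree hm)

lemma totalDegree_map_le {A : Type*} [CommRing A] (φ : R →+* A) (f : MvPolynomial σ R) :
    (map φ f).totalDegree ≤ f.totalDegree :=
  Finset.sup_mono (support_map_subset φ f)

lemma natDegree_alongLine_le (a : σ →₀ R) (f : MvPolynomial σ R) :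
    (alongLine a f).natDegree ≤ f.totalDegree := by
  rw [alongLine, ← aeval_map_algebraMap (MvPolynomial σ R), ← mul_one f.totalDegree]
  exact aeval_natDegree_le _ (totalDegree_map_le _ f) _ fun i => by
    compute_degree

lemma totalDegree_det_le {n : Type*} [Fintype n] [DecidableEq n]
    (M : Matrix n n (MvPolynomial σ R)) (c : n → ℕ) (h : ∀ i j, (M i j).totalDegree ≤ c j) :
    M.det.totalDegree ≤ ∑ j, c j := by
  rw [Matrix.det_apply]
  refine totalDegree_finsetSum_le fun τ _ => ?_
  rw [Units.smul_def, zsmul_eq_mul, ← map_intCast (C : R →+* MvPolynomial σ R), ← smul_eq_C_mul]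
  exact (totalDegree_smul_le _ _).trans
    ((totalDegree_finsetProd _ _).trans (Finset.sum_le_sum fun j _ => h _ _))

lemma totalDegree_resultant_le {f g : Polynomial (MvPolynomial σ R)} {p q : ℕ}
    (hf : ∀ i, (f.coeff i).totalDegree ≤ p) (hg : ∀ i, (g.coeff i).totalDegree ≤ q) (m n : ℕ) :
    (f.resultant g m n).totalDegree ≤ m * q + n * p := by
  have hentry (i j : Fin (m + n)) : (f.sylvester g m n i j).totalDegree ≤
      Fin.addCases (motive := fun _ => ℕ) (fun _ => q) (fun _ => p) j := by
    rw [Polynomial.sylvester, Matrix.of_apply]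
    refine j.addCases (fun j => ?_) fun j => ?_
    · simp only [Fin.addCases_left]
      split_ifs <;> simp [hg]
    · simp only [Fin.addCases_right]
      split_ifs <;> simp [hf]
  simpa [Polynomial.resultant, Fin.sum_univ_add] using totalDegree_det_le _ _ hentry

end Degree

section Resultant

variable {R : Type*} [CommRing R]

/-- The resultant, with respect to the line parameter, of `f` and `g` restricted to the lines of
direction `a`. It is the elimination of the direction `a` from `f` and `g`. -/
noncomputable def lineResultant (a : σ →₀ R) (f g : MvPolynomial σ R) : MvPolynomial σ R :=
  (alongLine a f).resultant (alongLine a g)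

lemma totalDegree_lineResultant_le (a : σ →₀ R) (f g : MvPolynomial σ R) :
    (lineResultant a f g).totalDegree ≤ 2 * (f.totalDegree * g.totalDegree) := calc
  _ ≤ (alongLine a f).natDegree * g.totalDegree + (alongLine a g).natDegree * f.totalDegree :=
    totalDegree_resultant_le (totalDegree_coeff_alongLine_le a f)
      (totalDegree_coeff_alongLine_le a g) _ _
  _ ≤ f.totalDegree * g.totalDegree + g.totalDegree * f.totalDegree := by
    gcongr <;> exact natDegree_alongLine_le a _
  _ = 2 * (f.totalDegree * g.totalDegree) := by ring

lemma lineResultant_mem {I : Ideal (MvPolynomial σ R)} {a : σ →₀ R} {f g : MvPolynomial σ R}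
    (hf : f ∈ I) (hg : g ∈ I) (ha : (alongLine a f).natDegree ≠ 0) : lineResultant a f g ∈ I := by
  obtain ⟨p, q, -, -, hpq⟩ := Polynomial.exists_mul_add_mul_eq_C_resultant
    (alongLine a f) (alongLine a g) le_rfl le_rfl (Or.inl ha)
  have h0 : f * p.eval 0 + g * q.eval 0 = lineResultant a f g := by
    simpa only [Polynomial.eval_add, Polynomial.eval_mul, eval_zero_alongLine, Polynomial.eval_C,
      lineResultant] using congrArg (Polynomial.eval 0) hpq
  exact h0 ▸ add_mem (I.mul_mem_right _ hf) (I.mul_mem_right _ hg)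

lemma coeff_alongLine_add (a b : σ →₀ R) (f : MvPolynomial σ R) {n : ℕ}
    (hn : (alongLine a f).natDegree ≤ n) :
    (alongLine (a + b) f).coeff n = ∑ i ∈ Finset.range ((alongLine a f).natDegree + 1),
      (alongLine b ((alongLine a f).coeff i)).coeff (n - i) := by
  rw [alongLine_add, Polynomial.eval₂_eq_sum_range, Polynomial.finsetSum_coeff]
  refine Finset.sum_congr rfl fun i hi => ?_
  rw [Polynomial.coeff_mul_X_pow', if_pos (by grind)]
  rfl

/-- The subalgebra of the polynomials that are invariant under all translations with direction in
`D`. For `D` spanned by coordinate vectors over an infinite field these are the polynomials not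
involving the corresponding variables, so that the ideals `I ∩ translationInvariants D` generalise
the elimination ideals of `I`. -/
noncomputable def translationInvariants (D : Submodule R (σ →₀ R)) :
    Subalgebra R (MvPolynomial σ R) :=
  ⨅ a ∈ D, AlgHom.equalizer (translate a) (AlgHom.id R _)

lemma mem_translationInvariants {D : Submodule R (σ →₀ R)} {f : MvPolynomial σ R} :
    f ∈ translationInvariants D ↔ ∀ a ∈ D, translate a f = f := by
  simp [translationInvariants, Algebra.mem_iInf]

lemma translationInvariants_bot : translationInvariants (⊥ : Submodule R (σ →₀ R)) = ⊤ :=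
  eq_top_iff.2 fun f _ => mem_translationInvariants.2 fun a ha => by
    rw [(Submodule.mem_bot R).1 ha, translate_zero]

lemma supported_compl_le_translationInvariants (s : Set σ) :
    MvPolynomial.supported R sᶜ ≤ translationInvariants (Finsupp.supported R R s) := by
  rw [MvPolynomial.supported, Algebra.adjoin_le_iff, Set.image_subset_iff]
  refine fun i hi => mem_translationInvariants.2 fun a ha => ?_
  rw [translate_X, (Finsupp.mem_supported' R a).1 ha i hi, C_0, add_zero]

lemma translate_lineResultant (a b : σ →₀ R) {f g : MvPolynomial σ R}
    (hf : translate b f = f) (hg : translate b g = g) :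
    translate b (lineResultant a f g) = lineResultant a f g := by
  have hmap {h : MvPolynomial σ R} (hh : translate b h = h) :
      (alongLine a h).map (translate b : MvPolynomial σ R →+* _) = alongLine a h := by
    rw [map_translate_alongLine, hh]
  have := Polynomial.resultant_map_map (alongLine a f) (alongLine a g) (alongLine a f).natDegree
    (alongLine a g).natDegree (translate b : MvPolynomial σ R →+* MvPolynomial σ R)
  rw [hmap hf, hmap hg] at this
  exact this.symm

lemma translate_smul_lineResultant (a : σ →₀ R) (c : R) (f g : MvPolynomial σ R) :
    translate (c • a) (lineResultant a f g) = lineResultant a f g := by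
  have := Polynomial.resultant_taylor (alongLine a f) (alongLine a g) (C c)
  rw [Polynomial.natDegree_taylor, Polynomial.natDegree_taylor, taylor_alongLine,
    taylor_alongLine, Polynomial.resultant_map_map] at this
  exact this

lemma lineResultant_mem_translationInvariants {D : Submodule R (σ →₀ R)} (a : σ →₀ R)
    {f g : MvPolynomial σ R} (hf : f ∈ translationInvariants D)
    (hg : g ∈ translationInvariants D) :
    lineResultant a f g ∈ translationInvariants (D ⊔ Submodule.span R {a}) := by
  rw [mem_translationInvariants] at hf hg ⊢
  intro x hx
  obtain ⟨b, hb, y, hy, rfl⟩ := Submodule.mem_sup.1 hx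
  obtain ⟨c, rfl⟩ := Submodule.mem_span_singleton.1 hy
  rw [translate_add, translate_smul_lineResultant,
    translate_lineResultant a b (hf b hb) (hg b hb)]

/-- The space of the polynomials of degree at most `d` in the ideal `I ∩ translationInvariants D`
of the algebra of invariants. -/
noncomputable def invariantsOfDegreeLE (I : Ideal (MvPolynomial σ R)) (D : Submodule R (σ →₀ R))
    (d : ℕ) : Submodule R (MvPolynomial σ R) :=
  I.restrictScalars R ⊓ (translationInvariants D).toSubmodule ⊓ restrictTotalDegree σ R d

lemma mem_invariantsOfDegreeLE {I : Ideal (MvPolynomial σ R)} {D : Submodule R (σ →₀ R)} {d : ℕ}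
    {f : MvPolynomial σ R} : f ∈ invariantsOfDegreeLE I D d ↔
      (f ∈ I ∧ f ∈ translationInvariants D) ∧ f.totalDegree ≤ d := by
  rw [invariantsOfDegreeLE, Submodule.mem_inf, Submodule.mem_inf, mem_restrictTotalDegree]
  rfl

lemma invariantsOfDegreeLE_mono {I : Ideal (MvPolynomial σ R)} {D : Submodule R (σ →₀ R)}
    {d e : ℕ} (h : d ≤ e) : invariantsOfDegreeLE I D d ≤ invariantsOfDegreeLE I D e :=
  fun _ hf => mem_invariantsOfDegreeLE.2
    ((mem_invariantsOfDegreeLE.1 hf).imp_right fun hd => hd.trans h)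

lemma invariantsOfDegreeLE_eq_bot_of_pow_le {I : Ideal (MvPolynomial σ R)}
    {D : Submodule R (σ →₀ R)} {b d l : ℕ} (hI : invariantsOfDegreeLE I D b = ⊥)
    (h : (2 * d) ^ 2 ^ l ≤ 2 * b) : invariantsOfDegreeLE I D d = ⊥ := by
  have hdb : 2 * d ≤ 2 * b := (Nat.le_self_pow (pow_ne_zero l two_ne_zero) (2 * d)).trans h
  exact eq_bot_iff.2 ((invariantsOfDegreeLE_mono (by omega)).trans hI.le)

lemma lineResultant_mem_invariantsOfDegreeLE {I : Ideal (MvPolynomial σ R)}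
    {D : Submodule R (σ →₀ R)} {d : ℕ} {a : σ →₀ R} {f g : MvPolynomial σ R}
    (ha : (alongLine a f).natDegree ≠ 0) (hf : f ∈ invariantsOfDegreeLE I D d)
    (hg : g ∈ invariantsOfDegreeLE I D d) :
    lineResultant a f g ∈ invariantsOfDegreeLE I (D ⊔ R ∙ a) (2 * (d * d)) := by
  rw [mem_invariantsOfDegreeLE] at hf hg ⊢
  refine ⟨⟨lineResultant_mem hf.1.1 hg.1.1 ha,
    lineResultant_mem_translationInvariants a hf.1.2 hg.1.2⟩, ?_⟩
  exact (totalDegree_lineResultant_le a f g).trans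
    (Nat.mul_le_mul_left 2 (Nat.mul_le_mul hf.2 hg.2))

end Resultant

section InfiniteDomain

variable {R : Type*} [CommRing R] [IsDomain R] [Infinite R]

lemma eq_of_forall_eval_C_eq {p q : Polynomial (MvPolynomial σ R)}
    (h : ∀ c : R, p.eval (C c) = q.eval (C c)) : p = q :=
  Polynomial.eq_of_infinite_eval_eq p q <|
    (Set.infinite_range_of_injective (C_injective σ R)).mono (Set.range_subset_iff.2 h)

lemma alongLine_eq_C_of_mem {D : Submodule R (σ →₀ R)} {a : σ →₀ R} (ha : a ∈ D)
    {f : MvPolynomial σ R} (hf : f ∈ translationInvariants D) :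
    alongLine a f = Polynomial.C f :=
  eq_of_forall_eval_C_eq fun c => by
    rw [eval_C_alongLine, Polynomial.eval_C,
      mem_translationInvariants.1 hf _ (D.smul_mem c ha)]

lemma coeff_alongLine_leadingCoeff {f : MvPolynomial σ R} {a b : σ →₀ R}
    (h : ∀ c : R, (alongLine (a + c • b) f).natDegree ≤ (alongLine a f).natDegree)
    {n : ℕ} (hn : n ≠ 0) : (alongLine b (alongLine a f).leadingCoeff).coeff n = 0 := by
  set e := (alongLine a f).natDegree with he
  -- The coefficient of `t ^ (e + n)` in `f(x + t (a + c b))`, as a polynomial in `c`.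
  let q : Polynomial (MvPolynomial σ R) := ∑ i ∈ Finset.range (e + 1), Polynomial.monomial
    (e + n - i) ((alongLine b ((alongLine a f).coeff i)).coeff (e + n - i))
  have hq : q = 0 := eq_of_forall_eval_C_eq fun c => calc
    q.eval (C c) = (alongLine (a + c • b) f).coeff (e + n) := by
      simp only [q, Polynomial.eval_finsetSum, Polynomial.eval_monomial,
        coeff_alongLine_add a (c • b) f (he.symm.le.trans (Nat.le_add_right e n)),
        coeff_alongLine_smul, ← he]
    _ = 0 := Polynomial.coeff_eq_zero_of_natDegree_lt ((h c).trans_lt (by omega))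
    _ = _ := Polynomial.eval_zero.symm
  calc (alongLine b (alongLine a f).leadingCoeff).coeff n = q.coeff n := by
        rw [Polynomial.finsetSum_coeff, Finset.sum_eq_single_of_mem e (by simp)]
        · rw [Nat.add_sub_cancel_left, Polynomial.coeff_monomial_same]
          rfl
        · intro i hi hie
          rw [Finset.mem_range] at hi
          exact Polynomial.coeff_monomial_of_ne _ (by omega)
    _ = 0 := by rw [hq, Polynomial.coeff_zero]

lemma alongLine_leadingCoeff {f : MvPolynomial σ R} {a b : σ →₀ R}
    (h : ∀ c : R, (alongLine (a + c • b) f).natDegree ≤ (alongLine a f).natDegree) :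
    alongLine b (alongLine a f).leadingCoeff = Polynomial.C (alongLine a f).leadingCoeff := by
  ext1 n
  rcases eq_or_ne n 0 with rfl | hn
  · rw [Polynomial.coeff_zero_eq_eval_zero, eval_zero_alongLine, Polynomial.coeff_C_zero]
  · rw [coeff_alongLine_leadingCoeff h hn, Polynomial.coeff_C_of_ne_zero hn]

lemma exists_leadingCoeff_alongLine_mem_translationInvariants (D : Submodule R (σ →₀ R))
    (f : MvPolynomial σ R) :
    ∃ a ∈ D, (alongLine a f).leadingCoeff ∈ translationInvariants D := by
  obtain ⟨a, ha, hmax⟩ : ∃ a ∈ D, ∀ b ∈ D,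
      (alongLine b f).natDegree ≤ (alongLine a f).natDegree := by
    let s : Set ℕ := (fun a => (alongLine a f).natDegree) '' D
    have hs : BddAbove s :=
      ⟨f.totalDegree, Set.forall_mem_image.2 fun a _ => natDegree_alongLine_le a f⟩
    obtain ⟨a, ha, hae⟩ := Nat.sSup_mem ⟨_, Set.mem_image_of_mem _ D.zero_mem⟩ hs
    exact ⟨a, ha, fun b hb => (le_csSup hs (Set.mem_image_of_mem _ hb)).trans hae.ge⟩
  refine ⟨a, ha, mem_translationInvariants.2 fun b hb => ?_⟩
  rw [← one_smul R b, ← eval_C_alongLine,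
    alongLine_leadingCoeff fun c => hmax _ (D.add_mem ha (D.smul_mem c hb)), Polynomial.eval_C]

lemma exists_notMem_leadingCoeff_alongLine_mem {I : Ideal (MvPolynomial σ R)}
    {D E : Submodule R (σ →₀ R)} {d : ℕ} (hI : invariantsOfDegreeLE I E d = ⊥)
    {f : MvPolynomial σ R} (hf : f ∈ invariantsOfDegreeLE I D d) (hf0 : f ≠ 0) :
    ∃ a ∈ E, a ∉ D ∧ (alongLine a f).natDegree ≠ 0 ∧
      (alongLine a f).leadingCoeff ∈ translationInvariants E := by
  obtain ⟨⟨hfI, hfD⟩, hfd⟩ := mem_invariantsOfDegreeLE.1 hf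
  obtain ⟨a, haE, hlead⟩ := exists_leadingCoeff_alongLine_mem_translationInvariants E f
  have hdeg : (alongLine a f).natDegree ≠ 0 := fun h => hf0 <| by
    have hlead_eq : (alongLine a f).leadingCoeff = f := by
      rw [Polynomial.leadingCoeff, h, Polynomial.coeff_zero_eq_eval_zero, eval_zero_alongLine]
    rw [← Submodule.mem_bot R, ← hI]
    exact mem_invariantsOfDegreeLE.2 ⟨⟨hfI, hlead_eq ▸ hlead⟩, hfd⟩
  refine ⟨a, haE, fun haD => hdeg ?_, hdeg, hlead⟩
  rw [alongLine_eq_C_of_mem haD hfD, Polynomial.natDegree_C]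

lemma translationInvariants_supported (s : Set σ) :
    translationInvariants (Finsupp.supported R R s) = MvPolynomial.supported R sᶜ := by
  classical
  refine le_antisymm ?_ (supported_compl_le_translationInvariants s)
  refine fun f hf => mem_supported.2 fun i hif his => ?_
  let φ : MvPolynomial σ R →ₐ[R] MvPolynomial σ R := bind₁ fun j => if j = i then 0 else X j
  have hφ : φ f = f := calc
    φ f = (alongLine (Finsupp.single i 1) f).eval₂ (φ : MvPolynomial σ R →+* _) (X i) := by
      rw [alongLine_eq_C_of_mem (Finsupp.single_mem_supported R 1 his) hf, Polynomial.eval₂_C]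
      rfl
    _ = aeval X f := by
      rw [eval₂_alongLine]
      congr 2
      funext j
      obtain rfl | hj := eq_or_ne j i
      · simp [φ]
      · simp [φ, hj]
    _ = f := by simp
  obtain ⟨j, -, hj⟩ := mem_vars_bind₁ _ f (hφ ▸ hif)
  split_ifs at hj with hji
  · simp at hj
  · rw [vars_X, Finset.mem_singleton] at hj
    exact hji hj.symm

end InfiniteDomain

section CommonZero

variable {R L : Type*} [CommRing R] [Field L] [Algebra R L]

lemma aeval_add_mul_eq (ζ : σ → L) (ξ : L) (a : σ →₀ R) (f : MvPolynomial σ R) :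
    aeval (fun i => ζ i + algebraMap R L (a i) * ξ) f =
      (alongLine a f).eval₂ (aeval (R := R) ζ : MvPolynomial σ R →+* L) ξ := by
  simp only [eval₂_alongLine, aeval_X]

lemma exists_root_of_aeval_lineResultant_eq_zero [IsAlgClosed L] {a : σ →₀ R}
    {f g : MvPolynomial σ R} {ζ : σ → L} (hlead : aeval ζ (alongLine a f).leadingCoeff ≠ 0)
    (hres : aeval ζ (lineResultant a f g) = 0) :
    ∃ ξ ∈ ((alongLine a f).map (aeval (R := R) ζ : MvPolynomial σ R →+* L)).roots,
      aeval (fun i => ζ i + algebraMap R L (a i) * ξ) g = 0 := by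
  set φ := (aeval (R := R) ζ : MvPolynomial σ R →+* L)
  have hprod := Polynomial.resultant_eq_prod_eval ((alongLine a f).map φ) ((alongLine a g).map φ)
    (alongLine a g).natDegree Polynomial.natDegree_map_le (IsAlgClosed.splits _)
  rw [Polynomial.natDegree_map_of_leadingCoeff_ne_zero φ hlead, Polynomial.resultant_map_map,
    Polynomial.leadingCoeff_map_of_leadingCoeff_ne_zero φ hlead] at hprod
  obtain ⟨ξ, hξ, h0⟩ := Multiset.mem_map.1 <| Multiset.prod_eq_zero_iff.1 <|
    (mul_eq_zero.1 (hprod.symm.trans hres)).resolve_left (pow_ne_zero _ hlead)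
  exact ⟨ξ, hξ, by rwa [aeval_add_mul_eq, ← Polynomial.eval_map]⟩

variable {k : Type*} [Field k] [Infinite k] [Algebra k L]

lemma exists_forall_eq_zero_of_forall_exists {ι V W : Type*} [AddCommGroup V]
    [Module k V] [AddCommGroup W] [Module k W] (s : Finset ι) (φ : ι → V →ₗ[k] W)
    (h : ∀ v, ∃ i ∈ s, φ i v = 0) : ∃ i ∈ s, ∀ v, φ i v = 0 := by
  obtain ⟨i, hi⟩ := Subspace.exists_eq_top_of_iUnion_eq_univ (p := fun i : s => (φ i).ker) <|
    Set.eq_univ_of_forall fun v => by simpa using h v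
  exact ⟨i, i.2, fun v => LinearMap.mem_ker.1 (hi ▸ Submodule.mem_top)⟩

lemma exists_forall_aeval_eq_zero_of_lineResultant [IsAlgClosed L] {a : σ →₀ k}
    {f : MvPolynomial σ k} {W : Submodule k (MvPolynomial σ k)} {ζ : σ → L}
    (hlead : aeval ζ (alongLine a f).leadingCoeff ≠ 0)
    (hres : ∀ g ∈ W, aeval ζ (lineResultant a f g) = 0) :
    ∃ ξ : L, ∀ g ∈ W, aeval (fun i => ζ i + algebraMap k L (a i) * ξ) g = 0 := by
  classical
  -- Each `g ∈ W` vanishes at one of the finitely many roots of `f`. Since `W` is not a finite union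
  -- of proper subspaces, a single root serves for all `g`.
  obtain ⟨ξ, -, hξ⟩ := exists_forall_eq_zero_of_forall_exists
    ((alongLine a f).map (aeval (R := k) ζ : MvPolynomial σ k →+* L)).roots.toFinset
    (fun ξ => (aeval (R := k) fun i => ζ i + algebraMap k L (a i) * ξ).toLinearMap.domRestrict W)
    fun g => by
      simp only [Multiset.mem_toFinset]
      exact exists_root_of_aeval_lineResultant_eq_zero hlead (hres g g.2)
  exact ⟨ξ, fun g hg => hξ ⟨g, hg⟩⟩

theorem exists_generic_aeval_eq_zero [IsAlgClosed L] {I : Ideal (MvPolynomial σ k)}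
    {E : Submodule k (σ →₀ k)} [FiniteDimensional k E] {b : ℕ}
    (hI : invariantsOfDegreeLE I E b = ⊥) {ζ₀ : σ → L} (hζ₀ : AlgebraicIndependent k ζ₀)
    (l : ℕ) {d : ℕ} {D : Submodule k (σ →₀ k)} (hD : D ≤ E)
    (hl : Module.finrank k E ≤ Module.finrank k D + l) (hb : (2 * d) ^ 2 ^ l ≤ 2 * b) :
    ∃ ζ : σ → L, (∀ f ∈ translationInvariants E, aeval ζ f = aeval ζ₀ f) ∧
      ∀ f ∈ invariantsOfDegreeLE I D d, aeval ζ f = 0 := by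
  induction l generalizing d D with
  | zero =>
    obtain rfl := Submodule.eq_of_le_of_finrank_le hD hl
    exact ⟨ζ₀, fun _ _ => rfl, by simp [invariantsOfDegreeLE_eq_bot_of_pow_le hI hb]⟩
  | succ l ih =>
    by_cases hbot : invariantsOfDegreeLE I D d = ⊥
    · exact ⟨ζ₀, fun _ _ => rfl, by simp [hbot]⟩
    obtain ⟨f, hf, hf0⟩ := Submodule.exists_mem_ne_zero_of_ne_bot hbot
    obtain ⟨a, haE, haD, hdeg, hlead⟩ := exists_notMem_leadingCoeff_alongLine_mem
      (invariantsOfDegreeLE_eq_bot_of_pow_le hI hb) hf hf0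
    have hDE : D ⊔ k ∙ a ≤ E := sup_le hD ((Submodule.span_singleton_le_iff_mem a E).2 haE)
    have hfinrank : Module.finrank k D < Module.finrank k (D ⊔ k ∙ a : Submodule k (σ →₀ k)) :=
      have := Submodule.finiteDimensional_of_le hDE
      Submodule.finrank_lt_finrank_of_lt <| left_lt_sup.2 fun h => haD <|
        (Submodule.span_singleton_le_iff_mem a D).1 h
    have hb' : (2 * (2 * (d * d))) ^ 2 ^ l ≤ 2 * b := by
      rwa [show 2 * (2 * (d * d)) = (2 * d) ^ 2 by ring, ← pow_mul, ← pow_succ']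
    obtain ⟨ζ, hζE, hζ⟩ := ih hDE (by omega) hb'
    have hζlead : aeval ζ (alongLine a f).leadingCoeff ≠ 0 := by
      rw [hζE _ hlead]
      exact fun h => alongLine_ne_zero a hf0 <|
        Polynomial.leadingCoeff_eq_zero.1 (hζ₀.eq_zero_of_aeval_eq_zero _ h)
    obtain ⟨ξ, hξ⟩ := exists_forall_aeval_eq_zero_of_lineResultant hζlead fun g hg =>
      hζ _ (lineResultant_mem_invariantsOfDegreeLE hdeg hf hg)
    refine ⟨_, fun g hg => ?_, hξ⟩
    rw [aeval_add_mul_eq, alongLine_eq_C_of_mem haE hg, Polynomial.eval₂_C]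
    exact hζE g hg

theorem eq_zero_of_invariantsOfDegreeLE_eq_bot {S : Set (MvPolynomial σ k)} {d b : ℕ}
    (hS : ∀ g ∈ S, g.totalDegree ≤ d) {E : Submodule k (σ →₀ k)} [FiniteDimensional k E]
    (hb : (2 * d) ^ 2 ^ Module.finrank k E ≤ 2 * b)
    (hE : invariantsOfDegreeLE (Ideal.span S) E b = ⊥) {f : MvPolynomial σ k}
    (hf : f ∈ Ideal.span S) (hfE : f ∈ translationInvariants E) : f = 0 := by
  let L := AlgebraicClosure (FractionRing (MvPolynomial σ k))
  have hgeneric : AlgebraicIndependent k fun i => algebraMap (MvPolynomial σ k) L (X i) :=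
    (algebraicIndependent_X σ k).map' (f := IsScalarTower.toAlgHom k (MvPolynomial σ k) L)
      ((FaithfulSMul.algebraMap_injective (FractionRing (MvPolynomial σ k)) L).comp
        (IsFractionRing.injective (MvPolynomial σ k) _))
  obtain ⟨ζ, hζE, hζ⟩ := exists_generic_aeval_eq_zero hE hgeneric (Module.finrank k E) bot_le
    (Nat.le_add_left _ _) hb
  have hker : Ideal.span S ≤ RingHom.ker (aeval (R := k) ζ) := Ideal.span_le.2 fun g hg =>
    hζ g <| mem_invariantsOfDegreeLE.2 ⟨⟨Ideal.subset_span hg, by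
      rw [translationInvariants_bot]; exact Algebra.mem_top⟩, hS g hg⟩
  exact hgeneric.eq_zero_of_aeval_eq_zero f ((hζE f hfE).symm.trans (hker hf))

theorem exists_mem_supported_totalDegree_le_of_infinite {S : Set (MvPolynomial σ k)} {d b : ℕ}
    (hS : ∀ g ∈ S, g.totalDegree ≤ d) {Z : Finset σ}
    (hb : (2 * d) ^ 2 ^ Z.card ≤ 2 * b) {f : MvPolynomial σ k} (hf : f ∈ Ideal.span S)
    (hf0 : f ≠ 0) (hfZ : f ∈ MvPolynomial.supported k (Z : Set σ)ᶜ) :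
    ∃ g ∈ Ideal.span S, g ≠ 0 ∧ g ∈ MvPolynomial.supported k (Z : Set σ)ᶜ ∧
      g.totalDegree ≤ b := by
  let e := Finsupp.supportedEquivFinsupp (M := k) (R := k) (Z : Set σ)
  have : FiniteDimensional k (Finsupp.supported k k (Z : Set σ)) := Module.Finite.equiv e.symm
  have hfinrank : Module.finrank k (Finsupp.supported k k (Z : Set σ)) = Z.card := by
    rw [e.finrank_eq, Module.finrank_finsupp_self, ← Nat.card_eq_fintype_card, Nat.card_coe_set_eq,
      Set.ncard_coe_finset]
  rw [← translationInvariants_supported] at hfZ ⊢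
  obtain ⟨g, hg, hg0⟩ := Submodule.exists_mem_ne_zero_of_ne_bot fun hbot =>
    hf0 (eq_zero_of_invariantsOfDegreeLE_eq_bot hS (hfinrank ▸ hb) hbot hf hfZ)
  obtain ⟨⟨hgS, hgZ⟩, hgb⟩ := mem_invariantsOfDegreeLE.1 hg
  exact ⟨g, hgS, hg0, hgZ, hgb⟩

end CommonZero

section Descent

variable {R A : Type*} [CommRing R] [CommRing A] [Algebra R A]

attribute [local instance] algebraMvPolynomial

/-- The application of an `R`-linear functional `ℓ : A → R` to every coefficient. It is linear over
the polynomials with coefficients in `R`, and therefore maps the extension of an ideal to the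
polynomials over `A` back into the ideal. -/
noncomputable def coeffwise (ℓ : A →ₗ[R] R) :
    MvPolynomial σ A →ₗ[MvPolynomial σ R] MvPolynomial σ R where
  toFun := AddMonoidAlgebra.map (ℓ : A →+ R)
  map_add' := AddMonoidAlgebra.map_add _
  map_smul' g p := by
    classical
    ext m
    rw [RingHom.id_apply, smul_eq_mul, Algebra.smul_def, algebraMap_def, coeff_addMonoidAlgebraMap,
      coeff_mul, coeff_mul, map_sum]
    refine Finset.sum_congr rfl fun x _ => ?_
    rw [coeff_map, ← Algebra.smul_def, coeff_addMonoidAlgebraMap]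
    exact ℓ.map_smul _ _

lemma coeff_coeffwise (ℓ : A →ₗ[R] R) (p : MvPolynomial σ A) (m : σ →₀ ℕ) :
    coeff m (coeffwise ℓ p) = ℓ (coeff m p) :=
  coeff_addMonoidAlgebraMap _ p m

lemma support_coeffwise_subset (ℓ : A →ₗ[R] R) (p : MvPolynomial σ A) :
    (coeffwise ℓ p).support ⊆ p.support := fun m hm => by
  rw [mem_support_iff, coeff_coeffwise] at hm
  exact mem_support_iff.2 fun h => hm (by rw [h, map_zero])

lemma totalDegree_coeffwise_le (ℓ : A →ₗ[R] R) (p : MvPolynomial σ A) :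
    (coeffwise ℓ p).totalDegree ≤ p.totalDegree :=
  Finset.sup_mono (support_coeffwise_subset ℓ p)

lemma vars_coeffwise_subset (ℓ : A →ₗ[R] R) (p : MvPolynomial σ A) :
    (coeffwise ℓ p).vars ⊆ p.vars := fun i hi => by
  obtain ⟨m, hm, hmi⟩ := (mem_vars_iff_mem_support i).1 hi
  exact (mem_vars_iff_mem_support i).2 ⟨m, support_coeffwise_subset ℓ p hm, hmi⟩

lemma coeffwise_mem (ℓ : A →ₗ[R] R) {I : Ideal (MvPolynomial σ R)} {p : MvPolynomial σ A}
    (hp : p ∈ I.map (map (algebraMap R A))) : coeffwise ℓ p ∈ I := by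
  have hmem : p ∈ I • (⊤ : Submodule (MvPolynomial σ R) (MvPolynomial σ A)) := by
    rw [Ideal.smul_top_eq_map]
    exact hp
  have hle : (I • (⊤ : Submodule (MvPolynomial σ R) (MvPolynomial σ A))).map (coeffwise ℓ) ≤ I := by
    rw [Submodule.map_smul'']
    exact Ideal.mul_le_left
  exact hle (Submodule.mem_map_of_mem hmem)

end Descent

theorem exists_mem_supported_totalDegree_le {k : Type*} [Field k] {S : Set (MvPolynomial σ k)}
    {d b : ℕ} (hS : ∀ g ∈ S, g.totalDegree ≤ d) {Z : Finset σ}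
    (hb : (2 * d) ^ 2 ^ Z.card ≤ 2 * b) {f : MvPolynomial σ k} (hf : f ∈ Ideal.span S)
    (hf0 : f ≠ 0) (hfZ : f ∈ MvPolynomial.supported k (Z : Set σ)ᶜ) :
    ∃ g ∈ Ideal.span S, g ≠ 0 ∧ g ∈ MvPolynomial.supported k (Z : Set σ)ᶜ ∧
      g.totalDegree ≤ b := by
  let ι := algebraMap k (AlgebraicClosure k)
  obtain ⟨G, hGS, hG0, hGZ, hGb⟩ := exists_mem_supported_totalDegree_le_of_infinite
    (S := map ι '' S) (Set.forall_mem_image.2 fun g hg => (totalDegree_map_le ι g).trans (hS g hg))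
    hb (Ideal.map_span (map ι) S ▸ Ideal.mem_map_of_mem _ hf)
    ((map_ne_zero_iff _ (map_injective ι ι.injective)).2 hf0)
    (mem_supported.2 ((Finset.coe_subset.2 (vars_map f ι)).trans (mem_supported.1 hfZ)))
  obtain ⟨m, hm⟩ := ne_zero_iff.1 hG0
  obtain ⟨ℓ, hℓ⟩ := Module.Projective.exists_dual_ne_zero k hm
  refine ⟨coeffwise ℓ G, coeffwise_mem ℓ (by rwa [Ideal.map_span]),
    ne_zero_iff.2 ⟨m, by rwa [coeff_coeffwise]⟩, ?_, (totalDegree_coeffwise_le ℓ G).trans hGb⟩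
  exact mem_supported.2
    ((Finset.coe_subset.2 (vars_coeffwise_subset ℓ G)).trans (mem_supported.1 hGZ))

section Irreducible

variable {R : Type*} [CommRing R]

/-- An ideal is prime up to `b` if it satisfies the defining condition of prime ideals for the
factors of total degree at most `b`. The ideal need not be proper. -/
def IsPrimeUpTo (I : Ideal (MvPolynomial σ R)) (b : ℕ) : Prop :=
  ∀ f g : MvPolynomial σ R, f.totalDegree ≤ b → g.totalDegree ≤ b → f * g ∈ I → f ∈ I ∨ g ∈ I

variable [IsDomain R]

lemma vars_subset_of_dvd {f g : MvPolynomial σ R} (hg : g ≠ 0) (h : f ∣ g) :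
    f.vars ⊆ g.vars := by
  obtain ⟨q, rfl⟩ := h
  intro i hi
  rw [mem_vars_iff_degreeOf_ne_zero] at hi ⊢
  rw [degreeOf_mul_eq (left_ne_zero_of_mul hg) (right_ne_zero_of_mul hg)]
  omega

lemma IsPrimeUpTo.exists_irreducible_dvd_mem [UniqueFactorizationMonoid R]
    {I : Ideal (MvPolynomial σ R)} {b : ℕ} (hI : IsPrimeUpTo I b)
    (htop : I ≠ ⊤) {f : MvPolynomial σ R} (hf0 : f ≠ 0) (hfI : f ∈ I)
    (hfb : f.totalDegree ≤ b) : ∃ p ∈ I, p ∣ f ∧ p.totalDegree ≤ b ∧ Irreducible p := by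
  induction f using WfDvdMonoid.induction_on_irreducible with
  | zero => exact absurd rfl hf0
  | unit u hu => exact absurd (I.eq_top_of_isUnit_mem hfI hu) htop
  | mul f p hf hp ih =>
    rw [totalDegree_mul_of_isDomain hp.ne_zero hf] at hfb
    rcases hI p f (by omega) (by omega) hfI with hpI | hfI
    · exact ⟨p, hpI, dvd_mul_right p f, by omega, hp⟩
    · obtain ⟨q, hqI, hqf, hqb, hq⟩ := ih hf hfI (by omega)
      exact ⟨q, hqI, hqf.mul_left p, hqb, hq⟩

end Irreducible

lemma two_mul_pow_two_pow_le {l n d : ℕ} (hl : l < n) (hd : 1 < d) :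
    (2 * d) ^ 2 ^ l ≤ d ^ 2 ^ n := calc
  (2 * d) ^ 2 ^ l ≤ (d ^ 2) ^ 2 ^ l := Nat.pow_le_pow_left (by nlinarith) _
  _ = d ^ 2 ^ (l + 1) := by rw [← pow_mul, pow_succ']
  _ ≤ d ^ 2 ^ n := Nat.pow_le_pow_right (by omega) (Nat.pow_le_pow_right two_pos hl)

end EffectiveElimination

open MvPolynomial EffectiveElimination in
theorem irreducible_bounded_minimal_polynomials_exist_general {σ k : Type*} [Field k]
    {S : Set (MvPolynomial σ k)} {d b : ℕ} (hdeg : ∀ g ∈ S, g.totalDegree ≤ d)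
    {U : Set σ} {j : σ} {Z : Finset σ} (hZ : (Z : Set σ)ᶜ = U ∪ {j})
    (hb : (2 * d) ^ 2 ^ Z.card ≤ 2 * b)
    (hind : ∀ f ∈ Ideal.span S, f ∈ supported k U → f = 0)
    (hmaxind : ∃ f ∈ Ideal.span S, f ≠ 0 ∧ f ∈ supported k (U ∪ {j}))
    (hprime : IsPrimeUpTo (Ideal.span S) b) :
    ∃ w ∈ Ideal.span S, w ∈ supported k (U ∪ {j}) ∧ 0 < degreeOf j w ∧
      w.totalDegree ≤ b ∧ Irreducible w := by
  have htop : Ideal.span S ≠ ⊤ := fun h =>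
    one_ne_zero (hind 1 (h ▸ Submodule.mem_top) (one_mem _))
  obtain ⟨f, hfS, hf0, hfU⟩ := hmaxind
  obtain ⟨g, hgS, hg0, hgU, hgb⟩ :=
    exists_mem_supported_totalDegree_le hdeg hb hfS hf0 (hZ ▸ hfU)
  obtain ⟨w, hwS, hwg, hwb, hw⟩ := hprime.exists_irreducible_dvd_mem htop hg0 hgS hgb
  have hwU : (w.vars : Set σ) ⊆ U ∪ {j} :=
    (Finset.coe_subset.2 (vars_subset_of_dvd hg0 hwg)).trans (mem_supported.1 (hZ ▸ hgU))
  have hwj : j ∈ w.vars := by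
    by_contra hj
    rw [Set.union_singleton, Set.subset_insert_iff_of_notMem hj] at hwU
    exact hw.ne_zero (hind w hwS (mem_supported.2 hwU))
  exact ⟨w, hwS, mem_supported.2 hwU, Nat.pos_of_ne_zero (mem_vars_iff_degreeOf_ne_zero.1 hwj),
    hwb, hw⟩

/-- If `x₁,…,x_r` is a maximal algebraically independent set of
variables modulo `I` and `I` is prime up to `2·d^(2^n)`, then for each `j > r` there is an
irreducible `w_j ∈ I` involving only `x₁,…,x_r,x_j`, of positive `x_j`-degree and of
total degree at most `2·d^(2^n)`. -/
theorem irreducible_bounded_minimal_polynomials_exist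
    (k : Type*) [Field k] (n d r : ℕ) (hn : 1 < n) (hd : 1 < d) (hr : r ≤ n)
    (I : Ideal (MvPolynomial (Fin n) k))
    (S : Set (MvPolynomial (Fin n) k)) (hgen : I = Ideal.span S)
    (hdeg : ∀ g ∈ S, g.totalDegree ≤ d)
    (hind : ∀ f ∈ I, (∀ i ∈ MvPolynomial.vars f, (i : ℕ) < r) → f = 0)
    (hmaxind : ∀ j : Fin n, r ≤ (j : ℕ) →
      ∃ f ∈ I, f ≠ 0 ∧ ∀ i ∈ MvPolynomial.vars f, (i : ℕ) < r ∨ i = j)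
    (hprime : ∀ f g : MvPolynomial (Fin n) k,
      f.totalDegree ≤ 2 * d ^ 2 ^ n →
      g.totalDegree ≤ 2 * d ^ 2 ^ n →
      f * g ∈ I → f ∈ I ∨ g ∈ I) :
    ∀ j : Fin n, r ≤ (j : ℕ) →
      ∃ w ∈ I, (∀ i ∈ MvPolynomial.vars w, (i : ℕ) < r ∨ i = j) ∧
        0 < MvPolynomial.degreeOf j w ∧
        w.totalDegree ≤ 2 * d ^ 2 ^ n ∧
        Irreducible w := by
  subst hgen
  intro j hj
  let Z := Finset.univ.filter fun i : Fin n => ¬((i : ℕ) < r ∨ i = j)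
  have hZ : Z.card < n := by
    simpa using Finset.card_lt_univ_of_notMem (s := Z) (x := j) (by simp [Z])
  have hb : (2 * d) ^ 2 ^ Z.card ≤ 2 * (2 * d ^ 2 ^ n) :=
    (EffectiveElimination.two_mul_pow_two_pow_le hZ hd).trans (by omega)
  obtain ⟨f, hf, hf0, hfU⟩ := hmaxind j hj
  obtain ⟨w, hw, hwU, hwj⟩ := irreducible_bounded_minimal_polynomials_exist_general
    (U := {i | (i : ℕ) < r}) (j := j) hdeg (by ext i; grind) hb
    (fun f hf hfU => hind f hf (MvPolynomial.mem_supported.1 hfU))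
    ⟨f, hf, hf0, MvPolynomial.mem_supported.2 hfU⟩ hprime
  exact ⟨w, hw, MvPolynomial.mem_supported.1 hwU, hwj⟩
end
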